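/- arXiv:quant-ph/0502064 — 6 statements merged into one kernel-verified Lean document; each statement's English description precedes it below -/
import Mathlib

section
/- Let ρ and ρ' be density operators on ℂ^d, and let |ψ⟩ ∈ ℂ^d ⊗ ℂ^{d'} with d' ≥ d be a purification of ρ. Then there exists a purification |ψ'⟩ ∈ ℂ^d ⊗ ℂ^{d'} of ρ' such that δ(|ψ⟩⟨ψ|, |ψ'⟩⟨ψ'|) ≤ √(2·δ(ρ, ρ')). -/
open scoped Matrix Kronecker BigOperators ComplexOrder
open Matrix

noncomputable section

/-- The outer product `|v⟩⟨v|` of a vector. -/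
def outerPr {n : Type*} (v : n → ℂ) : Matrix n n ℂ :=
  Matrix.of fun i j => v i * star (v j)

/-- A density operator: positive semidefinite with trace one. -/
def IsDensity {n : Type*} [Fintype n] [DecidableEq n] (ρ : Matrix n n ℂ) : Prop :=
  ρ.PosSemidef ∧ ρ.trace = 1

/-- The eigenvalues of a matrix (as a real vector), `0` if the matrix is not Hermitian. -/
def eigs {n : Type*} [Fintype n] [DecidableEq n] (ρ : Matrix n n ℂ) : n → ℝ :=
  if h : ρ.IsHermitian then h.eigenvalues else 0

/-- Trace distance `δ(ρ,σ) = (1/2) tr|ρ-σ|`. -/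
def traceDist {n : Type*} [Fintype n] [DecidableEq n] (ρ σ : Matrix n n ℂ) : ℝ :=
  (1 / 2) * ∑ i, |eigs (ρ - σ) i|

/-- Von Neumann entropy (base 2). -/
def vnEntropy {n : Type*} [Fintype n] [DecidableEq n] (ρ : Matrix n n ℂ) : ℝ :=
  ∑ i, -(eigs ρ i * Real.logb 2 (eigs ρ i))

/-- Partial trace over the second (right) tensor factor. -/
def ptraceR {m w : Type*} [Fintype w] (M : Matrix (m × w) (m × w) ℂ) : Matrix m m ℂ :=
  Matrix.of fun i j => ∑ k, M (i, k) (j, k)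

/-- Partial trace over the first (left) tensor factor. -/
def ptraceL {m w : Type*} [Fintype m] (M : Matrix (m × w) (m × w) ℂ) : Matrix w w ℂ :=
  Matrix.of fun i j => ∑ k, M (k, i) (k, j)

/-- `ψ` is a purification of `ρ`: a unit vector on `d × w` whose partial trace over `w`
equals `ρ`. -/
def IsPurification {d w : Type*} [Fintype d] [Fintype w]
    (ψ : d × w → ℂ) (ρ : Matrix d d ℂ) : Prop :=
  (∑ i, Complex.normSq (ψ i)) = 1 ∧ ptraceR (outerPr ψ) = ρ

/-- ε-smooth Rényi entropy of order 0 of a distribution. -/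
def H0smooth {X : Type*} [Fintype X] (P : X → ℝ) (ε : ℝ) : ℝ :=
  sInf { r : ℝ | ∃ Q : X → ℝ, (∀ x, 0 ≤ Q x) ∧ (∑ x, |P x - Q x|) ≤ ε ∧
    r = Real.logb 2 (Nat.card {x : X // Q x ≠ 0}) }

/-- ε-smooth Rényi entropy of order 2 of a distribution. -/
def H2smooth {X : Type*} [Fintype X] (P : X → ℝ) (ε : ℝ) : ℝ :=
  sSup { r : ℝ | ∃ Q : X → ℝ, (∀ x, 0 ≤ Q x) ∧ (∑ x, |P x - Q x|) ≤ ε ∧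
    r = -Real.logb 2 (∑ x, Q x ^ 2) }

/-- ε-smooth Rényi entropy of order 0 of a density operator (entropy of its eigenvalues). -/
def S0smooth {n : Type*} [Fintype n] [DecidableEq n] (ρ : Matrix n n ℂ) (ε : ℝ) : ℝ :=
  H0smooth (eigs ρ) ε

/-- ε-smooth Rényi entropy of order 2 of a density operator (entropy of its eigenvalues). -/
def S2smooth {n : Type*} [Fintype n] [DecidableEq n] (ρ : Matrix n n ℂ) (ε : ℝ) : ℝ :=
  H2smooth (eigs ρ) ε

/-- Standard basis vector `|y⟩`. -/
def stdb {Y : Type*} [DecidableEq Y] (y : Y) : Y → ℂ := fun y' => if y' = y then 1 else 0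

/-- `n`-fold tensor (Kronecker) product of matrices, one per site. -/
def tpow {n : ℕ} {a b : Type*} (M : Fin n → Matrix a b ℂ) :
    Matrix (Fin n → a) (Fin n → b) ℂ :=
  Matrix.of fun p q => ∏ i, M i (p i) (q i)

/-- `n`-fold tensor product of vectors, one per site. -/
def vpow {n : ℕ} {a : Type*} (v : Fin n → a → ℂ) : (Fin n → a) → ℂ :=
  fun p => ∏ i, v i (p i)

/-- The unitary `U_π` permuting the `n` tensor factors. -/
def permMat {n : ℕ} {a : Type*} [DecidableEq a] (π : Equiv.Perm (Fin n)) :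
    Matrix (Fin n → a) (Fin n → a) ℂ :=
  Matrix.of fun p q => if q = p ∘ π then 1 else 0

/-- Shannon entropy (base 2) of a distribution. -/
def shEnt {X : Type*} [Fintype X] (P : X → ℝ) : ℝ :=
  ∑ x, -(P x * Real.logb 2 (P x))

/-- The binary entropy function. -/
def binEnt (ε : ℝ) : ℝ := -(ε * Real.logb 2 ε) - (1 - ε) * Real.logb 2 (1 - ε)

/-- The quantity `M(X;Y;E)` of a ccq-state: the supremum over all families of density
operators `σ_U^x`, `σ_V^x` of `S(U|VE) - S(U|VY)`. -/
def Mmeas {X Y E : Type*} [Fintype X] [Fintype Y] [Fintype E] [DecidableEq Y] [DecidableEq E]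
    (P : X → Y → ℝ) (σE : X → Y → Matrix E E ℂ) : ℝ :=
  sSup { r : ℝ | ∃ (dU dV : ℕ) (σU : X → Matrix (Fin dU) (Fin dU) ℂ)
      (σV : X → Matrix (Fin dV) (Fin dV) ℂ),
      (∀ x, IsDensity (σU x)) ∧ (∀ x, IsDensity (σV x)) ∧
      r = (vnEntropy (∑ x, ∑ y, P x y • (σU x ⊗ₖ (σV x ⊗ₖ σE x y)))
            - vnEntropy (∑ x, ∑ y, P x y • (σV x ⊗ₖ σE x y)))
        - (vnEntropy (∑ x, ∑ y, P x y • (σU x ⊗ₖ (σV x ⊗ₖ outerPr (stdb y))))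
            - vnEntropy (∑ x, ∑ y, P x y • (σV x ⊗ₖ outerPr (stdb y)))) }

section EuclideanIsometry

/-- Two linear maps with the same pointwise norm differ by a linear isometry of the codomain. -/
lemma exists_linearIsometry_comp_eq_of_norm_eq {E V : Type*} [AddCommGroup E] [Module ℂ E]
    [NormedAddCommGroup V] [InnerProductSpace ℂ V] [FiniteDimensional ℂ V]
    (f g : E →ₗ[ℂ] V) (h : ∀ x, ‖f x‖ = ‖g x‖) :
    ∃ L : V →ₗᵢ[ℂ] V, ∀ x, L (f x) = g x := by
  have hker : LinearMap.ker f ≤ LinearMap.ker g := fun x hx => by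
    rw [LinearMap.mem_ker] at hx ⊢
    rw [← norm_eq_zero, ← h, hx, norm_zero]
  let L₀ : LinearMap.range f →ₗ[ℂ] V :=
    (LinearMap.ker f).liftQ g hker ∘ₗ f.quotKerEquivRange.symm.toLinearMap
  have hL₀ : ∀ x, L₀ ⟨f x, LinearMap.mem_range_self f x⟩ = g x := fun x => by
    have : f.quotKerEquivRange.symm ⟨f x, LinearMap.mem_range_self f x⟩ =
        (LinearMap.ker f).mkQ x := by
      rw [LinearEquiv.symm_apply_eq]
      rfl
    simp [L₀, this]
  let L : LinearMap.range f →ₗᵢ[ℂ] V :=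
    { toLinearMap := L₀
      norm_map' := by
        rintro ⟨_, x, rfl⟩
        rw [hL₀, ← h]
        rfl }
  refine ⟨L.extend, fun x => ?_⟩
  rw [← hL₀ x]
  exact L.extend_apply ⟨f x, LinearMap.mem_range_self f x⟩

lemma norm_toEuclideanLin_sq {m n : Type*} [Fintype m] [Fintype n] [DecidableEq n]
    (M : Matrix m n ℂ) (x : EuclideanSpace ℂ n) :
    ((‖toEuclideanLin M x‖ : ℂ)) ^ 2 = star x.ofLp ⬝ᵥ (Mᴴ * M) *ᵥ x.ofLp := by
  have h := inner_self_eq_norm_sq_to_K (𝕜 := ℂ) (toEuclideanLin M x)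
  rw [← Matrix.mulVec_mulVec, Matrix.dotProduct_mulVec, Matrix.vecMul_conjTranspose, star_star]
  rw [EuclideanSpace.inner_eq_star_dotProduct, dotProduct_comm] at h
  exact h.symm

lemma conjTranspose_mul_self_of_linearIsometry {n : Type*} [Fintype n] [DecidableEq n]
    (L : EuclideanSpace ℂ n →ₗᵢ[ℂ] EuclideanSpace ℂ n) :
    (toEuclideanLin.symm L.toLinearMap)ᴴ * toEuclideanLin.symm L.toLinearMap = 1 := by
  set W := toEuclideanLin.symm L.toLinearMap with hW
  have hWL : toEuclideanLin W = L.toLinearMap := by simp [hW]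
  apply toEuclideanLin.injective
  refine LinearMap.ext fun x => ext_inner_left ℂ fun y => ?_
  have h1 : toEuclideanLin (Wᴴ * W) x = toEuclideanLin Wᴴ (toEuclideanLin W x) := by
    simp [toEuclideanLin, Matrix.toLpLin_apply]
  rw [h1, toEuclideanLin_conjTranspose_eq_adjoint, LinearMap.adjoint_inner_right, hWL]
  simp [toEuclideanLin]

/-- Right polar decomposition: a wide matrix `A` with `A Aᴴ = R²` is `R` times a coisometry. -/
lemma exists_coisometry_mul_eq {d d' : ℕ} (hd : d ≤ d') (A : Matrix (Fin d) (Fin d') ℂ)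
    (R : Matrix (Fin d) (Fin d) ℂ) (hR : R.IsHermitian) (hA : A * Aᴴ = R * R) :
    ∃ V : Matrix (Fin d) (Fin d') ℂ, V * Vᴴ = 1 ∧ A = R * V := by
  let J : Matrix (Fin d') (Fin d) ℂ := (1 : Matrix (Fin d') (Fin d') ℂ).submatrix id (Fin.castLE hd)
  have hJ : Jᴴ * J = 1 := by
    ext i j
    simp [J, Matrix.mul_apply, Matrix.one_apply, Fin.castLE_inj]
  obtain ⟨L, hL⟩ := exists_linearIsometry_comp_eq_of_norm_eq
    (toEuclideanLin (J * R)) (toEuclideanLin Aᴴ) fun x => by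
      have h : ((‖toEuclideanLin (J * R) x‖ : ℂ)) ^ 2 = (‖toEuclideanLin Aᴴ x‖ : ℂ) ^ 2 := by
        rw [norm_toEuclideanLin_sq, norm_toEuclideanLin_sq, conjTranspose_conjTranspose, hA,
          conjTranspose_mul, hR.eq, Matrix.mul_assoc, ← Matrix.mul_assoc Jᴴ, hJ, Matrix.one_mul]
      have h' : ‖toEuclideanLin (J * R) x‖ ^ 2 = ‖toEuclideanLin Aᴴ x‖ ^ 2 := by exact_mod_cast h
      exact (sq_eq_sq₀ (norm_nonneg _) (norm_nonneg _)).1 h'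
  have hW := conjTranspose_mul_self_of_linearIsometry L
  set W := toEuclideanLin.symm L.toLinearMap with hWdef
  have hWA : W * (J * R) = Aᴴ := by
    apply toEuclideanLin.injective
    refine LinearMap.ext fun x => ?_
    have h1 : toEuclideanLin (W * (J * R)) x = toEuclideanLin W (toEuclideanLin (J * R) x) := by
      simp [toEuclideanLin, Matrix.toLpLin_apply]
    rw [h1, ← hL x, hWdef, LinearEquiv.apply_symm_apply]
    rfl
  refine ⟨(W * J)ᴴ, ?_, ?_⟩
  · rw [conjTranspose_conjTranspose, conjTranspose_mul, Matrix.mul_assoc, ← Matrix.mul_assoc Wᴴ,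
      hW, Matrix.one_mul, hJ]
  · rw [← conjTranspose_conjTranspose A, ← hWA, ← Matrix.mul_assoc, conjTranspose_mul, hR.eq]

end EuclideanIsometry

section Spectral

variable {n : Type*} [Fintype n] [DecidableEq n]

lemma eigs_of_isHermitian {M : Matrix n n ℂ} (h : M.IsHermitian) : eigs M = h.eigenvalues :=
  dif_pos h

/-- Every Hermitian matrix is `U diag(λ) Uᴴ` with `U` unitary and `λ` its eigenvalues. -/
lemma exists_unitary_diagonalization {M : Matrix n n ℂ} (h : M.IsHermitian) :
    ∃ U : Matrix n n ℂ, Uᴴ * U = 1 ∧ U * Uᴴ = 1 ∧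
      M = U * diagonal (fun i => (eigs M i : ℂ)) * Uᴴ := by
  refine ⟨h.eigenvectorUnitary, Unitary.coe_star_mul_self _, Unitary.coe_mul_star_self _, ?_⟩
  have := h.spectral_theorem
  rw [Unitary.conjStarAlgAut_apply] at this
  rw [eigs_of_isHermitian h]
  exact this

lemma trace_mul_self_eq_sum_eigs_sq {M : Matrix n n ℂ} (h : M.IsHermitian) :
    (M * M).trace = ((∑ i, eigs M i ^ 2 : ℝ) : ℂ) := by
  obtain ⟨U, hU, -, hM⟩ := exists_unitary_diagonalization h
  set D := diagonal (fun i => (eigs M i : ℂ)) with hD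
  have : M * M = U * (D * D * Uᴴ) := by
    conv_lhs => rw [hM]
    simp only [Matrix.mul_assoc]
    rw [← Matrix.mul_assoc Uᴴ, hU, Matrix.one_mul]
  rw [this, Matrix.trace_mul_comm, Matrix.mul_assoc, hU, Matrix.mul_one, hD, diagonal_mul_diagonal,
    trace_diagonal]
  push_cast
  simp only [sq]

/-- The diagonal of a Hermitian matrix in any orthonormal basis has `ℓ¹` norm at most the
trace norm. -/
lemma sum_norm_conj_diag_le {M : Matrix n n ℂ} (h : M.IsHermitian) {U : Matrix n n ℂ}
    (hU : U * Uᴴ = 1) :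
    ∑ i, ‖(Uᴴ * M * U) i i‖ ≤ ∑ i, |eigs M i| := by
  obtain ⟨W, hW, -, hM⟩ := exists_unitary_diagonalization h
  set X := Uᴴ * W with hX
  have hXX : Xᴴ * X = 1 := by
    rw [hX, conjTranspose_mul, conjTranspose_conjTranspose, Matrix.mul_assoc,
      ← Matrix.mul_assoc U, hU, Matrix.one_mul, hW]
  have hcol : ∀ j, ∑ i, ‖X i j‖ ^ 2 = 1 := fun j => by
    have := congrFun (congrFun hXX j) j
    simp only [Matrix.mul_apply, conjTranspose_apply, one_apply_eq, RCLike.star_def,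
      Complex.conj_mul'] at this
    exact_mod_cast this
  have hdiag : ∀ i, (Uᴴ * M * U) i i = ∑ j, X i j * (eigs M j : ℂ) * star (X i j) := fun i => by
    have : Uᴴ * M * U = X * diagonal (fun i => (eigs M i : ℂ)) * Xᴴ := by
      conv_lhs => rw [hM]
      simp [hX, Matrix.mul_assoc, conjTranspose_mul]
    rw [this, Matrix.mul_apply]
    simp [mul_diagonal]
  calc ∑ i, ‖(Uᴴ * M * U) i i‖ ≤ ∑ i, ∑ j, |eigs M j| * ‖X i j‖ ^ 2 := by
        refine Finset.sum_le_sum fun i _ => ?_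
        rw [hdiag]
        refine (norm_sum_le _ _).trans (Finset.sum_le_sum fun j _ => le_of_eq ?_)
        rw [norm_mul, norm_mul, norm_star, Complex.norm_real, Real.norm_eq_abs]
        ring
    _ = ∑ j, |eigs M j| := by
        rw [Finset.sum_comm]
        simp [← Finset.mul_sum, hcol]

/-- **Powers–Størmer inequality**: `‖A - B‖₂² ≤ ‖A² - B²‖₁` for `A, B ≥ 0`. -/
lemma powers_stormer {A B : Matrix n n ℂ} (hA : A.PosSemidef) (hB : B.PosSemidef) :
    ∑ i, eigs (A - B) i ^ 2 ≤ ∑ i, |eigs (A * A - B * B) i| := by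
  have hS : (A - B).IsHermitian := hA.1.sub hB.1
  have hΔ : (A * A - B * B).IsHermitian := by
    simp [IsHermitian, conjTranspose_sub, conjTranspose_mul, hA.1.eq, hB.1.eq]
  obtain ⟨U, hU, hU', hS'⟩ := exists_unitary_diagonalization hS
  refine le_trans (Finset.sum_le_sum fun i _ => ?_) (sum_norm_conj_diag_le hΔ hU')
  set s := eigs (A - B) with hs
  have hA' := (hA.conjTranspose_mul_mul_same U).diag_nonneg (i := i)
  have hB' := (hB.conjTranspose_mul_mul_same U).diag_nonneg (i := i)
  obtain ⟨a, ha, haA⟩ := RCLike.nonneg_iff_exists_ofReal.1 hA'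
  obtain ⟨b, hb, hbB⟩ := RCLike.nonneg_iff_exists_ofReal.1 hB'
  have hSD : Uᴴ * (A - B) * U = diagonal (fun i => (s i : ℂ)) := by
    rw [hS']
    simp only [Matrix.mul_assoc]
    rw [hU, Matrix.mul_one, ← Matrix.mul_assoc, hU, Matrix.one_mul]
  have hab : a - b = s i := by
    have := congrFun (congrFun hSD i) i
    rw [Matrix.mul_sub, Matrix.sub_mul, Matrix.sub_apply, ← haA, ← hbB, diagonal_apply_eq] at this
    exact Complex.ofReal_injective (by simpa using this)
  have hdiag : (Uᴴ * (A * A - B * B) * U) i i = ((s i * (a + b) : ℝ) : ℂ) := by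
    have h2 : (2 : ℂ) • (Uᴴ * (A * A - B * B) * U) =
        (Uᴴ * (A - B) * U) * (Uᴴ * A * U + Uᴴ * B * U) +
          (Uᴴ * A * U + Uᴴ * B * U) * (Uᴴ * (A - B) * U) := by
      have e : ∀ X Y : Matrix n n ℂ, (Uᴴ * X * U) * (Uᴴ * Y * U) = Uᴴ * (X * Y) * U := by
        intro X Y
        simp only [Matrix.mul_assoc]
        rw [← Matrix.mul_assoc U, hU', Matrix.one_mul]
      rw [← Matrix.add_mul, ← Matrix.mul_add, e, e, ← Matrix.add_mul, ← Matrix.mul_add,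
        ← Matrix.smul_mul, ← Matrix.mul_smul, two_smul]
      congr 2
      noncomm_ring
    have h3 := congrFun (congrFun h2 i) i
    rw [hSD] at h3
    simp only [Matrix.smul_apply, Matrix.add_apply, diagonal_mul, mul_diagonal, ← haA, ← hbB,
      smul_eq_mul] at h3
    push_cast
    linear_combination h3 / 2
  rw [hdiag, Complex.norm_real, Real.norm_eq_abs, abs_mul, abs_of_nonneg (add_nonneg ha hb),
    ← sq_abs, sq]
  refine mul_le_mul_of_nonneg_left ?_ (abs_nonneg _)
  rw [← hab, abs_le]
  constructor <;> linarith

/-- Every positive semidefinite matrix has a positive semidefinite square root. -/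
lemma exists_posSemidef_sqrt {M : Matrix n n ℂ} (hM : M.PosSemidef) :
    ∃ R : Matrix n n ℂ, R.PosSemidef ∧ R * R = M := by
  open scoped MatrixOrder in
  exact ⟨CFC.sqrt M, (CFC.sqrt_nonneg M).posSemidef, CFC.sqrt_mul_sqrt_self M hM.nonneg⟩

/-- Cauchy–Schwarz bound for the trace norm of a Hermitian matrix of rank at most two. -/
lemma sum_abs_eigs_sq_le {M : Matrix n n ℂ} (h : M.IsHermitian) (hr : M.rank ≤ 2) :
    (∑ i, |eigs M i|) ^ 2 ≤ 2 * ∑ i, eigs M i ^ 2 := by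
  rw [h.rank_eq_card_non_zero_eigs, ← eigs_of_isHermitian h, Fintype.card_subtype] at hr
  set s := Finset.univ.filter fun i => eigs M i ≠ 0
  have h1 : ∑ i, |eigs M i| = ∑ i ∈ s, |eigs M i| := by
    refine (Finset.sum_subset (Finset.subset_univ s) fun i _ hi => ?_).symm
    simpa [s] using hi
  rw [h1]
  calc (∑ i ∈ s, |eigs M i|) ^ 2 ≤ s.card * ∑ i ∈ s, |eigs M i| ^ 2 := sq_sum_le_card_mul_sum_sq
    _ ≤ 2 * ∑ i, eigs M i ^ 2 := by
      simp only [sq_abs]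
      gcongr
      · exact_mod_cast hr
      · exact Finset.subset_univ s

end Spectral

section PureStates

lemma outerPr_eq_vecMulVec {n : Type*} (v : n → ℂ) : outerPr v = vecMulVec v (star v) := rfl

/-- Pure states with real overlap `F` satisfy `δ ≤ √(1 - F²)`. -/
lemma traceDist_outerPr_sq_le {n : Type*} [Fintype n] [DecidableEq n] {v w : n → ℂ} {F : ℝ}
    (hv : star v ⬝ᵥ v = 1) (hw : star w ⬝ᵥ w = 1) (hF : star v ⬝ᵥ w = F) :
    traceDist (outerPr v) (outerPr w) ^ 2 ≤ 1 - F ^ 2 := by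
  have hF' : star w ⬝ᵥ v = F := by
    rw [star_dotProduct, hF]
    simp
  have hH : (outerPr v - outerPr w).IsHermitian := by
    ext i j
    simp [outerPr, mul_comm]
  have hr : (outerPr v - outerPr w).rank ≤ 2 := by
    have : outerPr v - outerPr w =
        (Matrix.of fun i => ![v i, -w i]) * (Matrix.of ![star v, star w]) := by
      ext i j
      simp [outerPr, Matrix.mul_apply, sub_eq_add_neg]
    rw [this]
    exact (rank_mul_le_left _ _).trans (rank_le_card_width _)
  have htr : ((outerPr v - outerPr w) * (outerPr v - outerPr w)).trace =
      ((2 - 2 * F ^ 2 : ℝ) : ℂ) := by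
    simp only [outerPr_eq_vecMulVec, Matrix.mul_sub, Matrix.sub_mul, vecMulVec_mul_vecMulVec,
      trace_sub, trace_vecMulVec, hv, hw, hF, hF']
    simp only [dotProduct_smul, dotProduct_comm _ (star _), hv, hw, hF, hF', smul_eq_mul]
    push_cast
    ring
  rw [trace_mul_self_eq_sum_eigs_sq hH] at htr
  have h := sum_abs_eigs_sq_le hH hr
  rw [Complex.ofReal_inj.1 htr] at h
  rw [traceDist, mul_pow]
  linarith

lemma star_dotProduct_uncurry {m w : Type*} [Fintype m] [Fintype w] (A B : Matrix m w ℂ) :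
    star (fun p : m × w => A p.1 p.2) ⬝ᵥ (fun p : m × w => B p.1 p.2) = (B * Aᴴ).trace := by
  simp [dotProduct, Fintype.sum_prod_type, trace, Matrix.mul_apply, mul_comm]

lemma ptraceR_outerPr_uncurry {m w : Type*} [Fintype w] (A : Matrix m w ℂ) :
    ptraceR (outerPr fun p : m × w => A p.1 p.2) = A * Aᴴ := by
  ext i j
  simp [ptraceR, outerPr, Matrix.mul_apply]

lemma sum_normSq_eq_star_dotProduct {n : Type*} [Fintype n] (v : n → ℂ) :
    ((∑ i, Complex.normSq (v i) : ℝ) : ℂ) = star v ⬝ᵥ v := by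
  simp [dotProduct, Complex.normSq_eq_conj_mul_self]

end PureStates

/-- For density operators `ρ, ρ'` on `ℂ^d` and a purification `ψ` of `ρ`
in `ℂ^d ⊗ ℂ^{d'}` with `d' ≥ d`, there is a purification `ψ'` of `ρ'` in the same space with
`δ(|ψ⟩⟨ψ|, |ψ'⟩⟨ψ'|) ≤ √(2 δ(ρ, ρ'))`. -/
theorem purification_close_of_close
    {d d' : ℕ} (hd : d ≤ d')
    (ρ ρ' : Matrix (Fin d) (Fin d) ℂ)
    (hρ : IsDensity ρ) (hρ' : IsDensity ρ')
    (ψ : Fin d × Fin d' → ℂ) (hψ : IsPurification ψ ρ) :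
    ∃ ψ' : Fin d × Fin d' → ℂ, IsPurification ψ' ρ' ∧
      traceDist (outerPr ψ) (outerPr ψ') ≤ Real.sqrt (2 * traceDist ρ ρ') := by
  obtain ⟨R, hR, hRρ⟩ := exists_posSemidef_sqrt hρ.1
  obtain ⟨R', hR', hRρ'⟩ := exists_posSemidef_sqrt hρ'.1
  let A : Matrix (Fin d) (Fin d') ℂ := Matrix.of fun i k => ψ (i, k)
  have hA : A * Aᴴ = R * R := by
    rw [hRρ, ← hψ.2]
    exact (ptraceR_outerPr_uncurry A).symm
  obtain ⟨V, hV, hAV⟩ := exists_coisometry_mul_eq hd A R hR.1 hA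
  have hB : (R' * V) * (R' * V)ᴴ = ρ' := by
    rw [conjTranspose_mul, Matrix.mul_assoc, ← Matrix.mul_assoc V, hV, Matrix.one_mul, hR'.1.eq,
      hRρ']
  let ψ' : Fin d × Fin d' → ℂ := fun p => (R' * V) p.1 p.2
  have hψ1 : star ψ ⬝ᵥ ψ = 1 := by rw [← sum_normSq_eq_star_dotProduct, hψ.1, Complex.ofReal_one]
  have hψ'1 : star ψ' ⬝ᵥ ψ' = 1 := by rw [star_dotProduct_uncurry, hB, hρ'.2]
  have hover : star ψ ⬝ᵥ ψ' = (R' * R).trace := by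
    have h := star_dotProduct_uncurry A (R' * V)
    rw [hAV, conjTranspose_mul, Matrix.mul_assoc, ← Matrix.mul_assoc V, hV, Matrix.one_mul,
      hR.1.eq, ← hAV] at h
    exact h
  refine ⟨ψ', ⟨?_, ?_⟩, ?_⟩
  · rw [← Complex.ofReal_inj, sum_normSq_eq_star_dotProduct, hψ'1, Complex.ofReal_one]
  · rw [ptraceR_outerPr_uncurry, hB]
  have htr := trace_mul_self_eq_sum_eigs_sq (hR.1.sub hR'.1)
  have hPS := powers_stormer hR hR'
  rw [hRρ, hRρ'] at hPS
  set q := ∑ i, eigs (R - R') i ^ 2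
  have hF : star ψ ⬝ᵥ ψ' = ((1 - q / 2 : ℝ) : ℂ) := by
    rw [Matrix.mul_sub, Matrix.sub_mul, Matrix.sub_mul, trace_sub, trace_sub, trace_sub, hRρ, hRρ',
      hρ.2, hρ'.2, Matrix.trace_mul_comm R R'] at htr
    rw [hover]
    push_cast
    linear_combination -htr / 2
  refine Real.le_sqrt_of_sq_le ((traceDist_outerPr_sq_le hψ1 hψ'1 hF).trans ?_)
  rw [traceDist]
  nlinarith [sq_nonneg q]
end
end

section
/- Let ρ_{XB} = Σ_{x=1}^d μ_x |x⟩⟨x| ⊗ ρ_B^x be a bipartite density operator, where {|x⟩}_{x=1,…,d} is an orthonormal basis of ℂ^d, (μ_x) is a probability distribution, and each ρ_B^x is a density operator on ℂ^{d_B}. If δ(ρ_{XB}, ρ_X ⊗ ρ_B) ≤ ε, where ρ_X and ρ_B are the reduced states (partial traces) of ρ_{XB}, then S(X|B) ≥ S(X) − √(2ε)·log₂ d − 1/e. -/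
open scoped Matrix Kronecker BigOperators ComplexOrder
open Matrix

noncomputable section

open scoped MatrixOrder

section Spectral

variable {n : Type*} [Fintype n] [DecidableEq n]

lemma eigs_eq {A : Matrix n n ℂ} (hA : A.IsHermitian) : eigs A = hA.eigenvalues := dif_pos hA

/-- The trace of `f(A) K` in an eigenbasis of `A`. -/
lemma trace_cfc_mul {A : Matrix n n ℂ} (hA : A.IsHermitian) (f : ℝ → ℝ) (K : Matrix n n ℂ) :
    (cfc f A * K).trace = ∑ i, (f (hA.eigenvalues i) : ℂ) *
      (star (hA.eigenvectorUnitary : Matrix n n ℂ) * K * hA.eigenvectorUnitary) i i := by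
  rw [hA.cfc_eq, IsHermitian.cfc, Unitary.conjStarAlgAut_apply, mul_assoc, mul_assoc,
    Matrix.trace_mul_comm, mul_assoc, Matrix.trace]
  refine Finset.sum_congr rfl fun i _ => ?_
  rw [Matrix.diag_apply, Matrix.diagonal_mul]
  simp [mul_assoc]

lemma trace_mul_eq_sum {A : Matrix n n ℂ} (hA : A.IsHermitian) (K : Matrix n n ℂ) :
    (A * K).trace = ∑ i, (hA.eigenvalues i : ℂ) *
      (star (hA.eigenvectorUnitary : Matrix n n ℂ) * K * hA.eigenvectorUnitary) i i := by
  have h := trace_cfc_mul hA (fun x => x) K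
  rwa [cfc_id' ℝ A] at h

lemma trace_cfc {A : Matrix n n ℂ} (hA : A.IsHermitian) (f : ℝ → ℝ) :
    (cfc f A).trace = ∑ i, (f (hA.eigenvalues i) : ℂ) := by
  simpa using trace_cfc_mul hA f 1

lemma trace_mul_re_nonneg {P Q : Matrix n n ℂ} (hP : P.PosSemidef) (hQ : Q.PosSemidef) :
    0 ≤ (P * Q).trace.re := by
  rw [trace_mul_eq_sum hP.1, Complex.re_sum]
  refine Finset.sum_nonneg fun i _ => ?_
  rw [Complex.re_ofReal_mul]
  refine mul_nonneg (hP.eigenvalues_nonneg i) ?_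
  have h : 0 ≤ (star (hP.1.eigenvectorUnitary : Matrix n n ℂ) * Q * hP.1.eigenvectorUnitary) i i :=
    (hQ.conjTranspose_mul_mul_same (hP.1.eigenvectorUnitary : Matrix n n ℂ)).diag_nonneg
  exact (Complex.le_def.1 h).1

lemma trace_mul_re_mono {P K L : Matrix n n ℂ} (hP : P.PosSemidef) (h : (L - K).PosSemidef) :
    (P * K).trace.re ≤ (P * L).trace.re := by
  have := trace_mul_re_nonneg hP h
  rw [mul_sub, Matrix.trace_sub, Complex.sub_re] at this
  linarith

/-- The diagonal of `g(B)` in an orthonormal basis is an average of values of `g` at the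
eigenvalues of `B`, with weights not depending on `g`. -/
lemma exists_weights_diag_cfc {B : Matrix n n ℂ} (hB : B.IsHermitian)
    (U : Matrix.unitaryGroup n ℂ) (i : n) :
    ∃ w : n → ℝ, (∀ j, 0 ≤ w j) ∧ ∑ j, w j = 1 ∧ ∀ g : ℝ → ℝ,
      (star (U : Matrix n n ℂ) * cfc g B * U) i i = ((∑ j, g (hB.eigenvalues j) * w j : ℝ) : ℂ) := by
  set V := hB.eigenvectorUnitary
  set W : Matrix n n ℂ := star (U : Matrix n n ℂ) * V with hW
  have key : ∀ g : ℝ → ℝ, (star (U : Matrix n n ℂ) * cfc g B * U) i i =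
      ((∑ j, g (hB.eigenvalues j) * Complex.normSq (W i j) : ℝ) : ℂ) := by
    intro g
    have : star (U : Matrix n n ℂ) * cfc g B * U =
        W * diagonal (fun j => (g (hB.eigenvalues j) : ℂ)) * star W := by
      rw [hB.cfc_eq, IsHermitian.cfc, Unitary.conjStarAlgAut_apply, hW, star_mul, star_star]
      simp only [mul_assoc]
      rfl
    rw [this, Matrix.mul_apply]
    push_cast
    refine Finset.sum_congr rfl fun j _ => ?_
    rw [Matrix.mul_diagonal, Matrix.star_apply, Complex.normSq_eq_conj_mul_self]
    simp only [RCLike.star_def]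
    ring
  refine ⟨fun j => Complex.normSq (W i j), fun j => Complex.normSq_nonneg _, ?_, key⟩
  have h1 := key (fun _ => 1)
  rw [cfc_const_one ℝ B, mul_one, Unitary.coe_star_mul_self, Matrix.one_apply_eq] at h1
  simp only [one_mul] at h1
  exact_mod_cast h1.symm

/-- **Klein's inequality** for the function `x log x`. -/
lemma klein {A B : Matrix n n ℂ} (hA : A.PosDef) (hB : B.PosDef) :
    A.trace.re - B.trace.re ≤ (A * cfc Real.log A).trace.re - (A * cfc Real.log B).trace.re := by
  set U := hA.1.eigenvectorUnitary
  have hBtr : B.trace = ∑ i, (star (U : Matrix n n ℂ) * B * U) i i := by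
    have := Matrix.trace_mul_comm (star (U : Matrix n n ℂ) * B) U
    rw [← mul_assoc, Unitary.mul_star_self_of_mem U.2, one_mul] at this
    exact this.symm
  rw [trace_mul_eq_sum hA.1 (cfc Real.log A), trace_mul_eq_sum hA.1 (cfc Real.log B),
    hA.1.trace_eq_sum_eigenvalues, hBtr]
  simp only [Complex.re_sum]
  rw [← Finset.sum_sub_distrib, ← Finset.sum_sub_distrib]
  refine Finset.sum_le_sum fun i _ => ?_
  obtain ⟨w, hw0, hw1, hw⟩ := exists_weights_diag_cfc hB.1 U i
  have hAi : (star (U : Matrix n n ℂ) * cfc Real.log A * U) i i =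
      (Real.log (hA.1.eigenvalues i) : ℂ) := by
    rw [hA.1.cfc_eq, IsHermitian.cfc, Unitary.conjStarAlgAut_apply]
    simp only [mul_assoc]
    rw [Unitary.coe_star_mul_self, mul_one, ← mul_assoc, Unitary.coe_star_mul_self, one_mul]
    simp
  have hBi := hw (fun x => x)
  rw [cfc_id' ℝ B] at hBi
  rw [hAi, hw Real.log, hBi, Complex.re_ofReal_mul, Complex.re_ofReal_mul]
  simp only [Complex.ofReal_re, Complex.coe_algebraMap]
  have ha := hA.eigenvalues_pos i
  set a := hA.1.eigenvalues i
  have e1 : a = ∑ j, a * w j := by rw [← Finset.mul_sum, hw1, mul_one]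
  have e2 : a * Real.log a = ∑ j, a * Real.log a * w j := by rw [← Finset.mul_sum, hw1, mul_one]
  have : ∑ j, (a - hB.1.eigenvalues j) * w j ≤
      ∑ j, (a * Real.log a - a * Real.log (hB.1.eigenvalues j)) * w j := by
    refine Finset.sum_le_sum fun j _ => mul_le_mul_of_nonneg_right ?_ (hw0 j)
    have hb := hB.eigenvalues_pos j
    set b := hB.1.eigenvalues j
    have h := Real.log_le_sub_one_of_pos (div_pos hb ha)
    rw [Real.log_div hb.ne' ha.ne'] at h
    have h2 := mul_le_mul_of_nonneg_left h ha.le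
    have h3 : a * (b / a - 1) = b - a := by field_simp
    nlinarith
  simp only [sub_mul, Finset.sum_sub_distrib] at this
  rw [← e1, ← e2] at this
  simpa [Finset.mul_sum, mul_assoc] using this

/-- For a traceless Hermitian `Δ` and `a ≤ K ≤ b`, `tr(ΔK) ≤ (b - a) · tr|Δ| / 2`. -/
lemma trace_mul_re_le_of_traceless {Δ K : Matrix n n ℂ} (hΔ : Δ.IsHermitian) (h0 : Δ.trace = 0)
    {a b : ℝ} (ha : (K - (a : ℂ) • (1 : Matrix n n ℂ)).PosSemidef)
    (hb : ((b : ℂ) • (1 : Matrix n n ℂ) - K).PosSemidef) :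
    (Δ * K).trace.re ≤ (b - a) * ((1 / 2) * ∑ i, |eigs Δ i|) := by
  rw [trace_mul_eq_sum hΔ, Complex.re_sum, eigs_eq hΔ]
  set U : Matrix n n ℂ := hΔ.eigenvectorUnitary.1
  have hUU : star U * U = 1 := Unitary.coe_star_mul_self _
  have hs : ∑ i, hΔ.eigenvalues i = 0 := by
    have := congrArg Complex.re hΔ.trace_eq_sum_eigenvalues
    rw [h0] at this
    simpa using this.symm
  have hka : ∀ i, a ≤ ((star U * K * U) i i).re := by
    intro i
    have h : 0 ≤ (star U * (K - (a : ℂ) • (1 : Matrix n n ℂ)) * U) i i :=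
      (ha.conjTranspose_mul_mul_same U).diag_nonneg
    rw [mul_sub, sub_mul, Matrix.mul_smul, mul_one, Matrix.smul_mul, hUU] at h
    have := (Complex.le_def.1 h).1
    simp at this
    linarith
  have hkb : ∀ i, ((star U * K * U) i i).re ≤ b := by
    intro i
    have h : 0 ≤ (star U * ((b : ℂ) • (1 : Matrix n n ℂ) - K) * U) i i :=
      (hb.conjTranspose_mul_mul_same U).diag_nonneg
    rw [mul_sub, sub_mul, Matrix.mul_smul, mul_one, Matrix.smul_mul, hUU] at h
    have := (Complex.le_def.1 h).1
    simp at this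
    linarith
  have : ∑ i, ((hΔ.eigenvalues i : ℂ) * (star U * K * U) i i).re ≤
      ∑ i, ((a + b) / 2 * hΔ.eigenvalues i + (b - a) / 2 * |hΔ.eigenvalues i|) := by
    refine Finset.sum_le_sum fun i _ => ?_
    rw [Complex.re_ofReal_mul]
    have h1 := hka i
    have h2 := hkb i
    rcases abs_cases (hΔ.eigenvalues i) with ⟨h, h'⟩ | ⟨h, h'⟩ <;> rw [h] <;> nlinarith
  refine this.trans_eq ?_
  rw [Finset.sum_add_distrib, ← Finset.mul_sum, ← Finset.mul_sum, hs]
  ring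

end Spectral

section LogMonotone

variable {n : Type*} [Fintype n] [DecidableEq n]

open scoped Matrix.Norms.L2Operator in
lemma posSemidef_log_sub_log {A B : Matrix n n ℂ} (hA : A.PosDef) (h : (B - A).PosSemidef) :
    (cfc Real.log B - cfc Real.log A).PosSemidef :=
  Matrix.le_iff.1 (CFC.log_le_log (Matrix.le_iff.2 h) (isStrictlyPositive_iff_posDef.2 hA))

open scoped Matrix.Norms.L2Operator in
lemma log_smul_of_posDef {A : Matrix n n ℂ} (hA : A.PosDef) {c : ℝ} (hc : 0 < c) :
    cfc Real.log (c • A) = (Real.log c : ℂ) • (1 : Matrix n n ℂ) + cfc Real.log A := by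
  have h := CFC.log_smul' (r := c) A hc (isStrictlyPositive_iff_posDef.2 hA)
  rw [Algebra.algebraMap_eq_smul_one] at h
  exact h

/-- If `c A ≤ B` then `log c + log A ≤ log B`. -/
lemma posSemidef_log_sub_log_of_smul_le {A B : Matrix n n ℂ} (hA : A.PosDef) {c : ℝ} (hc : 0 < c)
    (h : (B - c • A).PosSemidef) :
    (cfc Real.log B - cfc Real.log A - (Real.log c : ℂ) • (1 : Matrix n n ℂ)).PosSemidef := by
  have h1 := posSemidef_log_sub_log (hA.smul hc) h
  rw [log_smul_of_posDef hA hc] at h1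
  convert h1 using 1
  abel

end LogMonotone

section RelativeEntropy

/-- A function whose increments are at most quadratic in the step does not increase. -/
lemma le_of_quadratic_increments {F : ℝ → ℝ} {T C : ℝ} (hT : 0 ≤ T)
    (h : ∀ s t, 0 ≤ s → s ≤ t → t ≤ T → F t - F s ≤ C * (t - s) ^ 2) : F T ≤ F 0 := by
  have key : ∀ N : ℕ, F T - F 0 ≤ C * T ^ 2 * (1 / ((N : ℝ) + 1)) := by
    intro N
    have hN : (0 : ℝ) < (N : ℝ) + 1 := by positivity
    have h1 := Finset.sum_range_sub (fun k : ℕ => F (k * (T / ((N : ℝ) + 1)))) (N + 1)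
    have h2 : ∑ k ∈ Finset.range (N + 1), (F (((k + 1 : ℕ) : ℝ) * (T / ((N : ℝ) + 1)))
        - F (k * (T / ((N : ℝ) + 1)))) ≤
        ∑ _k ∈ Finset.range (N + 1), C * (T / ((N : ℝ) + 1)) ^ 2 := by
      refine Finset.sum_le_sum fun k hk => ?_
      have hk' : (k : ℝ) + 1 ≤ (N : ℝ) + 1 := by
        exact_mod_cast Finset.mem_range.1 hk
      have hstep : 0 ≤ T / ((N : ℝ) + 1) := by positivity
      refine (h _ _ (by positivity) ?_ ?_).trans_eq ?_
      · push_cast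
        nlinarith
      · push_cast
        calc ((k : ℝ) + 1) * (T / ((N : ℝ) + 1)) ≤ ((N : ℝ) + 1) * (T / ((N : ℝ) + 1)) := by
              gcongr
          _ = T := by field_simp
      · push_cast
        ring
    rw [h1] at h2
    simp only [Finset.sum_const, Finset.card_range, nsmul_eq_mul, Nat.cast_add, Nat.cast_one,
      CharP.cast_eq_zero, zero_mul] at h2
    have e1 : ((N : ℝ) + 1) * (T / ((N : ℝ) + 1)) = T := by field_simp
    have e2 : ((N : ℝ) + 1) * (C * (T / ((N : ℝ) + 1)) ^ 2) = C * T ^ 2 * (1 / ((N : ℝ) + 1)) := by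
      field_simp
    rwa [e1, e2] at h2
  have hlim : Filter.Tendsto (fun N : ℕ => C * T ^ 2 * (1 / ((N : ℝ) + 1))) Filter.atTop
      (nhds (C * T ^ 2 * 0)) := tendsto_one_div_add_atTop_nhds_zero_nat.const_mul _
  have := ge_of_tendsto' hlim key
  linarith

variable {n : Type*} [Fintype n] [DecidableEq n]

/-- If `ρ ≤ M σ` then the relative entropy `D(ρ‖σ)` is at most `log M`. -/
lemma relEntropy_le_log {ρ σ : Matrix n n ℂ} (hρ : ρ.PosDef) (hσ : σ.PosDef) (hρ1 : ρ.trace = 1)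
    {M : ℝ} (hM : 0 < M) (h : (M • σ - ρ).PosSemidef) :
    (ρ * cfc Real.log ρ).trace.re - (ρ * cfc Real.log σ).trace.re ≤ Real.log M := by
  have h1 := posSemidef_log_sub_log hρ h
  rw [log_smul_of_posDef hσ hM] at h1
  have h2 := trace_mul_re_mono hρ.posSemidef h1
  rw [mul_add, Matrix.mul_smul, mul_one, Matrix.trace_add, Matrix.trace_smul, hρ1] at h2
  simp at h2
  linarith

/-- If `ρ ≤ M σ` then `D(ρ‖σ) ≤ δ(ρ,σ) (log M + 1)`. -/
lemma relEntropy_le_traceDist {ρ σ : Matrix n n ℂ} (hρ : ρ.PosDef) (hσ : σ.PosDef)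
    (hρ1 : ρ.trace = 1) (hσ1 : σ.trace = 1) {M : ℝ} (hM : 1 ≤ M) (h : (M • σ - ρ).PosSemidef) :
    (ρ * cfc Real.log ρ).trace.re - (ρ * cfc Real.log σ).trace.re ≤
      traceDist ρ σ * (Real.log M + 1) := by
  have hM0 : 0 < M := by linarith
  set δ := traceDist ρ σ with hδ
  have hδ0 : 0 ≤ δ := by
    rw [hδ, traceDist]
    positivity
  set Δ := ρ - σ with hΔ
  have hΔh : Δ.IsHermitian := hρ.1.sub hσ.1
  have hΔ0 : Δ.trace = 0 := by rw [hΔ, Matrix.trace_sub, hρ1, hσ1, sub_self]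
  let S : ℝ → Matrix n n ℂ := fun t => (1 - t) • σ + t • ρ
  have hSpos : ∀ t, 0 ≤ t → t < 1 → (S t).PosDef := fun t h0 h1 =>
    (hσ.smul (sub_pos.2 h1)).add_posSemidef (hρ.posSemidef.smul h0)
  have hStr : ∀ t, (S t).trace = 1 := by
    intro t
    simp only [S, Matrix.trace_add, Matrix.trace_smul, hρ1, hσ1]
    simp
  have hSd : ∀ s t, S s = S t - (t - s) • Δ := by
    intro s t
    simp only [S, hΔ]
    module
  set G : ℝ → ℝ := fun t => (S t * cfc Real.log (S t)).trace.re with hG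
  set c := (Δ * cfc Real.log σ).trace.re with hc
  have hgrad : ∀ s t, 0 ≤ s → s ≤ t → t < 1 →
      G t - G s ≤ (t - s) * (Δ * cfc Real.log (S t)).trace.re := by
    intro s t hs hst ht
    have h1 := klein (hSpos s hs (by linarith)) (hSpos t (by linarith) ht)
    rw [hStr, hStr, sub_self] at h1
    have h2 : (S s * cfc Real.log (S t)).trace.re =
        G t - (t - s) * (Δ * cfc Real.log (S t)).trace.re := by
      rw [hSd s t, sub_mul, Matrix.trace_sub, Matrix.smul_mul, Matrix.trace_smul]
      simp [hG]
    rw [h2] at h1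
    simp only [hG] at h1 ⊢
    linarith
  have hslope : ∀ t, 0 ≤ t → t < 1 →
      (Δ * cfc Real.log (S t)).trace.re ≤ c + (Real.log M - Real.log (1 - t)) * δ := by
    intro t h0 h1
    have hlow : (cfc Real.log (S t) - cfc Real.log σ -
        (Real.log (1 - t) : ℂ) • (1 : Matrix n n ℂ)).PosSemidef := by
      refine posSemidef_log_sub_log_of_smul_le hσ (sub_pos.2 h1) ?_
      simpa [S] using hρ.posSemidef.smul h0
    have hupp : ((Real.log M : ℂ) • (1 : Matrix n n ℂ) -
        (cfc Real.log (S t) - cfc Real.log σ)).PosSemidef := by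
      have h2 : (M • σ - S t).PosSemidef := by
        have e : M • σ - S t = ((1 - t) * (M - 1)) • σ + t • (M • σ - ρ) := by
          simp only [S]
          module
        rw [e]
        exact (hσ.posSemidef.smul (mul_nonneg (by linarith) (by linarith))).add (h.smul h0)
      have h3 := posSemidef_log_sub_log (hSpos t h0 h1) h2
      rw [log_smul_of_posDef hσ hM0] at h3
      convert h3 using 1
      abel
    have h4 := trace_mul_re_le_of_traceless hΔh hΔ0 hlow hupp
    rw [mul_sub, Matrix.trace_sub, Complex.sub_re] at h4
    have h5 : δ = 1 / 2 * ∑ i, |eigs Δ i| := rfl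
    rw [← h5] at h4
    linarith
  have hT : ∀ T, 0 ≤ T → T < 1 → G T ≤ G 0 + T * c +
      δ * (T * Real.log M + ((1 - T) * Real.log (1 - T) + T)) := by
    intro T hT0 hT1
    have hF := le_of_quadratic_increments (C := δ / (1 - T))
      (F := fun t => G t - t * c - δ * (t * Real.log M + ((1 - t) * Real.log (1 - t) + t))) hT0 ?_
    · simp at hF
      linarith
    · intro s t hs hst htT
      have hv : 0 < 1 - t := by linarith
      have hu : 0 < 1 - s := by linarith
      have h1 := hgrad s t hs hst (by linarith)
      have h2 := mul_le_mul_of_nonneg_left (hslope t (by linarith) (by linarith)) (sub_nonneg.2 hst)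
      have h3 : (1 - s) * (Real.log (1 - s) - Real.log (1 - t)) - (t - s) ≤
          (t - s) ^ 2 / (1 - T) := by
        have h4 := Real.log_le_sub_one_of_pos (div_pos hu hv)
        rw [Real.log_div hu.ne' hv.ne'] at h4
        have h5 := mul_le_mul_of_nonneg_left h4 hu.le
        have h6 : (1 - s) * ((1 - s) / (1 - t) - 1) - (t - s) = (t - s) ^ 2 / (1 - t) := by
          field_simp
          ring
        have h7 : (t - s) ^ 2 / (1 - t) ≤ (t - s) ^ 2 / (1 - T) := by
          gcongr
        linarith
      have h8 := mul_le_mul_of_nonneg_left h3 hδ0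
      have h9 : δ / (1 - T) * (t - s) ^ 2 = δ * ((t - s) ^ 2 / (1 - T)) := by ring
      rw [h9]
      refine le_trans (le_of_sub_nonneg ?_) h8
      nlinarith
  have hend : ∀ T, 0 < T → T < 1 →
      T * (ρ * cfc Real.log ρ).trace.re + (1 - T) * G 0 + T * Real.log T
        + (1 - T) * Real.log (1 - T) ≤ G T := by
    intro T h0 h1
    have hl1 := trace_mul_re_mono hρ.posSemidef (K := cfc Real.log ρ + (Real.log T : ℂ) • 1)
      (L := cfc Real.log (S T)) (by
        rw [← sub_sub]
        refine posSemidef_log_sub_log_of_smul_le hρ h0 ?_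
        simpa [S] using hσ.posSemidef.smul (sub_pos.2 h1).le)
    have hl2 := trace_mul_re_mono hσ.posSemidef (K := cfc Real.log σ + (Real.log (1 - T) : ℂ) • 1)
      (L := cfc Real.log (S T)) (by
        rw [← sub_sub]
        refine posSemidef_log_sub_log_of_smul_le hσ (sub_pos.2 h1) ?_
        simpa [S] using hρ.posSemidef.smul h0.le)
    rw [mul_add, Matrix.mul_smul, mul_one, Matrix.trace_add, Matrix.trace_smul, hρ1] at hl1
    rw [mul_add, Matrix.mul_smul, mul_one, Matrix.trace_add, Matrix.trace_smul, hσ1] at hl2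
    simp only [smul_eq_mul, mul_one, Complex.add_re, Complex.ofReal_re] at hl1 hl2
    have hGT : G T = (1 - T) * (σ * cfc Real.log (S T)).trace.re +
        T * (ρ * cfc Real.log (S T)).trace.re := by
      have : ∀ L : Matrix n n ℂ, (S T * L).trace.re =
          (1 - T) * (σ * L).trace.re + T * (ρ * L).trace.re := by
        intro L
        simp [S, add_mul]
      exact this _
    have hG0 : G 0 = (σ * cfc Real.log σ).trace.re := by simp [hG, S]
    rw [hGT, hG0]
    have h2 : 0 ≤ 1 - T := by linarith
    nlinarith [mul_le_mul_of_nonneg_left hl1 h0.le, mul_le_mul_of_nonneg_left hl2 h2]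
  have hlim : (ρ * cfc Real.log ρ).trace.re ≤ G 0 + c + δ * (Real.log M + 1) := by
    have hcont : Continuous fun x : ℝ => x * Real.log x := Real.continuous_mul_log
    have hcont' : Continuous fun x : ℝ => (1 - x) * Real.log (1 - x) :=
      hcont.comp (continuous_const.sub continuous_id)
    have hl : Continuous fun T : ℝ => T * (ρ * cfc Real.log ρ).trace.re + (1 - T) * G 0
        + T * Real.log T + (1 - T) * Real.log (1 - T) := by fun_prop
    have hr : Continuous fun T : ℝ => G 0 + T * c +
        δ * (T * Real.log M + ((1 - T) * Real.log (1 - T) + T)) := by fun_prop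
    have := le_of_tendsto_of_tendsto (b := nhdsWithin (1 : ℝ) (Set.Iio 1))
      (hl.tendsto 1 |>.mono_left nhdsWithin_le_nhds) (hr.tendsto 1 |>.mono_left nhdsWithin_le_nhds)
      (by
        filter_upwards [Ioo_mem_nhdsLT (zero_lt_one' ℝ)] with T hT'
        exact (hend T hT'.1 hT'.2).trans (hT T hT'.1.le hT'.2))
    simpa using this
  have hG0 : G 0 = (σ * cfc Real.log σ).trace.re := by simp [hG, S]
  have hc' : c = (ρ * cfc Real.log σ).trace.re - (σ * cfc Real.log σ).trace.re := by
    rw [hc, hΔ, sub_mul, Matrix.trace_sub, Complex.sub_re]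
  linarith

end RelativeEntropy

section BlockDiagonal

variable {n o : Type*} [DecidableEq o]

/-- The block diagonal matrix `∑ x, |x⟩⟨x| ⊗ M x`. -/
def cqMat (M : o → Matrix n n ℂ) : Matrix (o × n) (o × n) ℂ :=
  Matrix.reindex (Equiv.prodComm n o) (Equiv.prodComm n o) (blockDiagonal M)

lemma cqMat_apply (M : o → Matrix n n ℂ) (p q : o × n) :
    cqMat M p q = if p.1 = q.1 then M p.1 p.2 q.2 else 0 := rfl

lemma isHermitian_cqMat {M : o → Matrix n n ℂ} (hM : ∀ x, (M x).IsHermitian) :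
    (cqMat M).IsHermitian := by
  ext p q
  rw [conjTranspose_apply, cqMat_apply, cqMat_apply]
  by_cases h : p.1 = q.1
  · rw [if_pos h.symm, if_pos h, ← h, (hM p.1).apply]
  · rw [if_neg h, if_neg (Ne.symm h), star_zero]

end BlockDiagonal

section EigenvalueSums

variable {n : Type*} [Fintype n] [DecidableEq n]

lemma sum_eigs_eq_sum_roots {A : Matrix n n ℂ} (hA : A.IsHermitian) (f : ℝ → ℝ) :
    ∑ i, f (eigs A i) = (A.charpoly.roots.map fun z => f z.re).sum := by
  rw [hA.roots_charpoly_eq_eigenvalues, eigs_eq hA, Multiset.map_map]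
  simp

lemma isHermitian_cfc (g : ℝ → ℝ) (A : Matrix n n ℂ) : (cfc g A).IsHermitian :=
  cfc_predicate (p := IsSelfAdjoint) g A

lemma sum_eigs_cfc {A : Matrix n n ℂ} (hA : A.IsHermitian) (f g : ℝ → ℝ) :
    ∑ i, f (eigs (cfc g A) i) = ∑ i, f (g (eigs A i)) := by
  rw [sum_eigs_eq_sum_roots (isHermitian_cfc g A), hA.charpoly_cfc_eq, eigs_eq hA,
    Polynomial.roots_prod]
  · simp
  · simp [Finset.prod_ne_zero_iff, Polynomial.X_sub_C_ne_zero]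

lemma cfc_affine {A : Matrix n n ℂ} (hA : A.IsHermitian) (a b : ℝ) :
    cfc (fun x => a * x + b) A = a • A + b • (1 : Matrix n n ℂ) := by
  have hA' : IsSelfAdjoint A := hA
  rw [cfc_add_const b (fun x => a * x) A, cfc_const_mul_id a A, Algebra.algebraMap_eq_smul_one]

lemma sum_eigs_affine {A : Matrix n n ℂ} (hA : A.IsHermitian) (f : ℝ → ℝ) (a b : ℝ) :
    ∑ i, f (eigs (a • A + b • (1 : Matrix n n ℂ)) i) = ∑ i, f (a * eigs A i + b) := by
  rw [← cfc_affine hA, sum_eigs_cfc hA]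

lemma sum_eigs_smul {A : Matrix n n ℂ} (hA : A.IsHermitian) (f : ℝ → ℝ) (a : ℝ) :
    ∑ i, f (eigs (a • A) i) = ∑ i, f (a * eigs A i) := by
  simpa using sum_eigs_affine hA f a 0

lemma sum_eigs_diagonal (f : ℝ → ℝ) (v : n → ℝ) :
    ∑ i, f (eigs (diagonal fun i => (v i : ℂ)) i) = ∑ i, f (v i) := by
  rw [sum_eigs_eq_sum_roots (Matrix.isHermitian_diagonal_of_self_adjoint _ (by
    ext i
    simp)), charpoly_diagonal, Polynomial.roots_prod]
  · simp
  · simp [Finset.prod_ne_zero_iff, Polynomial.X_sub_C_ne_zero]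

variable {o : Type*} [Fintype o] [DecidableEq o]

lemma charpoly_blockDiagonal (M : o → Matrix n n ℂ) :
    (blockDiagonal M).charpoly = ∏ x, (M x).charpoly := by
  rw [Matrix.charpoly, show charmatrix (blockDiagonal M) =
    blockDiagonal fun x => charmatrix (M x) from ?_, det_blockDiagonal]
  · rfl
  · ext ⟨i, x⟩ ⟨j, y⟩ : 2
    by_cases hxy : x = y
    · subst hxy
      simp [charmatrix_apply, blockDiagonal_apply, diagonal_apply]
    · simp [blockDiagonal_apply, hxy]

lemma sum_eigs_cqMat {M : o → Matrix n n ℂ} (hM : ∀ x, (M x).IsHermitian) (f : ℝ → ℝ) :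
    ∑ p, f (eigs (cqMat M) p) = ∑ x, ∑ i, f (eigs (M x) i) := by
  rw [sum_eigs_eq_sum_roots (isHermitian_cqMat hM), cqMat, charpoly_reindex,
    charpoly_blockDiagonal, Polynomial.roots_prod]
  · rw [Multiset.map_bind, Multiset.sum_bind]
    exact Finset.sum_congr rfl fun x _ => (sum_eigs_eq_sum_roots (hM x) f).symm
  · exact Finset.prod_ne_zero_iff.2 fun x _ => (Matrix.charpoly_monic _).ne_zero

end EigenvalueSums

section Entropy

variable {n : Type*} [Fintype n] [DecidableEq n]

lemma vnEntropy_eq (A : Matrix n n ℂ) :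
    vnEntropy A = (∑ i, Real.negMulLog (eigs A i)) / Real.log 2 := by
  rw [vnEntropy, Finset.sum_div]
  refine Finset.sum_congr rfl fun i _ => ?_
  rw [Real.negMulLog, Real.logb]
  ring

lemma sum_negMulLog_eigs {A : Matrix n n ℂ} (hA : A.IsHermitian) :
    ∑ i, Real.negMulLog (eigs A i) = -(A * cfc Real.log A).trace.re := by
  have hA' : IsSelfAdjoint A := hA
  have h : A * cfc Real.log A = cfc (fun x => x * Real.log x) A := by
    rw [cfc_mul (fun x => x) Real.log A (by fun_prop) (A.finite_real_spectrum.continuousOn _),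
      cfc_id' ℝ A]
  rw [h, trace_cfc hA, eigs_eq hA, Complex.re_sum, ← Finset.sum_neg_distrib]
  refine Finset.sum_congr rfl fun i _ => ?_
  rw [Complex.ofReal_re, Real.negMulLog]
  ring

lemma sum_eigs_eq_trace {A : Matrix n n ℂ} (hA : A.IsHermitian) : ∑ i, eigs A i = A.trace.re := by
  rw [eigs_eq hA, hA.trace_eq_sum_eigenvalues]
  simp

lemma traceDist_smul_add_smul_one {A B : Matrix n n ℂ} (hA : A.IsHermitian) (hB : B.IsHermitian)
    {a : ℝ} (ha : 0 ≤ a) (b : ℝ) :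
    traceDist (a • A + b • (1 : Matrix n n ℂ)) (a • B + b • 1) = a * traceDist A B := by
  have h : a • A + b • (1 : Matrix n n ℂ) - (a • B + b • 1) = a • (A - B) := by module
  rw [traceDist, traceDist, h, sum_eigs_smul (hA.sub hB) (fun x => |x|)]
  simp_rw [abs_mul, abs_of_nonneg ha, ← Finset.mul_sum]
  ring

end Entropy

section Holevo

variable {o : Type*} [Fintype o]

/-- An upper bound for the cross entropy of `μ` weighted by `w ∈ [0, 1]`. -/
lemma sum_mul_neg_log_le [Nonempty o] {μ w : o → ℝ} (hμ0 : ∀ x, 0 ≤ μ x)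
    (hw0 : ∀ x, 0 ≤ w x) (hw1 : ∀ x, w x ≤ 1) {a : ℝ} (ha : 0 < a) :
    ∑ x, μ x * w x * (1 - Real.log (μ x)) ≤
      (∑ x, μ x * w x) * (Real.log (Fintype.card o) - Real.log a) + a := by
  have hd : (0 : ℝ) < Fintype.card o := by exact_mod_cast Fintype.card_pos
  set d := (Fintype.card o : ℝ)
  have hterm : ∀ x, μ x * w x * (1 - Real.log (μ x)) ≤
      μ x * w x * (Real.log d - Real.log a) + a / d := by
    intro x
    rcases (hμ0 x).eq_or_lt with h | h
    · rw [← h]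
      simp only [zero_mul, zero_add]
      positivity
    · have h1 := Real.log_le_sub_one_of_pos (div_pos (div_pos ha hd) h)
      rw [Real.log_div (by positivity) h.ne', Real.log_div ha.ne' hd.ne'] at h1
      have h2 := mul_le_mul_of_nonneg_left h1 (mul_nonneg h.le (hw0 x))
      have h3 : μ x * w x * (a / d / μ x - 1) = w x * (a / d) - μ x * w x := by
        field_simp
      have h4 : w x * (a / d) ≤ a / d := mul_le_of_le_one_left (by positivity) (hw1 x)
      nlinarith
  refine (Finset.sum_le_sum fun x _ => hterm x).trans_eq ?_
  rw [Finset.sum_add_distrib, ← Finset.sum_mul, Finset.sum_const, Finset.card_univ, nsmul_eq_mul]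
  rw [mul_div_cancel₀ a hd.ne']

lemma sum_negMulLog_le_log_card [Nonempty o] {μ : o → ℝ} (hμ0 : ∀ x, 0 ≤ μ x)
    (hμ1 : ∑ x, μ x = 1) : ∑ x, Real.negMulLog (μ x) ≤ Real.log (Fintype.card o) := by
  have h := sum_mul_neg_log_le (w := fun _ => 1) hμ0 (fun _ => zero_le_one) (fun _ => le_rfl)
    (zero_lt_one' ℝ)
  simp only [mul_one, hμ1, Real.log_one, sub_zero, one_mul, mul_sub, Finset.sum_sub_distrib] at h
  have e : ∑ x, Real.negMulLog (μ x) = -∑ x, μ x * Real.log (μ x) := by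
    rw [← Finset.sum_neg_distrib]
    exact Finset.sum_congr rfl fun x _ => by rw [Real.negMulLog, neg_mul]
  linarith

lemma le_sqrt_mul_add_of_le {χ L ε : ℝ} (hε : 0 ≤ ε) (hL : 0 ≤ L) (h1 : χ ≤ L)
    (h2 : χ ≤ ε * (L + 2 * Real.log 2) + 1 / 4) :
    χ ≤ Real.sqrt (2 * ε) * L + Real.log 2 / Real.exp 1 := by
  have hs0 := Real.sqrt_nonneg (2 * ε)
  have hs := Real.sq_sqrt (show 0 ≤ 2 * ε by linarith)
  set s := Real.sqrt (2 * ε)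
  have hl1 := Real.log_two_gt_d9
  have hl2 := Real.log_two_lt_d9
  have he : (0.2549 : ℝ) ≤ Real.log 2 / Real.exp 1 := by
    rw [le_div_iff₀ (Real.exp_pos 1)]
    nlinarith [Real.exp_one_lt_d9]
  rcases le_or_gt 1 s with h | h
  · nlinarith
  · have hε' : ε = s ^ 2 / 2 := by linarith
    have hd : 0 < 1 - ε := by nlinarith
    have h3 : (1 - s) * χ ≤ (1 - s) * (ε * (L + 2 * Real.log 2) + 1 / 4) :=
      mul_le_mul_of_nonneg_left h2 (by linarith)
    have hse : ε ≤ s := by nlinarith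
    have h4 : (s - ε) * χ ≤ (s - ε) * L := mul_le_mul_of_nonneg_left h1 (by linarith)
    have hpoly : (1 - s) * (s ^ 2 * Real.log 2 + 1 / 4) ≤ (1 - s ^ 2 / 2) * 0.2549 := by
      have h5 : (1 - s) * (s ^ 2 * Real.log 2) ≤ (1 - s) * (s ^ 2 * 0.6932) := by
        have : 0 ≤ 1 - s := by linarith
        gcongr
        linarith
      nlinarith [mul_nonneg hs0 (sq_nonneg (s - 0.58)), sq_nonneg (s - 0.58), mul_nonneg hs0 hs0]
    have h6 : (1 - ε) * χ ≤ (1 - ε) * (s * L + Real.log 2 / Real.exp 1) := by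
      have h7 : (1 - s ^ 2 / 2) * 0.2549 ≤ (1 - ε) * (Real.log 2 / Real.exp 1) := by
        rw [← hε']
        exact mul_le_mul_of_nonneg_left he hd.le
      have h8 : (1 - s) * (ε * (L + 2 * Real.log 2) + 1 / 4) =
          (1 - s) * ε * L + (1 - s) * (s ^ 2 * Real.log 2 + 1 / 4) := by
        rw [hε']
        ring
      have h9 : (1 - ε) * χ = (1 - s) * χ + (s - ε) * χ := by ring
      have h10 : (1 - ε) * (s * L) = (1 - s) * ε * L + (s - ε) * L := by ring
      rw [mul_add, h10, h9]
      linarith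
    exact le_of_mul_le_mul_left h6 hd

variable {n : Type*} [Fintype n] [DecidableEq n]

/-- The Holevo quantity of an ensemble of positive definite states, in nats. -/
lemma holevo_le_of_posDef {μ : o → ℝ} (hμ0 : ∀ x, 0 ≤ μ x) (hμ1 : ∑ x, μ x = 1)
    {ρ : o → Matrix n n ℂ} (hρ : ∀ x, (ρ x).PosDef) (hρ1 : ∀ x, (ρ x).trace = 1)
    {ε : ℝ} (hε : ∑ x, μ x * traceDist (ρ x) (∑ y, μ y • ρ y) ≤ ε) :
    ∑ i, Real.negMulLog (eigs (∑ y, μ y • ρ y) i) - ∑ x, μ x * ∑ i, Real.negMulLog (eigs (ρ x) i) ≤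
      Real.sqrt (2 * ε) * Real.log (Fintype.card o) + Real.log 2 / Real.exp 1 := by
  classical
  have hne : Nonempty o := by
    by_contra h
    rw [not_nonempty_iff] at h
    simp at hμ1
  set σ := ∑ y, μ y • ρ y with hσ
  obtain ⟨x₀, hx₀⟩ : ∃ x, 0 < μ x := by
    by_contra! h
    have := Finset.sum_nonpos fun x (_ : x ∈ Finset.univ) => h x
    linarith
  have hsplit : ∀ x, σ = μ x • ρ x + ∑ y ∈ Finset.univ.erase x, μ y • ρ y := fun x =>
    (Finset.add_sum_erase _ (fun y => μ y • ρ y) (Finset.mem_univ x)).symm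
  have hrest : ∀ x, (∑ y ∈ Finset.univ.erase x, μ y • ρ y).PosSemidef := fun x =>
    Matrix.posSemidef_sum _ fun y _ => (hρ y).posSemidef.smul (hμ0 y)
  have hσpos : σ.PosDef := by
    rw [hsplit x₀]
    exact ((hρ x₀).smul hx₀).add_posSemidef (hrest x₀)
  have hσ1 : σ.trace = 1 := by
    rw [hσ, Matrix.trace_sum]
    simp only [Matrix.trace_smul, hρ1]
    simp only [Complex.real_smul, mul_one]
    exact_mod_cast hμ1
  let D : o → ℝ := fun x =>
    (ρ x * cfc Real.log (ρ x)).trace.re - (ρ x * cfc Real.log σ).trace.re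
  have hχ : ∑ i, Real.negMulLog (eigs σ i) - ∑ x, μ x * ∑ i, Real.negMulLog (eigs (ρ x) i) =
      ∑ x, μ x * D x := by
    have e : ∀ L : Matrix n n ℂ, (σ * L).trace.re = ∑ x, μ x * (ρ x * L).trace.re := by
      intro L
      rw [hσ, Finset.sum_mul, Matrix.trace_sum, Complex.re_sum]
      refine Finset.sum_congr rfl fun x _ => ?_
      rw [Matrix.smul_mul, Matrix.trace_smul, Complex.smul_re, smul_eq_mul]
    rw [sum_negMulLog_eigs hσpos.1, e]
    simp only [sum_negMulLog_eigs (hρ _).1, D, mul_sub, Finset.sum_sub_distrib, mul_neg,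
      Finset.sum_neg_distrib]
    ring
  set δ : o → ℝ := fun x => traceDist (ρ x) σ with hδ
  have hδ0 : ∀ x, 0 ≤ δ x := by
    intro x
    simp only [hδ, traceDist]
    positivity
  have hdom : ∀ x, 0 < μ x → ((μ x)⁻¹ • σ - ρ x).PosSemidef := by
    intro x hx
    have h : (μ x)⁻¹ • σ - ρ x = (μ x)⁻¹ • ∑ y ∈ Finset.univ.erase x, μ y • ρ y := by
      rw [hsplit x, smul_add, inv_smul_smul₀ hx.ne', add_sub_cancel_left]
    rw [h]
    exact (hrest x).smul (inv_nonneg.2 hx.le)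
  have hD1 : ∀ x, μ x * D x ≤ Real.negMulLog (μ x) := by
    intro x
    rcases (hμ0 x).eq_or_lt with h | h
    · rw [← h]
      simp
    · have h1 := relEntropy_le_log (hρ x) hσpos (hρ1 x) (inv_pos.2 h) (hdom x h)
      rw [Real.log_inv] at h1
      rw [Real.negMulLog, neg_mul, ← mul_neg]
      exact mul_le_mul_of_nonneg_left h1 h.le
  have hD2 : ∀ x, μ x * D x ≤ μ x * min (δ x) 1 * (1 - Real.log (μ x)) := by
    intro x
    rcases (hμ0 x).eq_or_lt with h | h
    · rw [← h]
      simp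
    · have hμx : μ x ≤ 1 := hμ1 ▸ Finset.single_le_sum (fun y _ => hμ0 y) (Finset.mem_univ x)
      have h1 := relEntropy_le_log (hρ x) hσpos (hρ1 x) (inv_pos.2 h) (hdom x h)
      have h2 := relEntropy_le_traceDist (hρ x) hσpos (hρ1 x) hσ1 ((one_le_inv₀ h).2 hμx)
        (hdom x h)
      rw [Real.log_inv] at h1 h2
      rw [mul_assoc]
      refine mul_le_mul_of_nonneg_left ?_ h.le
      rcases min_cases (δ x) 1 with ⟨hm, _⟩ | ⟨hm, _⟩ <;> rw [hm]
      · calc D x ≤ δ x * (-Real.log (μ x) + 1) := h2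
          _ = _ := by ring
      · calc D x ≤ -Real.log (μ x) := h1
          _ ≤ _ := by linarith
  rw [hχ]
  have hL : 0 ≤ Real.log (Fintype.card o) := Real.log_natCast_nonneg _
  have hε0 : 0 ≤ ε := (Finset.sum_nonneg fun x _ => mul_nonneg (hμ0 x) (hδ0 x)).trans hε
  refine le_sqrt_mul_add_of_le hε0 hL
    ((Finset.sum_le_sum fun x _ => hD1 x).trans (sum_negMulLog_le_log_card hμ0 hμ1)) ?_
  refine (Finset.sum_le_sum fun x _ => hD2 x).trans ?_
  refine (sum_mul_neg_log_le hμ0 (fun x => le_min (hδ0 x) zero_le_one)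
    (fun x => min_le_right _ _) (show (0 : ℝ) < 1 / 4 by norm_num)).trans ?_
  have h4 : Real.log (1 / 4 : ℝ) = -(2 * Real.log 2) := by
    rw [one_div, Real.log_inv, show (4 : ℝ) = 2 ^ 2 by norm_num, Real.log_pow]
    norm_num
  have hle : ∑ x, μ x * min (δ x) 1 ≤ ε :=
    (Finset.sum_le_sum fun x _ => mul_le_mul_of_nonneg_left (min_le_left _ _) (hμ0 x)).trans hε
  rw [h4, sub_neg_eq_add]
  gcongr

/-- The Holevo quantity of an ensemble close to its average, in nats. -/
lemma holevo_le {μ : o → ℝ} (hμ0 : ∀ x, 0 ≤ μ x) (hμ1 : ∑ x, μ x = 1)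
    {ρ : o → Matrix n n ℂ} (hρ : ∀ x, IsDensity (ρ x))
    {ε : ℝ} (hε : ∑ x, μ x * traceDist (ρ x) (∑ y, μ y • ρ y) ≤ ε) :
    ∑ i, Real.negMulLog (eigs (∑ y, μ y • ρ y) i) - ∑ x, μ x * ∑ i, Real.negMulLog (eigs (ρ x) i) ≤
      Real.sqrt (2 * ε) * Real.log (Fintype.card o) + Real.log 2 / Real.exp 1 := by
  have hne : Nonempty o := by
    by_contra h
    rw [not_nonempty_iff] at h
    simp at hμ1
  have hn : Nonempty n := by
    by_contra h
    rw [not_nonempty_iff] at h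
    have := (hρ hne.some).2
    simp [Matrix.trace] at this
  have hd : (0 : ℝ) < Fintype.card n := by exact_mod_cast Fintype.card_pos
  set d := (Fintype.card n : ℝ)
  set σ := ∑ y, μ y • ρ y with hσ
  have hσh : σ.IsHermitian :=
    (Matrix.posSemidef_sum _ fun y _ => (hρ y).1.smul (hμ0 y)).1
  let R : ℝ → Matrix n n ℂ → Matrix n n ℂ := fun κ A => (1 - κ) • A + (κ / d) • 1
  have hRσ : ∀ κ, ∑ y, μ y • R κ (ρ y) = R κ σ := by
    intro κ
    simp only [R, smul_add, Finset.sum_add_distrib, smul_comm _ (1 - κ)]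
    rw [← Finset.smul_sum, ← Finset.sum_smul, hμ1, one_smul]
  have hmain : ∀ κ, 0 < κ → κ < 1 →
      ∑ i, Real.negMulLog ((1 - κ) * eigs σ i + κ / d) -
        ∑ x, μ x * ∑ i, Real.negMulLog ((1 - κ) * eigs (ρ x) i + κ / d) ≤
      Real.sqrt (2 * ε) * Real.log (Fintype.card o) + Real.log 2 / Real.exp 1 := by
    intro κ h0 h1
    have hpd : ∀ x, (R κ (ρ x)).PosDef := fun x =>
      Matrix.PosDef.posSemidef_add ((hρ x).1.smul (sub_pos.2 h1).le)
        (Matrix.PosDef.one.smul (div_pos h0 hd))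
    have htr : ∀ x, (R κ (ρ x)).trace = 1 := by
      intro x
      have : (κ / d : ℝ) * d = κ := by field_simp
      have h' : ((κ / d : ℝ) : ℂ) * (Fintype.card n : ℂ) = κ := by exact_mod_cast this
      simp only [R, Matrix.trace_add, Matrix.trace_smul, (hρ x).2, Matrix.trace_one,
        Complex.real_smul, h']
      push_cast
      ring
    have hκ := holevo_le_of_posDef hμ0 hμ1 hpd htr (ε := ε) ?_
    · rw [hRσ κ] at hκ
      simp only [R] at hκ
      rw [sum_eigs_affine hσh] at hκ
      simpa only [sum_eigs_affine (hρ _).1.1] using hκ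
    · refine le_trans (Finset.sum_le_sum fun x _ => mul_le_mul_of_nonneg_left ?_ (hμ0 x)) hε
      rw [hRσ κ]
      simp only [R]
      rw [traceDist_smul_add_smul_one (hρ x).1.1 hσh (sub_pos.2 h1).le]
      refine mul_le_of_le_one_left ?_ (by linarith)
      rw [traceDist]
      positivity
  have hcont : Continuous fun κ : ℝ => ∑ i, Real.negMulLog ((1 - κ) * eigs σ i + κ / d) -
      ∑ x, μ x * ∑ i, Real.negMulLog ((1 - κ) * eigs (ρ x) i + κ / d) := by
    have hc := Real.continuous_negMulLog
    fun_prop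
  have hlim := le_of_tendsto (hcont.tendsto 0 |>.mono_left
    (nhdsWithin_le_nhds (s := Set.Ioi 0))) (by
      filter_upwards [Ioo_mem_nhdsGT (zero_lt_one' ℝ)] with κ hκ
      exact hmain κ hκ.1 hκ.2)
  simpa using hlim

end Holevo

section ClassicalQuantum

variable {o n : Type*} [DecidableEq o]

lemma sum_smul_outerPr_kronecker [Fintype o] (μ : o → ℝ) (ρ : o → Matrix n n ℂ) :
    ∑ x, μ x • (outerPr (stdb x) ⊗ₖ ρ x) = cqMat fun x => μ x • ρ x := by
  ext ⟨x, i⟩ ⟨y, j⟩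
  rw [Matrix.sum_apply, cqMat_apply, Finset.sum_eq_single x]
  · by_cases h : x = y
    · simp [outerPr, stdb, h]
    · simp [outerPr, stdb, h, Ne.symm h]
  · intro z _ hz
    simp [outerPr, stdb, hz.symm]
  · simp

lemma ptraceL_cqMat [Fintype o] (M : o → Matrix n n ℂ) : ptraceL (cqMat M) = ∑ x, M x := by
  ext i j
  simp [ptraceL, cqMat_apply, Matrix.sum_apply]

lemma ptraceR_cqMat [Fintype n] (M : o → Matrix n n ℂ) :
    ptraceR (cqMat M) = diagonal fun x => (M x).trace := by
  ext x y
  by_cases h : x = y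
  · subst h
    simp [ptraceR, cqMat_apply, Matrix.trace]
  · simp [ptraceR, cqMat_apply, h]

lemma cqMat_sub_diagonal_kronecker (M : o → Matrix n n ℂ) (v : o → ℂ) (σ : Matrix n n ℂ) :
    cqMat M - diagonal v ⊗ₖ σ = cqMat fun x => M x - v x • σ := by
  ext ⟨x, i⟩ ⟨y, j⟩
  by_cases h : x = y
  · subst h
    simp [cqMat_apply]
  · simp [cqMat_apply, h]

end ClassicalQuantum

/-- If a cq-state `ρ_{XB} = Σ_x μ_x |x⟩⟨x| ⊗ ρ_B^x` is ε-close to the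
product of its marginals, then `S(X|B) ≥ S(X) - √(2ε) log₂ d - 1/e`. -/
theorem cond_entropy_of_almost_product
    {d dB : ℕ} (μ : Fin d → ℝ) (hμ0 : ∀ x, 0 ≤ μ x) (hμ1 : ∑ x, μ x = 1)
    (ρB : Fin d → Matrix (Fin dB) (Fin dB) ℂ) (hρB : ∀ x, IsDensity (ρB x))
    (ε : ℝ)
    (ρXB : Matrix (Fin d × Fin dB) (Fin d × Fin dB) ℂ)
    (hXB : ρXB = ∑ x, μ x • (outerPr (stdb x) ⊗ₖ ρB x))
    (hε : traceDist ρXB (ptraceR ρXB ⊗ₖ ptraceL ρXB) ≤ ε) :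
    vnEntropy ρXB - vnEntropy (ptraceL ρXB)
      ≥ vnEntropy (ptraceR ρXB) - Real.sqrt (2 * ε) * Real.logb 2 d - 1 / Real.exp 1 := by
  have hρh : ∀ x, (ρB x).IsHermitian := fun x => (hρB x).1.1
  set σ := ∑ x, μ x • ρB x with hσ
  have hσh : σ.IsHermitian :=
    (Matrix.posSemidef_sum _ fun y _ => (hρB y).1.smul (hμ0 y)).1
  have hsmul : ∀ x, (μ x • ρB x).IsHermitian := fun x => ((hρB x).1.smul (hμ0 x)).1
  rw [sum_smul_outerPr_kronecker] at hXB
  have hL : ptraceL ρXB = σ := by rw [hXB, ptraceL_cqMat]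
  have hR : ptraceR ρXB = diagonal fun x => (μ x : ℂ) := by
    rw [hXB, ptraceR_cqMat]
    congr 1
    funext x
    rw [Matrix.trace_smul, (hρB x).2, Complex.real_smul, mul_one]
  have hdist : ∑ x, μ x * traceDist (ρB x) σ ≤ ε := by
    refine le_trans (le_of_eq ?_) hε
    have hblock : ∀ x, μ x • ρB x - (μ x : ℂ) • σ = μ x • (ρB x - σ) := by
      intro x
      rw [smul_sub, Complex.coe_smul]
    rw [hL, hR, hXB, traceDist, cqMat_sub_diagonal_kronecker]
    simp_rw [hblock]
    rw [sum_eigs_cqMat (fun x => ?_) (fun y => |y|), Finset.mul_sum]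
    · refine Finset.sum_congr rfl fun x _ => ?_
      rw [sum_eigs_smul ((hρh x).sub hσh) (fun y => |y|), traceDist]
      simp_rw [abs_mul, abs_of_nonneg (hμ0 x), ← Finset.mul_sum]
      ring
    · rw [← hblock, Complex.coe_smul]
      exact (hsmul x).sub (by rw [IsHermitian, conjTranspose_smul, hσh, star_trivial])
  have hXBent : ∑ p, Real.negMulLog (eigs ρXB p) =
      ∑ x, Real.negMulLog (μ x) + ∑ x, μ x * ∑ i, Real.negMulLog (eigs (ρB x) i) := by
    rw [hXB, sum_eigs_cqMat hsmul, ← Finset.sum_add_distrib]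
    refine Finset.sum_congr rfl fun x _ => ?_
    rw [sum_eigs_smul (hρh x)]
    simp_rw [Real.negMulLog_mul]
    rw [Finset.sum_add_distrib, ← Finset.sum_mul, sum_eigs_eq_trace (hρh x), (hρB x).2,
      ← Finset.mul_sum, Complex.one_re, one_mul]
  have h := holevo_le hμ0 hμ1 hρB hdist
  have h2 : 0 < Real.log 2 := Real.log_pos one_lt_two
  rw [vnEntropy_eq, vnEntropy_eq, vnEntropy_eq, hXBent, hL, hR, sum_eigs_diagonal, Real.logb,
    ge_iff_le]
  rw [Fintype.card_fin, ← hσ] at h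
  have h' := div_le_div_of_nonneg_right h h2.le
  rw [sub_div, add_div, div_div, mul_comm (Real.exp 1), ← div_div, div_self h2.ne', mul_div_assoc]
    at h'
  rw [add_div]
  linarith
end
end

section
/- Let ρ_U be a density operator on ℂ^d, let {E_z}_{z∈𝒵} (𝒵 finite) be a trace-preserving measurement on ℂ^d, let ρ_Ũ := Σ_{z∈𝒵} E_z ρ_U E_z† be the post-measurement state, and let Z be the classical outcome with distribution P_Z(z) := tr(E_z ρ_U E_z†). Then for all ε, ε' > 0: S_0^{ε+ε'}(ρ_Ũ) ≤ S_0^ε(ρ_U) + H_0^{ε'}(P_Z). -/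
open scoped Matrix Kronecker BigOperators ComplexOrder
open Matrix

noncomputable section

/-- A finite family of reals has, for each admissible size `m`, a set of `m` largest members. -/
theorem exists_finset_card_eq_forall_le {n : Type*} [Fintype n] [DecidableEq n] (f : n → ℝ)
    (m : ℕ) (hm : m ≤ Fintype.card n) :
    ∃ A : Finset n, A.card = m ∧ ∀ i ∈ A, ∀ j ∉ A, f j ≤ f i := by
  induction m with
  | zero => exact ⟨∅, by simp⟩
  | succ m ih =>
    obtain ⟨A, hA, hle⟩ := ih (by omega)
    have hne : (Aᶜ).Nonempty := by
      rw [← Finset.card_pos, Finset.card_compl]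
      omega
    obtain ⟨k, hk, hmax⟩ := Finset.exists_max_image Aᶜ f hne
    rw [Finset.mem_compl] at hk
    refine ⟨insert k A, by rw [Finset.card_insert_of_notMem hk, hA], ?_⟩
    intro i hi j hj
    simp only [Finset.mem_insert, not_or] at hi hj
    rcases hi with rfl | hi
    · exact hmax j (Finset.mem_compl.2 hj.2)
    · exact hle i hi j hj.2

/-- A weighted sum with weights in `[0, 1]` of total at most `m` is bounded by the sum of
some `m` members of the family. -/
theorem exists_finset_sum_mul_le {n : Type*} [Fintype n] (f p : n → ℝ)
    (hf : ∀ i, 0 ≤ f i) (hp₀ : ∀ i, 0 ≤ p i) (hp₁ : ∀ i, p i ≤ 1) (m : ℕ)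
    (hp : ∑ i, p i ≤ m) :
    ∃ A : Finset n, A.card ≤ m ∧ ∑ i, f i * p i ≤ ∑ i ∈ A, f i := by
  classical
  rcases le_or_gt (Fintype.card n) m with hm | hm
  · exact ⟨Finset.univ, hm, Finset.sum_le_sum fun i _ => mul_le_of_le_one_right (hf i) (hp₁ i)⟩
  obtain ⟨A, hA, hle⟩ := exists_finset_card_eq_forall_le f m hm.le
  have hne : (Aᶜ).Nonempty := by
    rw [← Finset.card_pos, Finset.card_compl]
    omega
  obtain ⟨k, hk, hmax⟩ := Finset.exists_max_image Aᶜ f hne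
  rw [Finset.mem_compl] at hk
  refine ⟨A, hA.le, ?_⟩
  have hterm : ∀ i, (f i - f k) * p i ≤ if i ∈ A then f i - f k else 0 := by
    intro i
    split_ifs with hi
    · exact mul_le_of_le_one_right (sub_nonneg.2 (hle i hi k hk)) (hp₁ i)
    · exact mul_nonpos_of_nonpos_of_nonneg
        (sub_nonpos.2 (hmax i (Finset.mem_compl.2 hi))) (hp₀ i)
  calc ∑ i, f i * p i = ∑ i, (f i - f k) * p i + f k * ∑ i, p i := by
        rw [Finset.mul_sum, ← Finset.sum_add_distrib]
        exact Finset.sum_congr rfl fun i _ => by ring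
    _ ≤ (∑ i, if i ∈ A then f i - f k else 0) + f k * m :=
        add_le_add (Finset.sum_le_sum fun i _ => hterm i) (mul_le_mul_of_nonneg_left hp (hf k))
    _ = ∑ i ∈ A, f i := by
        rw [Finset.sum_ite_mem, Finset.univ_inter, Finset.sum_sub_distrib, Finset.sum_const, hA,
          nsmul_eq_mul]
        ring

/-- If the quadratic forms `∑ i, μ i |v i⟩⟨v i|` (in an orthonormal basis `v`) and
`∑ a, c a |w a⟩⟨w a|` agree, then outside of some `|B|` indices the weights `μ` sum to at most
the trace of the terms `a ∉ B`. -/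
theorem exists_finset_sum_compl_le {V n α : Type*} [NormedAddCommGroup V]
    [InnerProductSpace ℂ V] [Fintype n] [DecidableEq n] [Fintype α] [DecidableEq α]
    (v : OrthonormalBasis n ℂ V) (μ : n → ℝ) (hμ : ∀ i, 0 ≤ μ i)
    (c : α → ℝ) (hc : ∀ a, 0 ≤ c a) (w : α → V)
    (h : ∀ x, ∑ i, μ i * ‖inner ℂ (v i) x‖ ^ 2 = ∑ a, c a * ‖inner ℂ (w a) x‖ ^ 2)
    (B : Finset α) :
    ∃ A : Finset n, A.card ≤ B.card ∧ ∑ i ∈ Aᶜ, μ i ≤ ∑ a ∈ Bᶜ, c a * ‖w a‖ ^ 2 := by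
  let W := Submodule.span ℂ (Set.range fun a : B => w a)
  have : FiniteDimensional ℂ V := v.toBasis.finiteDimensional_of_finite
  let b := stdOrthonormalBasis ℂ W
  have hW : Module.finrank ℂ W ≤ B.card := by
    simpa [Set.finrank] using finrank_range_le_card (R := ℂ) fun a : B => w a
  have hb : Orthonormal ℂ fun k => (b k : V) :=
    b.orthonormal.comp_linearIsometry W.subtypeₗᵢ
  let p : n → ℝ := fun i => ∑ k, ‖inner ℂ (b k : V) (v i)‖ ^ 2
  have hp₁ : ∀ i, p i ≤ 1 := fun i => by
    simpa using hb.sum_inner_products_le (v i) (s := Finset.univ)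
  have hpsum : ∑ i, p i ≤ B.card := by
    simp only [p]
    rw [Finset.sum_comm]
    simp only [v.sum_sq_norm_inner_left, hb.1]
    simpa using hW
  obtain ⟨A, hA, hle⟩ := exists_finset_sum_mul_le μ p hμ
    (fun i => Finset.sum_nonneg fun k _ => by positivity) hp₁ _ hpsum
  refine ⟨A, hA, ?_⟩
  have htotal : ∑ i, μ i = ∑ a, c a * ‖w a‖ ^ 2 := by
    have hdiag : ∀ j, μ j = ∑ a, c a * ‖inner ℂ (w a) (v j)‖ ^ 2 := fun j => by
      rw [← h (v j)]
      simp [orthonormal_iff_ite.1 v.orthonormal, apply_ite]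
    rw [Finset.sum_congr rfl fun j _ => hdiag j, Finset.sum_comm]
    simp only [← Finset.mul_sum, v.sum_sq_norm_inner_left]
  have hproj : ∑ a ∈ B, c a * ‖w a‖ ^ 2 ≤ ∑ i, μ i * p i := by
    calc ∑ a ∈ B, c a * ‖w a‖ ^ 2
        = ∑ a ∈ B, c a * ∑ k, ‖inner ℂ (w a) (b k : V)‖ ^ 2 := by
          refine Finset.sum_congr rfl fun a ha => ?_
          have := b.sum_sq_norm_inner_left
            ⟨w a, Submodule.subset_span (Set.mem_range_self (⟨a, ha⟩ : B))⟩
          simp only [Submodule.coe_inner, Submodule.coe_norm] at this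
          rw [this]
      _ ≤ ∑ a, c a * ∑ k, ‖inner ℂ (w a) (b k : V)‖ ^ 2 :=
          Finset.sum_le_sum_of_subset_of_nonneg (Finset.subset_univ _) fun a _ _ =>
            mul_nonneg (hc a) (Finset.sum_nonneg fun k _ => by positivity)
      _ = ∑ i, μ i * p i := by
          simp only [p, Finset.mul_sum]
          rw [Finset.sum_comm]
          simp only [← h]
          rw [Finset.sum_comm]
          simp only [norm_inner_symm]
  have h₁ := Finset.sum_add_sum_compl A μ
  have h₂ := Finset.sum_add_sum_compl B fun a => c a * ‖w a‖ ^ 2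
  linarith

/-- The quadratic form of a Hermitian matrix in its eigenbasis. -/
theorem re_inner_toEuclideanLin_eq_sum {n : Type*} [Fintype n] [DecidableEq n]
    {A : Matrix n n ℂ} (hA : A.IsHermitian) (x : EuclideanSpace ℂ n) :
    (inner ℂ x (toEuclideanLin A x)).re
      = ∑ i, hA.eigenvalues i * ‖inner ℂ (hA.eigenvectorBasis i) x‖ ^ 2 := by
  have heig : ∀ i, toEuclideanLin A (hA.eigenvectorBasis i)
      = (hA.eigenvalues i : ℂ) • hA.eigenvectorBasis i := fun i => by
    ext j
    simpa using congrFun (hA.mulVec_eigenvectorBasis i) j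
  rw [← hA.eigenvectorBasis.sum_inner_mul_inner, Complex.re_sum]
  refine Finset.sum_congr rfl fun i _ => ?_
  rw [← isSymmetric_toEuclideanLin_iff.2 hA, heig, inner_smul_left, mul_left_comm,
    ← inner_conj_symm x, Complex.conj_mul', Complex.conj_ofReal]
  norm_cast

/-- The quadratic form of `E A Eᴴ` in terms of the images under `E` of the eigenbasis of `A`. -/
theorem re_inner_toEuclideanLin_conj_eq_sum {n : Type*} [Fintype n] [DecidableEq n]
    {A : Matrix n n ℂ} (hA : A.IsHermitian) (E : Matrix n n ℂ) (x : EuclideanSpace ℂ n) :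
    (inner ℂ x (toEuclideanLin (E * A * Eᴴ) x)).re
      = ∑ i, hA.eigenvalues i
          * ‖inner ℂ (toEuclideanLin E (hA.eigenvectorBasis i)) x‖ ^ 2 := by
  have hadj : ∀ y : EuclideanSpace ℂ n,
      inner ℂ y (toEuclideanLin Eᴴ x) = inner ℂ (toEuclideanLin E y) x := fun y => by
    rw [toEuclideanLin_conjTranspose_eq_adjoint, LinearMap.adjoint_inner_right]
  have hform : inner ℂ x (toEuclideanLin (E * A * Eᴴ) x)
      = inner ℂ (toEuclideanLin Eᴴ x) (toEuclideanLin A (toEuclideanLin Eᴴ x)) := by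
    rw [toEuclideanLin_conjTranspose_eq_adjoint, LinearMap.adjoint_inner_left,
      ← toEuclideanLin_conjTranspose_eq_adjoint, toLpLin_mul_same, toLpLin_mul_same]
    rfl
  rw [hform, re_inner_toEuclideanLin_eq_sum hA]
  simp only [hadj]

/-- The trace of `E A Eᴴ` in terms of the images under `E` of the eigenbasis of `A`. -/
theorem re_trace_conj_eq_sum {n : Type*} [Fintype n] [DecidableEq n]
    {A : Matrix n n ℂ} (hA : A.IsHermitian) (E : Matrix n n ℂ) :
    (E * A * Eᴴ).trace.re
      = ∑ i, hA.eigenvalues i * ‖toEuclideanLin E (hA.eigenvectorBasis i)‖ ^ 2 := by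
  have hdiag : ∀ j, ((E * A * Eᴴ) j j).re
      = ∑ i, hA.eigenvalues i * ‖inner ℂ (toEuclideanLin E (hA.eigenvectorBasis i))
          (EuclideanSpace.basisFun n ℂ j)‖ ^ 2 := fun j => by
    rw [← re_inner_toEuclideanLin_conj_eq_sum]
    generalize E * A * Eᴴ = M
    simp [toLpLin_apply, EuclideanSpace.inner_single_left]
  rw [Matrix.trace, Complex.re_sum]
  simp only [Matrix.diag_apply, hdiag]
  rw [Finset.sum_comm]
  simp only [← Finset.mul_sum, (EuclideanSpace.basisFun n ℂ).sum_sq_norm_inner_left]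

/-- A trace-preserving measurement preserves the total squared norm of a vector. -/
theorem sum_norm_sq_toEuclideanLin_eq {n Z : Type*} [Fintype n] [DecidableEq n] [Fintype Z]
    (E : Z → Matrix n n ℂ) (hE : ∑ z, (E z)ᴴ * E z = 1) (x : EuclideanSpace ℂ n) :
    ∑ z, ‖toEuclideanLin (E z) x‖ ^ 2 = ‖x‖ ^ 2 := by
  have hz : ∀ z, (‖toEuclideanLin (E z) x‖ ^ 2 : ℂ)
      = inner ℂ x (toEuclideanLin ((E z)ᴴ * E z) x) := fun z => by
    rw [toLpLin_mul_same, LinearMap.comp_apply, toEuclideanLin_conjTranspose_eq_adjoint,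
      LinearMap.adjoint_inner_right, inner_self_eq_norm_sq_to_K]
    rfl
  have : (∑ z, (‖toEuclideanLin (E z) x‖ ^ 2 : ℂ)) = (‖x‖ ^ 2 : ℂ) := by
    rw [Finset.sum_congr rfl fun z _ => hz z, ← inner_sum, ← LinearMap.sum_apply, ← map_sum, hE,
      toLpLin_one, LinearMap.id_apply, inner_self_eq_norm_sq_to_K]
    rfl
  exact_mod_cast this

theorem logb_two_natCast_nonneg (m : ℕ) : 0 ≤ Real.logb 2 m := by
  rcases Nat.eq_zero_or_pos m with rfl | hm
  · simp
  · exact Real.logb_nonneg one_lt_two (by exact_mod_cast hm)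

theorem logb_two_natCast_mono {m k : ℕ} (h : m ≤ k) : Real.logb 2 m ≤ Real.logb 2 k := by
  rcases Nat.eq_zero_or_pos m with rfl | hm
  · simpa using logb_two_natCast_nonneg k
  · exact Real.logb_le_logb_of_le one_lt_two (by exact_mod_cast hm) (by exact_mod_cast h)

theorem logb_two_natCast_mul_le (m k : ℕ) :
    Real.logb 2 (m * k : ℕ) ≤ Real.logb 2 m + Real.logb 2 k := by
  rcases Nat.eq_zero_or_pos m with rfl | hm
  · simpa using logb_two_natCast_nonneg k
  rcases Nat.eq_zero_or_pos k with rfl | hk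
  · simpa using logb_two_natCast_nonneg m
  rw [Nat.cast_mul, Real.logb_mul (by positivity) (by positivity)]

/-- A set carrying all but `ε` of the weight bounds the smooth entropy of order 0. -/
theorem H0smooth_le_logb_card {X : Type*} [Fintype X] [DecidableEq X] {P : X → ℝ}
    (hP : ∀ x, 0 ≤ P x) {ε : ℝ} (A : Finset X) (hA : ∑ x ∈ Aᶜ, P x ≤ ε) :
    H0smooth P ε ≤ Real.logb 2 A.card := by
  let Q : X → ℝ := fun x => if x ∈ A then P x else 0
  have hQ : ∑ x, |P x - Q x| = ∑ x ∈ Aᶜ, P x := by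
    rw [← Finset.sum_add_sum_compl A, Finset.sum_eq_zero, zero_add]
    · refine Finset.sum_congr rfl fun x hx => ?_
      simp [Q, Finset.mem_compl.1 hx, abs_of_nonneg (hP x)]
    · intro x hx
      simp [Q, hx]
  have hcard : Nat.card {x // Q x ≠ 0} ≤ A.card := by
    rw [Nat.card_eq_fintype_card, Fintype.card_subtype]
    refine Finset.card_le_card fun x hx => ?_
    by_contra hxA
    simp [Q, hxA] at hx
  refine le_trans (csInf_le ⟨0, ?_⟩ ⟨Q, fun x => ?_, hQ.trans_le hA, rfl⟩)
    (logb_two_natCast_mono hcard)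
  · rintro _ ⟨_, _, _, rfl⟩
    exact logb_two_natCast_nonneg _
  · by_cases hx : x ∈ A <;> simp [Q, hx, hP x]

/-- A lower bound for all sets carrying all but `ε` of the weight is one for the smooth entropy
of order 0. -/
theorem le_H0smooth {X : Type*} [Fintype X] [DecidableEq X] {P : X → ℝ}
    (hP : ∀ x, 0 ≤ P x) {ε : ℝ} (hε : 0 ≤ ε) {r : ℝ}
    (h : ∀ A : Finset X, ∑ x ∈ Aᶜ, P x ≤ ε → r ≤ Real.logb 2 A.card) :
    r ≤ H0smooth P ε := by
  refine le_csInf ⟨_, P, hP, by simpa using hε, rfl⟩ ?_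
  rintro _ ⟨Q, -, hQ, rfl⟩
  have hcard : Nat.card {x // Q x ≠ 0} = (Finset.univ.filter fun x => Q x ≠ 0).card := by
    rw [Nat.card_eq_fintype_card, Fintype.card_subtype]
  rw [hcard]
  refine h _ (le_trans ?_ hQ)
  refine (Finset.sum_le_sum fun x hx => ?_).trans
    (Finset.sum_le_sum_of_subset_of_nonneg (Finset.subset_univ _) fun _ _ _ => abs_nonneg _)
  have hx : Q x = 0 := by simpa using hx
  simpa [hx] using le_abs_self (P x)

/-- For a trace-preserving measurement `{E_z}` applied to `ρ_U`, with
post-measurement state `ρ_Ũ = Σ_z E_z ρ E_z†` and outcome distribution `P_Z`,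
`S_0^{ε+ε'}(ρ_Ũ) ≤ S_0^ε(ρ_U) + H_0^{ε'}(P_Z)`. -/
theorem S0_of_measurement
    {d : ℕ} {Z : Type*} [Fintype Z]
    (ρ : Matrix (Fin d) (Fin d) ℂ) (hρ : IsDensity ρ)
    (E : Z → Matrix (Fin d) (Fin d) ℂ) (hE : ∑ z, (E z)ᴴ * E z = 1)
    (ε ε' : ℝ) (hε : 0 < ε) (hε' : 0 < ε') :
    S0smooth (∑ z, E z * ρ * (E z)ᴴ) (ε + ε')
      ≤ S0smooth ρ ε
        + H0smooth (fun z => (E z * ρ * (E z)ᴴ).trace.re) ε' := by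
  classical
  have hH : ρ.IsHermitian := hρ.1.isHermitian
  have hM : (∑ z, E z * ρ * (E z)ᴴ).PosSemidef :=
    posSemidef_sum _ fun z _ => hρ.1.mul_mul_conjTranspose_same (E z)
  have hμ := hρ.1.eigenvalues_nonneg
  have hP : ∀ z, (E z * ρ * (E z)ᴴ).trace.re
      = ∑ i, hH.eigenvalues i * ‖toEuclideanLin (E z) (hH.eigenvectorBasis i)‖ ^ 2 :=
    fun z => re_trace_conj_eq_sum hH (E z)
  have hterm : ∀ z i,
      0 ≤ hH.eigenvalues i * ‖toEuclideanLin (E z) (hH.eigenvectorBasis i)‖ ^ 2 :=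
    fun z i => mul_nonneg (hμ i) (by positivity)
  simp only [S0smooth, eigs, dif_pos hH, dif_pos hM.isHermitian]
  rw [← sub_le_iff_le_add]
  refine le_H0smooth hμ hε.le fun A hA => ?_
  rw [sub_le_comm]
  refine le_H0smooth (fun z => hP z ▸ Finset.sum_nonneg fun i _ => hterm z i) hε'.le
    fun B hB => ?_
  rw [sub_le_iff_le_add']
  obtain ⟨C, hC, hsum⟩ := exists_finset_sum_compl_le hM.isHermitian.eigenvectorBasis _
    hM.eigenvalues_nonneg (fun a : Fin d × Z => hH.eigenvalues a.1) (fun a => hμ a.1)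
    (fun a => toEuclideanLin (E a.2) (hH.eigenvectorBasis a.1))
    (fun x => by
      rw [← re_inner_toEuclideanLin_eq_sum, map_sum, LinearMap.sum_apply, inner_sum,
        Complex.re_sum, Fintype.sum_prod_type_right]
      exact Finset.sum_congr rfl fun z _ => re_inner_toEuclideanLin_conj_eq_sum hH (E z) x)
    (A ×ˢ B)
  rw [Finset.card_product] at hC
  refine (H0smooth_le_logb_card hM.eigenvalues_nonneg C (hsum.trans ?_)).trans
    ((logb_two_natCast_mono hC).trans (logb_two_natCast_mul_le _ _))
  have hsub : (A ×ˢ B)ᶜ ⊆ Aᶜ ×ˢ Finset.univ ∪ Finset.univ ×ˢ Bᶜ := fun a => by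
    simp only [Finset.mem_compl, Finset.mem_product, Finset.mem_union, Finset.mem_univ]
    tauto
  refine (Finset.sum_le_sum_of_subset_of_nonneg hsub fun a _ _ => hterm a.2 a.1).trans ?_
  refine (le_add_of_nonneg_right (Finset.sum_nonneg fun a _ => hterm a.2 a.1)).trans
    ((Finset.sum_union_inter).trans_le ?_)
  refine add_le_add ?_ ?_
  · rw [Finset.sum_product]
    simpa only [← Finset.mul_sum, sum_norm_sq_toEuclideanLin_eq E hE, OrthonormalBasis.norm_eq_one,
      one_pow, mul_one] using hA
  · rw [Finset.sum_product_right]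
    simpa only [hP] using hB
end
end

section
/- Let σ_1,…,σ_d be density operators on ℂ^{d_U}, and let |φ_1⟩,…,|φ_d⟩ ∈ ℂ^{d_U} ⊗ ℂ^{d_W} be purifications of σ_1,…,σ_d such that the partial traces tr_U(|φ_i⟩⟨φ_i|) have mutually orthogonal supports. Let 𝓔 be a completely positive trace-preserving map from d_U×d_U matrices to d_V×d_V matrices, and let P_i be the orthogonal projector onto the support of (𝓔 ⊗ id_W)(|φ_i⟩⟨φ_i|). Fix n = (n_1,…,n_d) ∈ ℕ^d with n_1+⋯+n_d = n, set λ_i := n_i/n, define |ψ⟩ := (1/√(n!)) Σ_{π∈S_n} U_π (|φ_1⟩^{⊗n_1} ⊗ ⋯ ⊗ |φ_d⟩^{⊗n_d}), |φ^λ⟩ := Σ_{i=1}^d √(λ_i) |φ_i⟩, F_0 := Σ_{π∈S_n} U_π (P_1^{⊗n_1} ⊗ ⋯ ⊗ P_d^{⊗n_d}) U_π†, and N := n! · Π_{i=1}^d λ_i^{n_i}. Then (𝓔 ⊗ id_W)^{⊗n}(|ψ⟩⟨ψ|) = (1/N) · F_0 · ((𝓔 ⊗ id_W)(|φ^λ⟩⟨φ^λ|))^{⊗n}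 · F_0†. -/
open scoped Matrix Kronecker BigOperators ComplexOrder
open Matrix

noncomputable section

/-- The matrix whose column `a` is the vector `A a *ᵥ v`, for a family of (Kraus) operators `A`. -/
def krausColumns {ι m k : Type*} [Fintype k] (A : ι → Matrix m k ℂ) (v : k → ℂ) :
    Matrix m ι ℂ :=
  Matrix.of fun x a => (A a *ᵥ v) x

theorem sum_kraus_outerPr {ι m k : Type*} [Fintype ι] [Fintype k]
    (A : ι → Matrix m k ℂ) (v : k → ℂ) :
    ∑ a, A a * outerPr v * (A a)ᴴ = krausColumns A v * (krausColumns A v)ᴴ := by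
  have h (a : ι) : A a * outerPr v * (A a)ᴴ = vecMulVec (A a *ᵥ v) (star (A a *ᵥ v)) := by
    change A a * vecMulVec v (star v) * (A a)ᴴ = _
    rw [mul_vecMulVec, vecMulVec_mul, star_mulVec]
  ext x y
  simp [h, Matrix.sum_apply, Matrix.mul_apply, vecMulVec_apply, krausColumns]

theorem krausColumns_sum_mul {κ ι m k : Type*} [Fintype κ] [Fintype k]
    (A : ι → Matrix m k ℂ) (c : κ → ℂ) (v : κ → k → ℂ) :
    krausColumns A (fun x => ∑ i, c i * v i x) = ∑ i, c i • krausColumns A (v i) := by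
  have h : (fun x => ∑ i, c i * v i x) = ∑ i, c i • v i := by ext x; simp
  ext x a
  simp [h, krausColumns, Matrix.sum_apply, mulVec_sum, mulVec_smul]

theorem tpow_mul_tpow {n : ℕ} {a b c : Type*} [Fintype b]
    (M : Fin n → Matrix a b ℂ) (L : Fin n → Matrix b c ℂ) :
    tpow M * tpow L = tpow fun k => M k * L k := by
  classical
  ext p q
  simp [tpow, Matrix.mul_apply, ← Finset.prod_mul_distrib, Finset.prod_univ_sum,
    Fintype.piFinset_univ]

theorem conjTranspose_tpow {n : ℕ} {a b : Type*} (M : Fin n → Matrix a b ℂ) :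
    (tpow M)ᴴ = tpow fun k => (M k)ᴴ := by
  ext p q
  simp [tpow]

theorem tpow_smul {n : ℕ} {a b : Type*} (c : Fin n → ℂ) (M : Fin n → Matrix a b ℂ) :
    (tpow fun k => c k • M k) = (∏ k, c k) • tpow M := by
  ext p q
  simp [tpow, Finset.prod_mul_distrib]

theorem tpow_mulVec_vpow {n : ℕ} {a b : Type*} [Fintype b]
    (M : Fin n → Matrix a b ℂ) (v : Fin n → b → ℂ) :
    tpow M *ᵥ vpow v = vpow fun k => M k *ᵥ v k := by
  classical
  ext p
  simp [tpow, vpow, mulVec, dotProduct, ← Finset.prod_mul_distrib, Finset.prod_univ_sum,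
    Fintype.piFinset_univ]

theorem krausColumns_tpow_vpow {n : ℕ} {ι m k : Type*} [Fintype k]
    (A : ι → Matrix m k ℂ) (v : Fin n → k → ℂ) :
    krausColumns (fun α : Fin n → ι => tpow fun i => A (α i)) (vpow v)
      = tpow fun i => krausColumns A (v i) := by
  ext p α
  simp only [krausColumns, of_apply, tpow_mulVec_vpow]
  simp [vpow, tpow]

theorem permMat_mulVec {n : ℕ} {a : Type*} [Fintype a] [DecidableEq a]
    (π : Equiv.Perm (Fin n)) (v : (Fin n → a) → ℂ) (p : Fin n → a) :
    (permMat π *ᵥ v) p = v (p ∘ π) := by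
  simp [permMat, mulVec, dotProduct]

theorem permMat_mulVec_vpow {n : ℕ} {a : Type*} [Fintype a] [DecidableEq a]
    (π : Equiv.Perm (Fin n)) (v : Fin n → a → ℂ) :
    permMat π *ᵥ vpow v = vpow fun k => v (π.symm k) := by
  ext p
  rw [permMat_mulVec]
  simp only [vpow, Function.comp_apply]
  exact Fintype.prod_equiv π _ _ (by simp)

theorem permMat_mul_tpow_mul_conjTranspose {n : ℕ} {a : Type*} [Fintype a] [DecidableEq a]
    (π : Equiv.Perm (Fin n)) (M : Fin n → Matrix a a ℂ) :
    permMat π * tpow M * (permMat π)ᴴ = tpow fun k => M (π.symm k) := by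
  ext p q
  simp only [permMat, tpow, Matrix.mul_apply, conjTranspose_apply, of_apply, apply_ite star,
    star_one, star_zero, mul_ite, ite_mul, one_mul, zero_mul, mul_one, mul_zero,
    Finset.sum_ite_eq', Finset.mem_univ, if_true, Function.comp_apply]
  exact Fintype.prod_equiv π _ _ (by simp)

/-- If the marginals on the second factor of two vectors have orthogonal supports, operators
acting on the first factor keep the vectors orthogonal. -/
theorem krausColumns_conjTranspose_mul_eq_zero {ι u v w : Type*} [Fintype u] [Fintype v]
    [Fintype w] [DecidableEq w] (K : ι → Matrix v u ℂ) (φ χ : u × w → ℂ)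
    (h : ptraceL (outerPr φ) * ptraceL (outerPr χ) = 0) :
    (krausColumns (fun a => K a ⊗ₖ (1 : Matrix w w ℂ)) φ)ᴴ *
      krausColumns (fun a => K a ⊗ₖ (1 : Matrix w w ℂ)) χ = 0 := by
  let X : Matrix u w ℂ := Matrix.of fun i j => star (φ (i, j))
  let Y : Matrix u w ℂ := Matrix.of fun i j => star (χ (i, j))
  have hX : ptraceL (outerPr φ) = Xᴴ * X := by
    ext i j; simp [ptraceL, outerPr, X, Matrix.mul_apply]
  have hY : ptraceL (outerPr χ) = Yᴴ * Y := by
    ext i j; simp [ptraceL, outerPr, Y, Matrix.mul_apply]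
  rw [hX, hY, conjTranspose_mul_self_mul_eq_zero, mul_conjTranspose_mul_self_eq_zero] at h
  have hcol (χ : u × w → ℂ) (x : v) (y : w) (a : ι) :
      krausColumns (fun a => K a ⊗ₖ (1 : Matrix w w ℂ)) χ (x, y) a
        = ∑ i, K a x i * χ (i, y) := by
    simp [krausColumns, mulVec, dotProduct, Fintype.sum_prod_type, Matrix.one_apply]
  have hXY (i j : u) : ∑ y, star (φ (i, y)) * χ (j, y) = 0 := by
    simpa [X, Y, Matrix.mul_apply] using congrFun (congrFun h i) j
  ext a b
  simp only [Matrix.mul_apply, conjTranspose_apply, Fintype.sum_prod_type, hcol, star_sum,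
    Finset.sum_mul_sum, Matrix.zero_apply]
  refine Finset.sum_eq_zero fun x _ => ?_
  rw [Finset.sum_comm]
  refine Finset.sum_eq_zero fun i _ => ?_
  rw [Finset.sum_comm]
  refine Finset.sum_eq_zero fun j _ => ?_
  calc ∑ y, star (K a x i * φ (i, y)) * (K b x j * χ (j, y))
      = star (K a x i) * K b x j * ∑ y, star (φ (i, y)) * χ (j, y) := by
        rw [Finset.mul_sum]
        exact Finset.sum_congr rfl fun y _ => by rw [star_mul']; ring
    _ = 0 := by rw [hXY, mul_zero]

/-- With purifications `φ_i` of density operators `σ_i` having mutually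
orthogonal `W`-supports, a CPTP map `𝓔` (given by Kraus operators `K`), support projectors
`P_i` of `(𝓔 ⊗ id_W)(|φ_i⟩⟨φ_i|)`, the symmetrized vector `ψ`, the averaged vector `φ^λ`,
the symmetrizing projector-sum `F₀`, and `N = n!·Π λ_i^{n_i}`, one has
`(𝓔 ⊗ id_W)^{⊗n}(|ψ⟩⟨ψ|) = (1/N) F₀ ((𝓔 ⊗ id_W)(|φ^λ⟩⟨φ^λ|))^{⊗n} F₀†`. -/
theorem symmetrized_state_eq_projected_product
    {d dU dV dW n : ℕ} {ι : Type*} [Fintype ι]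
    (σ : Fin d → Matrix (Fin dU) (Fin dU) ℂ) (hσ : ∀ i, IsDensity (σ i))
    (φ : Fin d → (Fin dU × Fin dW) → ℂ) (hφ : ∀ i, IsPurification (φ i) (σ i))
    (hortho : ∀ i j, i ≠ j → ptraceL (outerPr (φ i)) * ptraceL (outerPr (φ j)) = 0)
    (K : ι → Matrix (Fin dV) (Fin dU) ℂ) (hK : ∑ a, (K a)ᴴ * K a = 1)
    -- the channel 𝓔 ⊗ id_W
    (chanW : Matrix (Fin dU × Fin dW) (Fin dU × Fin dW) ℂ →
      Matrix (Fin dV × Fin dW) (Fin dV × Fin dW) ℂ)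
    (hchanW : chanW = fun M => ∑ a,
      (K a ⊗ₖ (1 : Matrix (Fin dW) (Fin dW) ℂ)) * M * (K a ⊗ₖ (1 : Matrix (Fin dW) (Fin dW) ℂ))ᴴ)
    -- the channel (𝓔 ⊗ id_W)^{⊗ n}
    (chanN : Matrix (Fin n → Fin dU × Fin dW) (Fin n → Fin dU × Fin dW) ℂ →
      Matrix (Fin n → Fin dV × Fin dW) (Fin n → Fin dV × Fin dW) ℂ)
    (hchanN : chanN = fun M => ∑ α : Fin n → ι,
      tpow (fun i => K (α i) ⊗ₖ (1 : Matrix (Fin dW) (Fin dW) ℂ)) * M *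
        (tpow (fun i => K (α i) ⊗ₖ (1 : Matrix (Fin dW) (Fin dW) ℂ)))ᴴ)
    -- support projectors P_i of (𝓔 ⊗ id_W)(|φ_i⟩⟨φ_i|)
    (P : Fin d → Matrix (Fin dV × Fin dW) (Fin dV × Fin dW) ℂ)
    (hPproj : ∀ i, (P i).IsHermitian ∧ P i * P i = P i)
    (hPsupp : ∀ i, P i * chanW (outerPr (φ i)) = chanW (outerPr (φ i)))
    (hPker : ∀ i (v : Fin dV × Fin dW → ℂ),
      chanW (outerPr (φ i)) *ᵥ v = 0 → P i *ᵥ v = 0)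
    -- the type (n₁, …, n_d) with Σ n_i = n, realized by a labelling f of the n sites
    (nv : Fin d → ℕ) (hnv : ∑ i, nv i = n)
    (f : Fin n → Fin d)
    (hf : ∀ i, (Finset.univ.filter fun k => f k = i).card = nv i)
    -- the (unnormalized) symmetrized vector ψ
    (ψ : (Fin n → Fin dU × Fin dW) → ℂ)
    (hψ : ψ = ((Real.sqrt n.factorial : ℂ))⁻¹ •
      ∑ π : Equiv.Perm (Fin n), permMat π *ᵥ vpow (fun k => φ (f k)))
    -- the vector φ^λ with λ_i = n_i / n
    (φlam : (Fin dU × Fin dW) → ℂ)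
    (hφlam : φlam = fun x => ∑ i, (Real.sqrt ((nv i : ℝ) / n) : ℂ) * φ i x)
    -- the operator F₀
    (F₀ : Matrix (Fin n → Fin dV × Fin dW) (Fin n → Fin dV × Fin dW) ℂ)
    (hF₀ : F₀ = ∑ π : Equiv.Perm (Fin n), permMat π * tpow (fun k => P (f k)) * (permMat π)ᴴ)
    (N : ℝ) (hN : N = (n.factorial : ℝ) * ∏ i, ((nv i : ℝ) / n) ^ (nv i)) :
    chanN (outerPr ψ)
      = (1 / N) • (F₀ * tpow (fun _ => chanW (outerPr φlam)) * F₀ᴴ) := by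
  set A : ι → Matrix (Fin dV × Fin dW) (Fin dU × Fin dW) ℂ :=
    fun a => K a ⊗ₖ (1 : Matrix (Fin dW) (Fin dW) ℂ)
  have hchan (v : Fin dU × Fin dW → ℂ) :
      chanW (outerPr v) = krausColumns A v * (krausColumns A v)ᴴ := by
    rw [hchanW]; exact sum_kraus_outerPr A v
  have hPself (i : Fin d) : P i * krausColumns A (φ i) = krausColumns A (φ i) := by
    have h : (P i - 1) * (krausColumns A (φ i) * (krausColumns A (φ i))ᴴ) = 0 := by
      rw [← hchan, Matrix.sub_mul, Matrix.one_mul, hPsupp, sub_self]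
    rwa [mul_self_mul_conjTranspose_eq_zero, Matrix.sub_mul, Matrix.one_mul, sub_eq_zero] at h
  have hPother (i j : Fin d) (hij : i ≠ j) : P i * krausColumns A (φ j) = 0 := by
    ext x a
    refine congrFun (hPker i (fun y => krausColumns A (φ j) y a) ?_) x
    have h := krausColumns_conjTranspose_mul_eq_zero K (φ i) (φ j) (hortho i j hij)
    have h' : (krausColumns A (φ i))ᴴ *ᵥ (fun y => krausColumns A (φ j) y a) = 0 :=
      funext fun b => congrFun (congrFun h b) a
    rw [hchan, ← mulVec_mulVec, h', mulVec_zero]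
  set r : Fin d → ℝ := fun i => Real.sqrt ((nv i : ℝ) / n) with hr
  have hPlam (i : Fin d) :
      P i * krausColumns A φlam = (r i : ℂ) • krausColumns A (φ i) := by
    rw [hφlam, krausColumns_sum_mul, Matrix.mul_sum, Finset.sum_eq_single i]
    · rw [Matrix.mul_smul, hPself]
    · intro j _ hj
      rw [Matrix.mul_smul, hPother i j hj.symm, smul_zero]
    · simp
  set S := ∑ π : Equiv.Perm (Fin n), tpow fun k => krausColumns A (φ (f (π.symm k))) with hS
  set R : ℝ := ∏ k, r (f k) with hR
  have hF : F₀ * tpow (fun _ : Fin n => krausColumns A φlam) = (R : ℂ) • S := by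
    rw [hF₀, Matrix.sum_mul, hS, Finset.smul_sum]
    refine Finset.sum_congr rfl fun π _ => ?_
    rw [permMat_mul_tpow_mul_conjTranspose, tpow_mul_tpow]
    simp only [hPlam]
    rw [tpow_smul, hR, Complex.ofReal_prod, Equiv.prod_comp π.symm fun k => (r (f k) : ℂ)]
  have hψcol : krausColumns (fun α : Fin n → ι => tpow fun i => A (α i)) ψ
      = ((Real.sqrt n.factorial : ℂ))⁻¹ • S := by
    have h : ψ = fun x => ∑ π : Equiv.Perm (Fin n), ((Real.sqrt n.factorial : ℂ))⁻¹ *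
        vpow (fun k => φ (f (π.symm k))) x := by
      ext x
      simp [hψ, permMat_mulVec_vpow, Finset.mul_sum]
    rw [h, krausColumns_sum_mul, hS, Finset.smul_sum]
    simp only [krausColumns_tpow_vpow]
  have hRsq : R * R = ∏ i, ((nv i : ℝ) / n) ^ nv i := by
    rw [hR, ← Finset.prod_mul_distrib, ← Finset.prod_fiberwise' Finset.univ f fun i => r i * r i]
    refine Finset.prod_congr rfl fun i _ => ?_
    rw [Finset.prod_const, hf, hr, Real.mul_self_sqrt (by positivity)]
  have hR0 : R ≠ 0 := by
    refine Finset.prod_ne_zero_iff.2 fun k _ => Real.sqrt_ne_zero'.2 ?_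
    have hk : 0 < nv (f k) := by
      rw [← hf]; exact Finset.card_pos.2 ⟨k, by simp⟩
    have hn : 0 < n := Fin.pos k
    positivity
  have hleft : chanN (outerPr ψ) = ((n.factorial : ℂ))⁻¹ • (S * Sᴴ) := by
    have hsq : ((Real.sqrt n.factorial : ℂ))⁻¹ * ((Real.sqrt n.factorial : ℂ))⁻¹
        = ((n.factorial : ℂ))⁻¹ := by
      rw [← mul_inv, ← Complex.ofReal_mul, Real.mul_self_sqrt (by positivity),
        Complex.ofReal_natCast]
    rw [hchanN]
    refine (sum_kraus_outerPr (fun α : Fin n → ι => tpow fun i => A (α i)) ψ).trans ?_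
    rw [hψcol, conjTranspose_smul, Matrix.smul_mul, Matrix.mul_smul, smul_smul, ← hsq]
    simp
  have hright : F₀ * tpow (fun _ => chanW (outerPr φlam)) * F₀ᴴ
      = ((R * R : ℝ) : ℂ) • (S * Sᴴ) := by
    have h : tpow (fun _ : Fin n => chanW (outerPr φlam))
        = tpow (fun _ : Fin n => krausColumns A φlam) *
          (tpow (fun _ : Fin n => krausColumns A φlam))ᴴ := by
      rw [conjTranspose_tpow, tpow_mul_tpow, hchan]
    rw [h, ← Matrix.mul_assoc, Matrix.mul_assoc, ← conjTranspose_mul, hF, conjTranspose_smul,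
      Matrix.smul_mul, Matrix.mul_smul, smul_smul]
    simp
  rw [hleft, hright, hN, ← hRsq, ← Complex.coe_smul, smul_smul]
  congr 1
  have h1 : (n.factorial : ℂ) ≠ 0 := by exact_mod_cast n.factorial_ne_zero
  have h2 : (R : ℂ) ≠ 0 := by exact_mod_cast hR0
  push_cast
  field_simp
end
end

section
/- Let σ_{XYE} = Σ_{x,y} P_{XY}(x,y) |x⟩⟨x| ⊗ |y⟩⟨y| ⊗ σ_E^{x,y} be a ccq-state and let P_{Y'|Y} be a classical channel (a conditional probability distribution) from 𝒴 to a finite set 𝒴'. Define the ccq-state σ_{XY'E} := Σ_{x,y,y'} P_{XY}(x,y) · P_{Y'|Y}(y'|y) · |x⟩⟨x| ⊗ |y'⟩⟨y'| ⊗ σ_E^{x,y}. Then M(X;Y';E) ≤ M(X;Y;E). -/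
open scoped Matrix Kronecker BigOperators ComplexOrder
open Matrix

noncomputable section

/-- `A = U diag(p) Uᴴ` with `U` unitary. -/
structure Diagonalizes {n : Type*} [Fintype n] [DecidableEq n]
    (U : Matrix n n ℂ) (p : n → ℝ) (A : Matrix n n ℂ) : Prop where
  conj_mul : Uᴴ * U = 1
  eq : A = U * diagonal (fun i => (p i : ℂ)) * Uᴴ

namespace Diagonalizes

variable {n m : Type*} [Fintype n] [DecidableEq n] [Fintype m] [DecidableEq m]
  {U A : Matrix n n ℂ} {p : n → ℝ}

lemma mul_conj (h : Diagonalizes U p A) : U * Uᴴ = 1 :=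
  mul_eq_one_comm.mp h.conj_mul

lemma isHermitian (h : Diagonalizes U p A) : A.IsHermitian := by
  have hd : (diagonal fun i => (p i : ℂ))ᴴ = diagonal fun i => (p i : ℂ) := by
    rw [diagonal_conjTranspose]
    congr 1
    ext i
    simp
  rw [IsHermitian, h.eq, conjTranspose_mul, conjTranspose_mul, hd, conjTranspose_conjTranspose,
    Matrix.mul_assoc]

lemma trace_eq (h : Diagonalizes U p A) : A.trace = ((∑ i, p i : ℝ) : ℂ) := by
  rw [h.eq, trace_mul_comm, ← Matrix.mul_assoc, h.conj_mul, Matrix.one_mul, trace_diagonal]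
  push_cast
  rfl

lemma sum_eigs (h : Diagonalizes U p A) (f : ℝ → ℝ) : ∑ i, f (eigs A i) = ∑ i, f (p i) := by
  have hA := h.isHermitian
  have hroots : A.charpoly.roots = Multiset.map (fun i => (p i : ℂ)) Finset.univ.val := by
    rw [h.eq, charpoly_mul_comm, ← Matrix.mul_assoc, h.conj_mul, Matrix.one_mul,
      charpoly_diagonal, Polynomial.roots_prod]
    · simp
    · simp [Finset.prod_ne_zero_iff, Polynomial.X_sub_C_ne_zero]
  have hmap := congrArg (fun s => (s.map fun z : ℂ => f z.re).sum)
    (hA.roots_charpoly_eq_eigenvalues.symm.trans hroots)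
  simpa [eigs, hA, Multiset.map_map, Function.comp_def] using hmap

lemma vnEntropy_eq (h : Diagonalizes U p A) :
    vnEntropy A = (∑ i, Real.negMulLog (p i)) / Real.log 2 := by
  rw [vnEntropy, h.sum_eigs fun t => -(t * Real.logb 2 t), Finset.sum_div]
  refine Finset.sum_congr rfl fun i _ => ?_
  rw [Real.negMulLog, Real.logb]
  ring

lemma smul (h : Diagonalizes U p A) (c : ℝ) : Diagonalizes U (fun i => c * p i) (c • A) where
  conj_mul := h.conj_mul
  eq := by
    have hd : (diagonal fun i => ((c * p i : ℝ) : ℂ)) = c • diagonal fun i => (p i : ℂ) := by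
      ext i j
      by_cases hij : i = j <;> simp [hij]
    rw [hd, h.eq, Matrix.mul_smul, Matrix.smul_mul]

lemma add_smul_one (h : Diagonalizes U p A) (c : ℝ) :
    Diagonalizes U (fun i => p i + c) (A + c • 1) where
  conj_mul := h.conj_mul
  eq := by
    have hd : (diagonal fun i => ((p i + c : ℝ) : ℂ)) =
        (diagonal fun i => (p i : ℂ)) + c • 1 := by
      ext i j
      by_cases hij : i = j <;> simp [hij, one_apply]
    rw [hd, Matrix.mul_add, Matrix.add_mul, ← h.eq, Matrix.mul_smul, Matrix.smul_mul,
      Matrix.mul_one, h.mul_conj]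

lemma kronecker {V B : Matrix m m ℂ} {q : m → ℝ} (h : Diagonalizes U p A)
    (h' : Diagonalizes V q B) :
    Diagonalizes (U ⊗ₖ V) (fun i => p i.1 * q i.2) (A ⊗ₖ B) where
  conj_mul := by
    rw [conjTranspose_kronecker, ← mul_kronecker_mul, h.conj_mul, h'.conj_mul, one_kronecker_one]
  eq := by
    have hd : (diagonal fun i : n × m => ((p i.1 * q i.2 : ℝ) : ℂ)) =
        (diagonal fun i => (p i : ℂ)) ⊗ₖ (diagonal fun i => (q i : ℂ)) := by
      rw [diagonal_kronecker_diagonal]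
      push_cast
      rfl
    rw [hd, conjTranspose_kronecker, ← mul_kronecker_mul, ← mul_kronecker_mul, ← h.eq, ← h'.eq]

lemma submatrix (h : Diagonalizes U p A) (e : m ≃ n) :
    Diagonalizes (U.submatrix e e) (p ∘ e) (A.submatrix e e) where
  conj_mul := by
    rw [conjTranspose_submatrix, submatrix_mul_equiv, h.conj_mul, submatrix_one_equiv]
  eq := by
    have hd : (diagonal fun i => (((p ∘ e) i : ℝ) : ℂ)) =
        (diagonal fun i => (p i : ℂ)).submatrix e e := by
      rw [submatrix_diagonal_equiv]
      rfl
    rw [hd, conjTranspose_submatrix, submatrix_mul_equiv, submatrix_mul_equiv, ← h.eq]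

lemma blockDiagonal {U A : m → Matrix n n ℂ} {p : m → n → ℝ}
    (h : ∀ k, Diagonalizes (U k) (p k) (A k)) :
    Diagonalizes (Matrix.blockDiagonal U) (fun i => p i.2 i.1) (Matrix.blockDiagonal A) where
  conj_mul := by
    rw [blockDiagonal_conjTranspose, ← blockDiagonal_mul, ← blockDiagonal_one]
    congr 1
    ext1 k
    exact (h k).conj_mul
  eq := by
    have hd := blockDiagonal_diagonal fun k i => (p k i : ℂ)
    rw [← hd, blockDiagonal_conjTranspose, ← blockDiagonal_mul, ← blockDiagonal_mul]
    congr 1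
    ext1 k
    exact (h k).eq

lemma one : Diagonalizes (1 : Matrix n n ℂ) (fun _ => 1) 1 where
  conj_mul := by simp
  eq := by simp

end Diagonalizes

section

variable {n m : Type*} [Fintype n] [DecidableEq n] [Fintype m] [DecidableEq m]

lemma Matrix.IsHermitian.exists_diagonalizes {A : Matrix n n ℂ} (hA : A.IsHermitian) :
    ∃ U, Diagonalizes U hA.eigenvalues A := by
  refine ⟨hA.eigenvectorUnitary, ⟨?_, ?_⟩⟩
  · exact Unitary.coe_star_mul_self _
  · conv_lhs => rw [hA.spectral_theorem, Unitary.conjStarAlgAut_apply]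
    rfl

lemma Matrix.PosSemidef.exists_diagonalizes {A : Matrix n n ℂ} (hA : A.PosSemidef) :
    ∃ U p, (∀ i, 0 ≤ p i) ∧ Diagonalizes U p A := by
  obtain ⟨U, hU⟩ := hA.isHermitian.exists_diagonalizes
  exact ⟨U, _, hA.eigenvalues_nonneg, hU⟩

lemma vnEntropy_smul {A : Matrix n n ℂ} (hA : A.IsHermitian) (c : ℝ) :
    vnEntropy (c • A) = c * vnEntropy A + A.trace.re * (Real.negMulLog c / Real.log 2) := by
  obtain ⟨U, hU⟩ := hA.exists_diagonalizes
  rw [(hU.smul c).vnEntropy_eq, hU.vnEntropy_eq, hU.trace_eq, Complex.ofReal_re]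
  simp_rw [Real.negMulLog_mul, Finset.sum_add_distrib, ← Finset.mul_sum, ← Finset.sum_mul]
  ring

lemma vnEntropy_kronecker {A : Matrix n n ℂ} {B : Matrix m m ℂ} (hA : A.IsHermitian)
    (hB : B.IsHermitian) :
    vnEntropy (A ⊗ₖ B) = B.trace.re * vnEntropy A + A.trace.re * vnEntropy B := by
  obtain ⟨U, hU⟩ := hA.exists_diagonalizes
  obtain ⟨V, hV⟩ := hB.exists_diagonalizes
  rw [(hU.kronecker hV).vnEntropy_eq, hU.vnEntropy_eq, hV.vnEntropy_eq, hU.trace_eq, hV.trace_eq,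
    Complex.ofReal_re, Complex.ofReal_re, Fintype.sum_prod_type]
  simp_rw [Real.negMulLog_mul, Finset.sum_add_distrib, ← Finset.mul_sum, ← Finset.sum_mul]
  rw [← Finset.mul_sum]
  ring

lemma vnEntropy_submatrix {A : Matrix n n ℂ} (hA : A.IsHermitian) (e : m ≃ n) :
    vnEntropy (A.submatrix e e) = vnEntropy A := by
  obtain ⟨U, hU⟩ := hA.exists_diagonalizes
  rw [(hU.submatrix e).vnEntropy_eq, hU.vnEntropy_eq]
  congr 1
  exact Equiv.sum_comp e fun i => Real.negMulLog (hA.eigenvalues i)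

lemma vnEntropy_blockDiagonal {A : m → Matrix n n ℂ} (hA : ∀ k, (A k).IsHermitian) :
    vnEntropy (Matrix.blockDiagonal A) = ∑ k, vnEntropy (A k) := by
  choose U hU using fun k => (hA k).exists_diagonalizes
  rw [(Diagonalizes.blockDiagonal hU).vnEntropy_eq, Fintype.sum_prod_type_right, Finset.sum_div]
  exact Finset.sum_congr rfl fun k _ => (hU k).vnEntropy_eq.symm

lemma vnEntropy_zero : vnEntropy (0 : Matrix n n ℂ) = 0 := by
  simpa using vnEntropy_smul (isHermitian_zero : (0 : Matrix n n ℂ).IsHermitian) 0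

lemma vnEntropy_of_unique [Unique n] {A : Matrix n n ℂ} (hA : A.IsHermitian) :
    vnEntropy A = Real.negMulLog A.trace.re / Real.log 2 := by
  obtain ⟨U, hU⟩ := hA.exists_diagonalizes
  rw [hU.vnEntropy_eq, hU.trace_eq, Complex.ofReal_re]
  simp

end

section

variable {n : Type*} [Fintype n]

/-- The real-bilinear pairing of a pair `(ρ, σ)` with a quadratic expression in `Z`; its supremum
over `Z` is the quantum analogue of `∑ (p - q)² / (s p + (1 - s) q)`. -/
def relQuad (s : ℝ) (ρ σ Z : Matrix n n ℂ) : ℝ :=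
  2 * (Zᴴ * (ρ - σ)).trace.re - s * (Zᴴ * ρ * Z).trace.re - (1 - s) * (Z * σ * Zᴴ).trace.re

/-- `∑ |C i j|² (p i - q j)² / (s p i + (1 - s) q j)`. -/
def quadDiv (s : ℝ) (C : Matrix n n ℂ) (p q : n → ℝ) : ℝ :=
  ∑ i, ∑ j, Complex.normSq (C i j) * ((p i - q j) ^ 2 / (s * p i + (1 - s) * q j))

lemma relQuad_add (s : ℝ) (ρ₁ ρ₂ σ₁ σ₂ Z : Matrix n n ℂ) :
    relQuad s (ρ₁ + ρ₂) (σ₁ + σ₂) Z = relQuad s ρ₁ σ₁ Z + relQuad s ρ₂ σ₂ Z := by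
  simp only [relQuad, Matrix.mul_add, Matrix.add_mul, Matrix.mul_sub, trace_add, trace_sub,
    Complex.add_re, Complex.sub_re]
  ring

variable {p q : n → ℝ}

lemma convexCombo_pos {s a b : ℝ} (hs : s ∈ Set.Icc (0 : ℝ) 1) (ha : 0 < a) (hb : 0 < b) :
    0 < s * a + (1 - s) * b := by
  have := (convex_Ioi (0 : ℝ)) (Set.mem_Ioi.2 ha) (Set.mem_Ioi.2 hb) hs.1
    (sub_nonneg.2 hs.2) (by ring)
  simpa using this

/-- The relative entropy `tr ρ log ρ - tr ρ log σ - tr ρ + tr σ` in terms of eigenvalues of `ρ`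
and `σ` and the overlap matrix `C` of the eigenbases. -/
def relEnt (C : Matrix n n ℂ) (p q : n → ℝ) : ℝ :=
  ∑ i, ∑ j, Complex.normSq (C i j) *
    (p i * Real.log (p i) - p i * Real.log (q j) - p i + q j)

lemma continuousOn_quadDiv_term {a b : ℝ} (ha : 0 < a) (hb : 0 < b) :
    ContinuousOn (fun s : ℝ => (1 - s) * ((a - b) ^ 2 / (s * a + (1 - s) * b)))
      (Set.Icc 0 1) := by
  have h : ∀ s ∈ Set.Icc (0 : ℝ) 1, s * a + (1 - s) * b ≠ 0 := fun s hs =>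
    (convexCombo_pos hs ha hb).ne'
  fun_prop (disch := assumption)

lemma integral_quadDiv_term {a b : ℝ} (ha : 0 < a) (hb : 0 < b) :
    ∫ s in (0 : ℝ)..1, (1 - s) * ((a - b) ^ 2 / (s * a + (1 - s) * b)) =
      a * Real.log a - a * Real.log b - a + b := by
  have hd : ∀ s ∈ Set.uIcc (0 : ℝ) 1, HasDerivAt
      (fun s : ℝ => a * Real.log (s * a + (1 - s) * b) - s * (a - b))
      ((1 - s) * ((a - b) ^ 2 / (s * a + (1 - s) * b))) s := by
    intro s hs
    rw [Set.uIcc_of_le zero_le_one] at hs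
    have hm := convexCombo_pos hs ha hb
    have h0 : HasDerivAt (fun s : ℝ => s * a + (1 - s) * b) (1 * a + (-1) * b) s :=
      ((hasDerivAt_id' s).mul_const a).add (((hasDerivAt_id' s).const_sub 1).mul_const b)
    refine (((h0.log hm.ne').const_mul a).sub
      ((hasDerivAt_id' s).mul_const (a - b))).congr_deriv ?_
    rw [← mul_div_assoc, ← mul_div_assoc, eq_div_iff hm.ne', sub_mul, div_mul_cancel₀ _ hm.ne']
    ring
  rw [intervalIntegral.integral_eq_sub_of_hasDerivAt hd]
  · simp
    ring
  · apply ContinuousOn.intervalIntegrable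
    rw [Set.uIcc_of_le zero_le_one]
    exact continuousOn_quadDiv_term ha hb

lemma intervalIntegrable_quadDiv (C : Matrix n n ℂ) (hp : ∀ i, 0 < p i) (hq : ∀ i, 0 < q i) :
    IntervalIntegrable (fun s => (1 - s) * quadDiv s C p q) MeasureTheory.volume 0 1 := by
  apply ContinuousOn.intervalIntegrable
  rw [Set.uIcc_of_le zero_le_one]
  simp only [quadDiv, Finset.mul_sum, mul_left_comm (1 - _ : ℝ)]
  exact continuousOn_finsetSum _ fun i _ => continuousOn_finsetSum _ fun j _ =>
    continuousOn_const.mul (continuousOn_quadDiv_term (hp i) (hq j))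

lemma integral_quadDiv (C : Matrix n n ℂ) (hp : ∀ i, 0 < p i) (hq : ∀ i, 0 < q i) :
    ∫ s in (0 : ℝ)..1, (1 - s) * quadDiv s C p q = relEnt C p q := by
  have hint : ∀ i j, IntervalIntegrable (fun s : ℝ => Complex.normSq (C i j) *
      ((1 - s) * ((p i - q j) ^ 2 / (s * p i + (1 - s) * q j)))) MeasureTheory.volume 0 1 := by
    intro i j
    apply ContinuousOn.intervalIntegrable
    rw [Set.uIcc_of_le zero_le_one]
    exact continuousOn_const.mul (continuousOn_quadDiv_term (hp i) (hq j))
  simp only [quadDiv, relEnt, Finset.mul_sum, mul_left_comm (1 - _ : ℝ)]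
  have hint' : ∀ i, IntervalIntegrable (fun s : ℝ => ∑ j, Complex.normSq (C i j) *
      ((1 - s) * ((p i - q j) ^ 2 / (s * p i + (1 - s) * q j)))) MeasureTheory.volume 0 1 := by
    intro i
    have h := IntervalIntegrable.sum Finset.univ fun j _ => hint i j
    rwa [Finset.sum_fn] at h
  rw [intervalIntegral.integral_finsetSum fun i _ => hint' i]
  refine Finset.sum_congr rfl fun i _ => ?_
  rw [intervalIntegral.integral_finsetSum fun j _ => hint i j]
  refine Finset.sum_congr rfl fun j _ => ?_
  rw [intervalIntegral.integral_const_mul, integral_quadDiv_term (hp i) (hq j)]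

variable [DecidableEq n] {U V ρ σ : Matrix n n ℂ}

lemma relQuad_conj (hρ : Diagonalizes U p ρ) (hσ : Diagonalizes V q σ) (s : ℝ)
    (Z : Matrix n n ℂ) :
    relQuad s ρ σ (U * Z * Vᴴ) = ∑ i, ∑ j, (2 * (p i - q j) * (star (Z i j) * (Uᴴ * V) i j).re
      - (s * p i + (1 - s) * q j) * Complex.normSq (Z i j)) := by
  have hU : ∀ M : Matrix n n ℂ, Uᴴ * (U * M) = M := fun M => by
    rw [← Matrix.mul_assoc, hρ.conj_mul, Matrix.one_mul]
  have hV : ∀ M : Matrix n n ℂ, Vᴴ * (V * M) = M := fun M => by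
    rw [← Matrix.mul_assoc, hσ.conj_mul, Matrix.one_mul]
  have h1 : ((U * Z * Vᴴ)ᴴ * ρ).trace =
      (Zᴴ * (diagonal (fun i => (p i : ℂ)) * (Uᴴ * V))).trace := by
    rw [hρ.eq]
    simp only [conjTranspose_mul, conjTranspose_conjTranspose, Matrix.mul_assoc, hU]
    rw [trace_mul_comm]
    simp only [Matrix.mul_assoc]
  have h2 : ((U * Z * Vᴴ)ᴴ * σ).trace =
      (Zᴴ * ((Uᴴ * V) * diagonal (fun i => (q i : ℂ)))).trace := by
    rw [hσ.eq]
    simp only [conjTranspose_mul, conjTranspose_conjTranspose, Matrix.mul_assoc]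
    rw [trace_mul_comm]
    simp only [Matrix.mul_assoc, hσ.conj_mul, Matrix.mul_one]
  have h3 : ((U * Z * Vᴴ)ᴴ * ρ * (U * Z * Vᴴ)).trace =
      (Zᴴ * (diagonal (fun i => (p i : ℂ)) * Z)).trace := by
    rw [hρ.eq]
    simp only [conjTranspose_mul, conjTranspose_conjTranspose, Matrix.mul_assoc, hU]
    rw [trace_mul_comm]
    simp only [Matrix.mul_assoc, hσ.conj_mul, Matrix.mul_one]
  have h4 : (U * Z * Vᴴ * σ * (U * Z * Vᴴ)ᴴ).trace =
      (Z * diagonal (fun i => (q i : ℂ)) * Zᴴ).trace := by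
    rw [hσ.eq]
    simp only [conjTranspose_mul, conjTranspose_conjTranspose, Matrix.mul_assoc, hV]
    rw [trace_mul_comm]
    simp only [Matrix.mul_assoc, hρ.conj_mul, Matrix.mul_one]
  rw [relQuad, Matrix.mul_sub, trace_sub, h1, h2, h3, h4]
  generalize Uᴴ * V = C
  have e1 : (Zᴴ * (diagonal (fun i => (p i : ℂ)) * C)).trace =
      ∑ i, ∑ j, (p i : ℂ) * (star (Z i j) * C i j) := by
    rw [Finset.sum_comm]
    simp only [trace, diag_apply, mul_apply (M := Zᴴ), diagonal_mul, conjTranspose_apply]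
    exact Finset.sum_congr rfl fun i _ => Finset.sum_congr rfl fun j _ => by ring
  have e2 : (Zᴴ * (C * diagonal (fun i => (q i : ℂ)))).trace =
      ∑ i, ∑ j, (q j : ℂ) * (star (Z i j) * C i j) := by
    rw [Finset.sum_comm]
    simp only [trace, diag_apply, mul_apply (M := Zᴴ), mul_diagonal, conjTranspose_apply]
    exact Finset.sum_congr rfl fun i _ => Finset.sum_congr rfl fun j _ => by ring
  have e3 : (Zᴴ * (diagonal (fun i => (p i : ℂ)) * Z)).trace =
      ∑ i, ∑ j, ((p i * Complex.normSq (Z i j) : ℝ) : ℂ) := by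
    rw [Finset.sum_comm]
    simp only [trace, diag_apply, mul_apply (M := Zᴴ), diagonal_mul, conjTranspose_apply]
    refine Finset.sum_congr rfl fun i _ => Finset.sum_congr rfl fun j _ => ?_
    rw [Complex.ofReal_mul, Complex.normSq_eq_conj_mul_self, ← starRingEnd_apply]
    ring
  have e4 : (Z * diagonal (fun i => (q i : ℂ)) * Zᴴ).trace =
      ∑ i, ∑ j, ((q j * Complex.normSq (Z i j) : ℝ) : ℂ) := by
    simp only [trace, diag_apply, mul_apply (N := Zᴴ), mul_diagonal, conjTranspose_apply]
    refine Finset.sum_congr rfl fun i _ => Finset.sum_congr rfl fun j _ => ?_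
    rw [Complex.ofReal_mul, Complex.normSq_eq_conj_mul_self, ← starRingEnd_apply]
    ring
  rw [e1, e2, e3, e4]
  simp only [Complex.sub_re, Complex.re_sum, Complex.re_ofReal_mul, Complex.ofReal_re,
    Finset.mul_sum, ← Finset.sum_sub_distrib]
  exact Finset.sum_congr rfl fun i _ => Finset.sum_congr rfl fun j _ => by ring

lemma relQuad_le_quadDiv (hρ : Diagonalizes U p ρ) (hσ : Diagonalizes V q σ)
    (hp : ∀ i, 0 < p i) (hq : ∀ i, 0 < q i) {s : ℝ} (hs : s ∈ Set.Icc (0 : ℝ) 1)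
    (Z : Matrix n n ℂ) : relQuad s ρ σ Z ≤ quadDiv s (Uᴴ * V) p q := by
  have hZ : Z = U * (Uᴴ * Z * V) * Vᴴ := by
    simp only [Matrix.mul_assoc, hσ.mul_conj, Matrix.mul_one]
    rw [← Matrix.mul_assoc, hρ.mul_conj, Matrix.one_mul]
  rw [hZ, relQuad_conj hρ hσ, quadDiv]
  refine Finset.sum_le_sum fun i _ => Finset.sum_le_sum fun j _ => ?_
  have hm := convexCombo_pos hs (hp i) (hq j)
  generalize s * p i + (1 - s) * q j = m at hm
  generalize p i - q j = d
  generalize (Uᴴ * Z * V) i j = z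
  generalize (Uᴴ * V) i j = c
  have h := Complex.normSq_nonneg ((d : ℂ) * c - m * z)
  rw [← mul_div_assoc, le_div_iff₀ hm]
  simp only [Complex.normSq_apply, Complex.sub_re, Complex.sub_im, Complex.mul_re, Complex.mul_im,
    Complex.ofReal_re, Complex.ofReal_im, Complex.star_def, Complex.conj_re, Complex.conj_im]
    at h ⊢
  linarith

lemma exists_relQuad_eq_quadDiv (hρ : Diagonalizes U p ρ) (hσ : Diagonalizes V q σ)
    (hp : ∀ i, 0 < p i) (hq : ∀ i, 0 < q i) {s : ℝ} (hs : s ∈ Set.Icc (0 : ℝ) 1) :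
    ∃ Z, relQuad s ρ σ Z = quadDiv s (Uᴴ * V) p q := by
  refine ⟨U * Matrix.of (fun i j => (((p i - q j) / (s * p i + (1 - s) * q j) : ℝ) : ℂ) *
    (Uᴴ * V) i j) * Vᴴ, ?_⟩
  rw [relQuad_conj hρ hσ, quadDiv]
  refine Finset.sum_congr rfl fun i _ => Finset.sum_congr rfl fun j _ => ?_
  have hm := convexCombo_pos hs (hp i) (hq j)
  rw [of_apply]
  generalize s * p i + (1 - s) * q j = m at hm
  generalize p i - q j = d
  generalize (Uᴴ * V) i j = c
  simp only [Complex.normSq_apply, Complex.mul_re, Complex.mul_im,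
    Complex.ofReal_re, Complex.ofReal_im, Complex.star_def, Complex.conj_re, Complex.conj_im]
  field_simp
  ring

/-- Joint subadditivity of the relative entropy. -/
lemma relEnt_add_le {U₁ V₁ U₂ V₂ ρ₁ σ₁ ρ₂ σ₂ : Matrix n n ℂ} {p₁ q₁ p₂ q₂ : n → ℝ}
    (hρ₁ : Diagonalizes U₁ p₁ ρ₁) (hσ₁ : Diagonalizes V₁ q₁ σ₁)
    (hρ₂ : Diagonalizes U₂ p₂ ρ₂) (hσ₂ : Diagonalizes V₂ q₂ σ₂)
    (hρ : Diagonalizes U p (ρ₁ + ρ₂)) (hσ : Diagonalizes V q (σ₁ + σ₂))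
    (hp₁ : ∀ i, 0 < p₁ i) (hq₁ : ∀ i, 0 < q₁ i) (hp₂ : ∀ i, 0 < p₂ i) (hq₂ : ∀ i, 0 < q₂ i)
    (hp : ∀ i, 0 < p i) (hq : ∀ i, 0 < q i) :
    relEnt (Uᴴ * V) p q ≤ relEnt (U₁ᴴ * V₁) p₁ q₁ + relEnt (U₂ᴴ * V₂) p₂ q₂ := by
  have hi₁ := intervalIntegrable_quadDiv (U₁ᴴ * V₁) hp₁ hq₁
  have hi₂ := intervalIntegrable_quadDiv (U₂ᴴ * V₂) hp₂ hq₂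
  rw [← integral_quadDiv _ hp hq, ← integral_quadDiv _ hp₁ hq₁, ← integral_quadDiv _ hp₂ hq₂,
    ← intervalIntegral.integral_add hi₁ hi₂]
  refine intervalIntegral.integral_mono_on zero_le_one (intervalIntegrable_quadDiv _ hp hq)
    (hi₁.add hi₂) fun s hs => ?_
  obtain ⟨Z, hZ⟩ := exists_relQuad_eq_quadDiv hρ hσ hp hq hs
  rw [← hZ, relQuad_add, ← mul_add]
  exact mul_le_mul_of_nonneg_left (add_le_add (relQuad_le_quadDiv hρ₁ hσ₁ hp₁ hq₁ hs Z)
    (relQuad_le_quadDiv hρ₂ hσ₂ hp₂ hq₂ hs Z)) (sub_nonneg.2 hs.2)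

end

section

variable {n : Type*} [Fintype n] [DecidableEq n] {U V ρ σ : Matrix n n ℂ} {p q : n → ℝ}

lemma relEnt_eq (hρ : Diagonalizes U p ρ) (hσ : Diagonalizes V q σ) :
    relEnt (Uᴴ * V) p q = -∑ i, Real.negMulLog (p i)
      - ∑ j, ((Vᴴ * ρ * V) j j).re * Real.log (q j) - ∑ i, p i + ∑ j, q j := by
  have hdiag : ∀ j, ((Vᴴ * ρ * V) j j).re = ∑ i, Complex.normSq ((Uᴴ * V) i j) * p i := by
    intro j
    have h : Vᴴ * ρ * V = (Uᴴ * V)ᴴ * (diagonal (fun i => (p i : ℂ)) * (Uᴴ * V)) := by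
      rw [hρ.eq, conjTranspose_mul, conjTranspose_conjTranspose]
      simp only [Matrix.mul_assoc]
    rw [h, mul_apply, Complex.re_sum]
    refine Finset.sum_congr rfl fun i _ => ?_
    rw [diagonal_mul, conjTranspose_apply]
    generalize (Uᴴ * V) i j = c
    simp only [Complex.normSq_apply, Complex.mul_re, Complex.mul_im, Complex.ofReal_re,
      Complex.ofReal_im, Complex.star_def, Complex.conj_re, Complex.conj_im]
    ring
  have hrow : ∀ i, ∑ j, Complex.normSq ((Uᴴ * V) i j) = 1 := by
    intro i
    have h : (Uᴴ * V) * (Uᴴ * V)ᴴ = 1 := by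
      rw [conjTranspose_mul, conjTranspose_conjTranspose, Matrix.mul_assoc, ← Matrix.mul_assoc V,
        hσ.mul_conj, Matrix.one_mul, hρ.conj_mul]
    have h' := congrArg Complex.re (congrFun (congrFun h i) i)
    rw [mul_apply, Complex.re_sum, one_apply_eq, Complex.one_re] at h'
    rw [← h']
    refine Finset.sum_congr rfl fun j _ => ?_
    rw [conjTranspose_apply, ← starRingEnd_apply, Complex.mul_conj, Complex.ofReal_re]
  have hcol : ∀ j, ∑ i, Complex.normSq ((Uᴴ * V) i j) = 1 := by
    intro j
    have h : (Uᴴ * V)ᴴ * (Uᴴ * V) = 1 := by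
      rw [conjTranspose_mul, conjTranspose_conjTranspose, Matrix.mul_assoc, ← Matrix.mul_assoc U,
        hρ.mul_conj, Matrix.one_mul, hσ.conj_mul]
    have h' := congrArg Complex.re (congrFun (congrFun h j) j)
    rw [mul_apply, Complex.re_sum, one_apply_eq, Complex.one_re] at h'
    rw [← h']
    refine Finset.sum_congr rfl fun i _ => ?_
    rw [conjTranspose_apply, ← starRingEnd_apply, mul_comm, Complex.mul_conj, Complex.ofReal_re]
  have hp : ∀ f : n → ℝ, ∑ i, ∑ j, Complex.normSq ((Uᴴ * V) i j) * f i = ∑ i, f i := fun f =>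
    Finset.sum_congr rfl fun i _ => by rw [← Finset.sum_mul, hrow, one_mul]
  have hq : ∀ f : n → ℝ, ∑ i, ∑ j, Complex.normSq ((Uᴴ * V) i j) * f j = ∑ j, f j := fun f => by
    rw [Finset.sum_comm]
    exact Finset.sum_congr rfl fun i _ => by rw [← Finset.sum_mul, hcol, one_mul]
  simp only [relEnt, mul_add, mul_sub, Finset.sum_add_distrib, Finset.sum_sub_distrib, hp, hq,
    hdiag, Finset.sum_mul, ← Finset.sum_neg_distrib, Real.negMulLog, neg_mul, neg_neg]
  congr 3
  rw [Finset.sum_comm]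
  simp only [mul_assoc]

end

section ptraceL

variable {u v : Type*} [Fintype u]

lemma ptraceL_eq_sum (A : Matrix (u × v) (u × v) ℂ) :
    ptraceL A = ∑ k, A.submatrix (Prod.mk k) (Prod.mk k) := by
  ext i j
  simp [ptraceL, Matrix.sum_apply]

lemma ptraceL_add (A B : Matrix (u × v) (u × v) ℂ) :
    ptraceL (A + B) = ptraceL A + ptraceL B := by
  simp only [ptraceL_eq_sum, submatrix_add, Pi.add_apply, Finset.sum_add_distrib]

lemma ptraceL_smul (c : ℝ) (A : Matrix (u × v) (u × v) ℂ) :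
    ptraceL (c • A) = c • ptraceL A := by
  simp only [ptraceL_eq_sum, submatrix_smul, Pi.smul_apply, Finset.smul_sum]

lemma ptraceL_zero : ptraceL (0 : Matrix (u × v) (u × v) ℂ) = 0 := by
  ext i j
  simp [ptraceL]

lemma ptraceL_sum {ι : Type*} (s : Finset ι) (A : ι → Matrix (u × v) (u × v) ℂ) :
    ptraceL (∑ k ∈ s, A k) = ∑ k ∈ s, ptraceL (A k) :=
  map_sum (⟨⟨ptraceL, ptraceL_zero⟩, ptraceL_add⟩ :
    Matrix (u × v) (u × v) ℂ →+ Matrix v v ℂ) A s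

lemma ptraceL_kronecker (A : Matrix u u ℂ) (B : Matrix v v ℂ) :
    ptraceL (A ⊗ₖ B) = A.trace • B := by
  ext i j
  simp [ptraceL, trace, Finset.sum_mul]

lemma ptraceL_one [DecidableEq u] [DecidableEq v] :
    ptraceL (1 : Matrix (u × v) (u × v) ℂ) = (Fintype.card u : ℝ) • 1 := by
  rw [← one_kronecker_one, ptraceL_kronecker, trace_one]
  ext i j
  simp

lemma ptraceL_add_smul_one [DecidableEq u] [DecidableEq v] (A : Matrix (u × v) (u × v) ℂ) (ε : ℝ) :
    ptraceL (A + ε • 1) = ptraceL A + (ε * Fintype.card u) • 1 := by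
  rw [ptraceL_add, ptraceL_smul, ptraceL_one, smul_smul]

lemma trace_ptraceL [Fintype v] (A : Matrix (u × v) (u × v) ℂ) :
    (ptraceL A).trace = A.trace := by
  simp only [trace, ptraceL, diag_apply, of_apply, Fintype.sum_prod_type_right]

lemma Matrix.PosSemidef.ptraceL {A : Matrix (u × v) (u × v) ℂ} (hA : A.PosSemidef) :
    (ptraceL A).PosSemidef := by
  rw [ptraceL_eq_sum]
  exact posSemidef_sum _ fun k _ => hA.submatrix _

lemma ptraceL_one_kronecker_mul_mul [DecidableEq u] [Fintype v] (M N : Matrix v v ℂ)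
    (A : Matrix (u × v) (u × v) ℂ) :
    ptraceL ((1 ⊗ₖ M) * A * (1 ⊗ₖ N)) = M * ptraceL A * N := by
  rw [ptraceL_eq_sum, ptraceL_eq_sum, Matrix.mul_sum, Matrix.sum_mul]
  refine Finset.sum_congr rfl fun k _ => ?_
  ext i j
  simp [mul_apply, Fintype.sum_prod_type, one_apply, Finset.sum_ite_irrel]

end ptraceL

section condEnt

variable {u v : Type*} [Fintype u] [Fintype v] [DecidableEq u] [DecidableEq v]

/-- The conditional entropy `S(U|V)` of a (not necessarily normalized) state on `U ⊗ V`. -/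
def condEnt (A : Matrix (u × v) (u × v) ℂ) : ℝ := vnEntropy A - vnEntropy (ptraceL A)

lemma relEnt_marginal {A U : Matrix (u × v) (u × v) ℂ} {W : Matrix v v ℂ} {p : u × v → ℝ}
    {q : v → ℝ} (hA : Diagonalizes U p A) (hW : Diagonalizes W q (ptraceL A)) :
    relEnt (Uᴴ * (1 ⊗ₖ W)) p (fun i => 1 * q i.2) =
      -(Real.log 2 * condEnt A) + (Fintype.card u - 1) * A.trace.re := by
  have hlog : Real.log 2 ≠ 0 := (Real.log_pos one_lt_two).ne'
  have hsum : ∑ j : u × v, ((((1 : Matrix u u ℂ) ⊗ₖ W)ᴴ * A * ((1 : Matrix u u ℂ) ⊗ₖ W)) j j).re *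
      Real.log (1 * q j.2) = -∑ j, Real.negMulLog (q j) := by
    have hq : Wᴴ * ptraceL A * W = diagonal fun i => (q i : ℂ) := by
      rw [hW.eq]
      simp only [Matrix.mul_assoc, hW.conj_mul, Matrix.mul_one]
      rw [← Matrix.mul_assoc, hW.conj_mul, Matrix.one_mul]
    rw [← ptraceL_one_kronecker_mul_mul] at hq
    rw [conjTranspose_kronecker, conjTranspose_one, Fintype.sum_prod_type_right,
      ← Finset.sum_neg_distrib]
    refine Finset.sum_congr rfl fun j _ => ?_
    have hj := congrArg Complex.re (congrFun (congrFun hq j) j)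
    rw [diagonal_apply_eq, Complex.ofReal_re, ptraceL, of_apply, Complex.re_sum] at hj
    simp only [one_mul, ← Finset.sum_mul, hj, Real.negMulLog]
    ring
  have htr : ∑ i, q i = ∑ i, p i := by
    have h := hW.trace_eq
    rw [trace_ptraceL, hA.trace_eq] at h
    exact_mod_cast h.symm
  have hcard : ∑ i : u × v, 1 * q i.2 = Fintype.card u * ∑ i, p i := by
    rw [← htr, Fintype.sum_prod_type]
    simp
  rw [relEnt_eq hA (Diagonalizes.one.kronecker hW), hsum, hcard, condEnt, hA.vnEntropy_eq,
    hW.vnEntropy_eq, hA.trace_eq, Complex.ofReal_re]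
  field_simp
  ring

lemma tendsto_vnEntropy_add_smul_one {n : Type*} [Fintype n] [DecidableEq n] {A : Matrix n n ℂ}
    (hA : A.IsHermitian) {l : Filter ℝ} {f : ℝ → ℝ} (hf : Filter.Tendsto f l (nhds 0)) :
    Filter.Tendsto (fun ε => vnEntropy (A + f ε • 1)) l (nhds (vnEntropy A)) := by
  obtain ⟨U, hU⟩ := hA.exists_diagonalizes
  simp only [(hU.add_smul_one _).vnEntropy_eq, hU.vnEntropy_eq]
  refine Filter.Tendsto.div_const (tendsto_finsetSum _ fun i _ => ?_) _
  have h := hf.const_add (hA.eigenvalues i)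
  rw [add_zero] at h
  exact (Real.continuous_negMulLog.tendsto _).comp h

lemma tendsto_condEnt_add_smul_one {A : Matrix (u × v) (u × v) ℂ}
    (hA : A.PosSemidef) {l : Filter ℝ} {f : ℝ → ℝ} (hf : Filter.Tendsto f l (nhds 0)) :
    Filter.Tendsto (fun ε => condEnt (A + f ε • 1)) l (nhds (condEnt A)) := by
  simp only [condEnt, ptraceL_add_smul_one]
  refine (tendsto_vnEntropy_add_smul_one hA.isHermitian hf).sub
    (tendsto_vnEntropy_add_smul_one hA.ptraceL.isHermitian ?_)
  simpa using hf.mul_const (Fintype.card u : ℝ)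

lemma exists_diagonalizes_add_smul_one [Nonempty u] {A : Matrix (u × v) (u × v) ℂ}
    (hA : A.PosSemidef) {ε : ℝ} (hε : 0 < ε) :
    ∃ U p W q, Diagonalizes U p (A + ε • 1) ∧ Diagonalizes W q (ptraceL (A + ε • 1)) ∧
      (∀ i, 0 < p i) ∧ ∀ j, 0 < q j := by
  obtain ⟨U, p, hp, hU⟩ := hA.exists_diagonalizes
  obtain ⟨W, q, hq, hW⟩ := hA.ptraceL.exists_diagonalizes
  have hc : 0 < ε * Fintype.card u := mul_pos hε (Nat.cast_pos.2 Fintype.card_pos)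
  refine ⟨U, _, W, fun j => q j + ε * Fintype.card u, hU.add_smul_one ε, ?_,
    fun i => add_pos_of_nonneg_of_pos (hp i) hε, fun j => add_pos_of_nonneg_of_pos (hq j) hc⟩
  rw [ptraceL_add_smul_one]
  exact hW.add_smul_one _

/-- Superadditivity of the conditional entropy, equivalent to strong subadditivity. -/
theorem condEnt_add_le [Nonempty u] {A B : Matrix (u × v) (u × v) ℂ} (hA : A.PosSemidef)
    (hB : B.PosSemidef) : condEnt A + condEnt B ≤ condEnt (A + B) := by
  have hid : Filter.Tendsto (fun ε : ℝ => ε) (nhdsWithin 0 (Set.Ioi 0)) (nhds 0) :=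
    tendsto_nhdsWithin_of_tendsto_nhds Filter.tendsto_id
  have hid' : Filter.Tendsto (fun ε : ℝ => ε + ε) (nhdsWithin 0 (Set.Ioi 0)) (nhds 0) := by
    simpa using hid.add hid
  refine le_of_tendsto_of_tendsto ((tendsto_condEnt_add_smul_one hA hid).add
    (tendsto_condEnt_add_smul_one hB hid)) (tendsto_condEnt_add_smul_one (hA.add hB) hid') ?_
  filter_upwards [self_mem_nhdsWithin] with ε hε
  obtain ⟨U₁, p₁, W₁, q₁, hU₁, hW₁, hp₁, hq₁⟩ := exists_diagonalizes_add_smul_one hA hε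
  obtain ⟨U₂, p₂, W₂, q₂, hU₂, hW₂, hp₂, hq₂⟩ := exists_diagonalizes_add_smul_one hB hε
  obtain ⟨U, p, W, q, hU, hW, hp, hq⟩ :=
    exists_diagonalizes_add_smul_one (hA.add hB) (add_pos hε hε)
  have hsplit : A + B + (ε + ε) • (1 : Matrix (u × v) (u × v) ℂ) =
      (A + ε • 1) + (B + ε • 1) := by
    rw [add_smul]
    abel
  rw [hsplit] at hU hW ⊢
  generalize A + ε • 1 = A' at *
  generalize B + ε • 1 = B' at *
  have hσ : (1 : Matrix u u ℂ) ⊗ₖ ptraceL (A' + B') = 1 ⊗ₖ ptraceL A' + 1 ⊗ₖ ptraceL B' := by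
    rw [ptraceL_add, kronecker_add]
  have hW' := Diagonalizes.one (n := u).kronecker hW
  rw [hσ] at hW'
  have h := relEnt_add_le hU₁ (Diagonalizes.one.kronecker hW₁) hU₂
    (Diagonalizes.one.kronecker hW₂) hU hW' hp₁ (by simpa using hq₁) hp₂
    (by simpa using hq₂) hp (by simpa using hq)
  rw [relEnt_marginal hU hW, relEnt_marginal hU₁ hW₁, relEnt_marginal hU₂ hW₂, trace_add,
    Complex.add_re] at h
  have hlog : 0 < Real.log 2 := Real.log_pos one_lt_two
  refine le_of_mul_le_mul_left ?_ hlog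
  linarith

lemma condEnt_zero : condEnt (0 : Matrix (u × v) (u × v) ℂ) = 0 := by
  rw [condEnt, ptraceL_zero, vnEntropy_zero, vnEntropy_zero, sub_zero]

lemma sum_condEnt_le [Nonempty u] {ι : Type*} (s : Finset ι) {A : ι → Matrix (u × v) (u × v) ℂ}
    (hA : ∀ k, (A k).PosSemidef) : ∑ k ∈ s, condEnt (A k) ≤ condEnt (∑ k ∈ s, A k) := by
  classical
  induction s using Finset.induction_on with
  | empty => simp [condEnt_zero]
  | insert k s hk ih =>
    rw [Finset.sum_insert hk, Finset.sum_insert hk]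
    exact (add_le_add le_rfl ih).trans
      (condEnt_add_le (hA k) (posSemidef_sum s fun i _ => hA i))

lemma condEnt_smul {A : Matrix (u × v) (u × v) ℂ} (hA : A.PosSemidef) (c : ℝ) :
    condEnt (c • A) = c * condEnt A := by
  rw [condEnt, condEnt, ptraceL_smul, vnEntropy_smul hA.isHermitian,
    vnEntropy_smul hA.ptraceL.isHermitian, trace_ptraceL]
  ring

lemma condEnt_kronecker {A : Matrix u u ℂ} {B : Matrix v v ℂ} (hA : IsDensity A)
    (hB : B.IsHermitian) : condEnt (A ⊗ₖ B) = B.trace.re * vnEntropy A := by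
  rw [condEnt, vnEntropy_kronecker hA.1.isHermitian hB, ptraceL_kronecker, hA.2, one_smul,
    Complex.one_re]
  ring

end condEnt

section

variable {n : Type*} [Fintype n] [DecidableEq n]

lemma IsDensity.nonempty {ρ : Matrix n n ℂ} (hρ : IsDensity ρ) : Nonempty n := by
  by_contra h
  rw [not_nonempty_iff] at h
  simpa [trace] using hρ.2

lemma outerPr_stdb {n : Type*} [DecidableEq n] (k : n) : outerPr (stdb k) = diagonal (Pi.single k 1) := by
  ext i j
  simp only [outerPr, stdb, diagonal_apply, of_apply, Pi.single_apply]
  split_ifs <;> simp_all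

lemma diagonalizes_outerPr_stdb (k : n) :
    Diagonalizes 1 (Pi.single k 1) (outerPr (stdb k)) where
  conj_mul := by simp
  eq := by
    rw [outerPr_stdb, conjTranspose_one, Matrix.mul_one, Matrix.one_mul]
    congr 1
    ext i
    by_cases hi : i = k <;> simp [hi]

lemma isDensity_outerPr_stdb (k : n) : IsDensity (outerPr (stdb k)) := by
  refine ⟨posSemidef_vecMulVec_self_star (stdb k), ?_⟩
  rw [(diagonalizes_outerPr_stdb k).trace_eq]
  simp

lemma vnEntropy_outerPr_stdb (k : n) : vnEntropy (outerPr (stdb k)) = 0 := by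
  rw [(diagonalizes_outerPr_stdb k).vnEntropy_eq, Finset.sum_eq_zero, zero_div]
  intro i _
  by_cases hi : i = k <;> simp [hi]

/-- Mixing increases the entropy at most by the entropy of the mixing distribution. -/
lemma vnEntropy_sum_le {X : Type*} [Fintype X] [Nonempty X] {A : X → Matrix n n ℂ}
    (hA : ∀ x, (A x).PosSemidef) : vnEntropy (∑ x, A x) ≤ ∑ x, vnEntropy (A x) := by
  classical
  have hd := fun x : X => isDensity_outerPr_stdb x
  have h := sum_condEnt_le Finset.univ fun x => (hd x).1.kronecker (hA x)
  have hblock : ∑ x, outerPr (stdb x) ⊗ₖ A x =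
      (blockDiagonal A).submatrix (Equiv.prodComm X n) (Equiv.prodComm X n) := by
    ext ⟨x, i⟩ ⟨y, j⟩
    by_cases hxy : x = y <;>
      simp [Matrix.sum_apply, blockDiagonal_apply, outerPr_stdb, hxy,
        Pi.single_apply]
  have hherm : (blockDiagonal A).IsHermitian := by
    rw [IsHermitian, blockDiagonal_conjTranspose]
    exact congrArg _ (funext fun x => (hA x).isHermitian)
  have h0 : ∑ x, condEnt (outerPr (stdb x) ⊗ₖ A x) = 0 := Finset.sum_eq_zero fun x _ => by
    rw [condEnt_kronecker (hd x) (hA x).isHermitian, vnEntropy_outerPr_stdb, mul_zero]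
  rw [h0] at h
  simp only [condEnt, ptraceL_sum, ptraceL_kronecker, (hd _).2, one_smul] at h
  rw [hblock, vnEntropy_submatrix hherm, vnEntropy_blockDiagonal fun x => (hA x).isHermitian] at h
  linarith

/-- Concavity of the entropy, for states that are not normalized individually. -/
lemma sum_vnEntropy_le [Nonempty n] {X : Type*} [Fintype X] {A : X → Matrix n n ℂ}
    (hA : ∀ x, (A x).PosSemidef) (htr : (∑ x, A x).trace = 1) :
    ∑ x, vnEntropy (A x) ≤
      vnEntropy (∑ x, A x) + ∑ x, Real.negMulLog (A x).trace.re / Real.log 2 := by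
  have hcond : ∀ B : Matrix n n ℂ, B.PosSemidef →
      condEnt (B.submatrix (Equiv.prodPUnit n) (Equiv.prodPUnit n)) =
        vnEntropy B - Real.negMulLog B.trace.re / Real.log 2 := by
    intro B hB
    have htrace : (B.submatrix (Equiv.prodPUnit n) (Equiv.prodPUnit n)).trace = B.trace :=
      Equiv.sum_comp (Equiv.prodPUnit n) fun i => B i i
    rw [condEnt, vnEntropy_submatrix hB.isHermitian,
      vnEntropy_of_unique (hB.submatrix _).ptraceL.isHermitian, trace_ptraceL, htrace]
  have h := sum_condEnt_le Finset.univ fun x => (hA x).submatrix (Equiv.prodPUnit.{0, _} n)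
  have hsum : ∑ x, (A x).submatrix (Equiv.prodPUnit.{0, _} n) (Equiv.prodPUnit n) =
      (∑ x, A x).submatrix (Equiv.prodPUnit n) (Equiv.prodPUnit n) := by
    ext i j
    simp [Matrix.sum_apply]
  rw [hsum, hcond _ (posSemidef_sum _ fun x _ => hA x), htr] at h
  simp only [hcond _ (hA _), Finset.sum_sub_distrib, Complex.one_re, Real.negMulLog_one, zero_div,
    sub_zero] at h
  linarith

end

section ccq

variable {X Y E u v : Type*} [Fintype X] [Fintype Y] [Fintype E] [Fintype u] [Fintype v]
  [DecidableEq E] [DecidableEq u] [DecidableEq v]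
  {P : X → Y → ℝ} {σU : X → Matrix u u ℂ} {σV : X → Matrix v v ℂ}

/-- `S(U|VY)` is the sum over `y` of the conditional entropies of the unnormalized states of `UV`
given `Y = y`. -/
lemma vnEntropy_sub_classical [DecidableEq Y] (hP : ∀ x y, 0 ≤ P x y) (hU : ∀ x, IsDensity (σU x))
    (hV : ∀ x, IsDensity (σV x)) :
    vnEntropy (∑ x, ∑ y, P x y • (σU x ⊗ₖ (σV x ⊗ₖ outerPr (stdb y))))
      - vnEntropy (∑ x, ∑ y, P x y • (σV x ⊗ₖ outerPr (stdb y))) =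
    ∑ y, condEnt (∑ x, P x y • (σU x ⊗ₖ σV x)) := by
  have hω : ∀ y, (∑ x, P x y • (σU x ⊗ₖ σV x)).PosSemidef := fun y =>
    posSemidef_sum _ fun x _ => ((hU x).1.kronecker (hV x).1).smul (hP x y)
  have hτ : ∀ y, ptraceL (∑ x, P x y • (σU x ⊗ₖ σV x)) = ∑ x, P x y • σV x := by
    intro y
    simp only [ptraceL_sum, ptraceL_smul, ptraceL_kronecker, (hU _).2, one_smul]
  have hτ' : ∀ y, (∑ x, P x y • σV x).PosSemidef := fun y => hτ y ▸ (hω y).ptraceL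
  have h1 : ∑ x, ∑ y, P x y • (σU x ⊗ₖ (σV x ⊗ₖ outerPr (stdb y))) =
      (blockDiagonal fun y => ∑ x, P x y • (σU x ⊗ₖ σV x)).submatrix
        (Equiv.prodAssoc u v Y).symm (Equiv.prodAssoc u v Y).symm := by
    ext ⟨i, j, y⟩ ⟨i', j', y'⟩
    by_cases hy : y = y' <;>
      simp [Matrix.sum_apply, blockDiagonal_apply, outerPr_stdb, hy,
        Pi.single_apply]
  have h2 : ∑ x, ∑ y, P x y • (σV x ⊗ₖ outerPr (stdb y)) =
      blockDiagonal fun y => ∑ x, P x y • σV x := by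
    ext ⟨j, y⟩ ⟨j', y'⟩
    by_cases hy : y = y' <;>
      simp [Matrix.sum_apply, blockDiagonal_apply, outerPr_stdb, hy,
        Pi.single_apply]
  have hherm : (blockDiagonal fun y => ∑ x, P x y • (σU x ⊗ₖ σV x)).IsHermitian := by
    rw [IsHermitian, blockDiagonal_conjTranspose]
    exact congrArg _ (funext fun y => (hω y).isHermitian)
  rw [h1, h2, vnEntropy_submatrix hherm, vnEntropy_blockDiagonal fun y => (hω y).isHermitian,
    vnEntropy_blockDiagonal fun y => (hτ' y).isHermitian, ← Finset.sum_sub_distrib]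
  exact Finset.sum_congr rfl fun y _ => by rw [condEnt, hτ]

lemma sum_condEnt_le_channel [Nonempty u] {Y' : Type*} [Fintype Y'] (hP : ∀ x y, 0 ≤ P x y)
    (hU : ∀ x, IsDensity (σU x)) (hV : ∀ x, IsDensity (σV x)) {Q : Y → Y' → ℝ}
    (hQ0 : ∀ y y', 0 ≤ Q y y') (hQ1 : ∀ y, ∑ y', Q y y' = 1) :
    ∑ y, condEnt (∑ x, P x y • (σU x ⊗ₖ σV x)) ≤
      ∑ y', condEnt (∑ x, (∑ y, P x y * Q y y') • (σU x ⊗ₖ σV x)) := by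
  have hω : ∀ y, (∑ x, P x y • (σU x ⊗ₖ σV x)).PosSemidef := fun y =>
    posSemidef_sum _ fun x _ => ((hU x).1.kronecker (hV x).1).smul (hP x y)
  calc ∑ y, condEnt (∑ x, P x y • (σU x ⊗ₖ σV x))
      = ∑ y', ∑ y, condEnt (Q y y' • ∑ x, P x y • (σU x ⊗ₖ σV x)) := by
        rw [Finset.sum_comm]
        refine Finset.sum_congr rfl fun y _ => ?_
        simp only [condEnt_smul (hω y), ← Finset.sum_mul, hQ1, one_mul]
    _ ≤ ∑ y', condEnt (∑ y, Q y y' • ∑ x, P x y • (σU x ⊗ₖ σV x)) :=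
        Finset.sum_le_sum fun y' _ =>
          sum_condEnt_le Finset.univ fun y => (hω y).smul (hQ0 y y')
    _ = _ := by
        refine Finset.sum_congr rfl fun y' _ => congrArg condEnt ?_
        simp only [Finset.smul_sum, Finset.sum_smul, smul_smul]
        rw [Finset.sum_comm]
        simp only [mul_comm]

lemma le_sum_condEnt [Nonempty u] (hP : ∀ x y, 0 ≤ P x y) (hU : ∀ x, IsDensity (σU x))
    (hV : ∀ x, IsDensity (σV x)) :
    ∑ x, (∑ y, P x y) * vnEntropy (σU x) ≤ ∑ y, condEnt (∑ x, P x y • (σU x ⊗ₖ σV x)) := by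
  simp only [Finset.sum_mul]
  rw [Finset.sum_comm]
  refine Finset.sum_le_sum fun y _ => ?_
  refine le_trans (le_of_eq ?_) (sum_condEnt_le Finset.univ fun x =>
    ((hU x).1.kronecker (hV x).1).smul (hP x y))
  refine Finset.sum_congr rfl fun x _ => ?_
  rw [condEnt_smul ((hU x).1.kronecker (hV x).1), condEnt_kronecker (hU x) (hV x).1.isHermitian,
    (hV x).2, Complex.one_re, one_mul]

lemma vnEntropy_sub_le {τ : X → Matrix E E ℂ} [Nonempty X] [Nonempty E] [Nonempty v]
    (hU : ∀ x, IsDensity (σU x)) (hV : ∀ x, IsDensity (σV x)) (hτ : ∀ x, (τ x).PosSemidef)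
    (htr : ∑ x, (τ x).trace = 1) :
    vnEntropy (∑ x, σU x ⊗ₖ (σV x ⊗ₖ τ x)) - vnEntropy (∑ x, σV x ⊗ₖ τ x) ≤
      ∑ x, (τ x).trace.re * vnEntropy (σU x) +
        ∑ x, Real.negMulLog (τ x).trace.re / Real.log 2 := by
  have htrace : ∀ x, (σV x ⊗ₖ τ x).trace = (τ x).trace := fun x => by
    rw [trace_kronecker, (hV x).2, one_mul]
  have hB : ∀ x, (σV x ⊗ₖ τ x).PosSemidef := fun x => (hV x).1.kronecker (hτ x)
  have h1 := vnEntropy_sum_le fun x => (hU x).1.kronecker (hB x)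
  have h2 := sum_vnEntropy_le hB (by simp only [trace_sum, htrace, htr])
  simp only [vnEntropy_kronecker (hU _).1.isHermitian (hB _).isHermitian, htrace, (hU _).2,
    Complex.one_re, one_mul, Finset.sum_add_distrib] at h1 h2
  linarith

end ccq

lemma sum_smul_kronecker {X Y l m : Type*} [Fintype X] [Fintype Y] (P : X → Y → ℝ)
    (A : X → Matrix l l ℂ) (B : X → Y → Matrix m m ℂ) :
    ∑ x, ∑ y, P x y • (A x ⊗ₖ B x y) = ∑ x, A x ⊗ₖ ∑ y, P x y • B x y := by
  ext ⟨i, j⟩ ⟨i', j'⟩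
  simp only [Matrix.sum_apply, Matrix.smul_apply, kronecker_apply, Finset.mul_sum,
    mul_smul_comm]

lemma sum_smul_kronecker_kronecker {X Y k l m : Type*} [Fintype X] [Fintype Y] (P : X → Y → ℝ)
    (A : X → Matrix k k ℂ) (B : X → Matrix l l ℂ) (C : X → Y → Matrix m m ℂ) :
    ∑ x, ∑ y, P x y • (A x ⊗ₖ (B x ⊗ₖ C x y)) = ∑ x, A x ⊗ₖ (B x ⊗ₖ ∑ y, P x y • C x y) := by
  rw [sum_smul_kronecker]
  refine Finset.sum_congr rfl fun x _ => congrArg _ ?_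
  ext ⟨i, j⟩ ⟨i', j'⟩
  simp only [Matrix.sum_apply, Matrix.smul_apply, kronecker_apply, Finset.mul_sum,
    mul_smul_comm]

/-- applying a classical channel `P_{Y'|Y}` to the second classical part of a
ccq-state can only decrease `M`: `M(X;Y';E) ≤ M(X;Y;E)`. Here the ccq-state `σ_{XY'E}` has
distribution `P''(x,y') = Σ_y P(x,y) Q(y'|y)` and conditional states `σE''` characterized by
`P''(x,y')·σE''(x,y') = Σ_y P(x,y) Q(y'|y) σE(x,y)`. -/
theorem M_mono_channel_on_Y
    {X Y Y' E : Type*} [Fintype X] [Fintype Y] [Fintype Y'] [Fintype E]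
    [DecidableEq Y] [DecidableEq Y'] [DecidableEq E]
    (P : X → Y → ℝ) (hP0 : ∀ x y, 0 ≤ P x y) (hP1 : ∑ x, ∑ y, P x y = 1)
    (σE : X → Y → Matrix E E ℂ) (hσE : ∀ x y, IsDensity (σE x y))
    (Q : Y → Y' → ℝ) (hQ0 : ∀ y y', 0 ≤ Q y y') (hQ1 : ∀ y, ∑ y', Q y y' = 1)
    (σE'' : X → Y' → Matrix E E ℂ)
    (hσE'' : ∀ x y', ((∑ y, P x y * Q y y' : ℝ)) • σE'' x y'
      = ∑ y, (P x y * Q y y') • σE x y) :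
    Mmeas (fun x y' => ∑ y, P x y * Q y y') σE'' ≤ Mmeas P σE := by
  have hXY : Nonempty (X × Y) := by
    by_contra h
    rw [not_nonempty_iff] at h
    rw [← Fintype.sum_prod_type' (f := P)] at hP1
    simp at hP1
  obtain ⟨x₀, y₀⟩ := hXY.some
  have hX : Nonempty X := ⟨x₀⟩
  have hE : Nonempty E := (hσE x₀ y₀).nonempty
  have hτ : ∀ x, (∑ y, P x y • σE x y).PosSemidef := fun x =>
    posSemidef_sum _ fun y _ => (hσE x y).1.smul (hP0 x y)
  have htr : ∀ x, (∑ y, P x y • σE x y).trace = ((∑ y, P x y : ℝ) : ℂ) := fun x => by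
    simp [trace_sum, trace_smul, (hσE x _).2]
  have hEE : ∀ x, ∑ y', (∑ y, P x y * Q y y') • σE'' x y' = ∑ y, P x y • σE x y := by
    intro x
    simp only [hσE'']
    rw [Finset.sum_comm]
    simp only [← Finset.sum_smul, ← Finset.mul_sum, hQ1, mul_one]
  unfold Mmeas
  refine csSup_le ?_ ?_
  · exact ⟨_, 1, 1, fun _ => 1, fun _ => 1, fun _ => ⟨PosSemidef.one, by simp⟩,
      fun _ => ⟨PosSemidef.one, by simp⟩, rfl⟩
  · rintro r ⟨dU, dV, σU, σV, hU, hV, rfl⟩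
    have hdU : Nonempty (Fin dU) := (hU x₀).nonempty
    refine le_csSup_of_le ?_ ⟨dU, dV, σU, σV, hU, hV, rfl⟩ ?_
    · refine ⟨∑ x, Real.negMulLog (∑ y, P x y) / Real.log 2, ?_⟩
      rintro r ⟨dU, dV, σU, σV, hU, hV, rfl⟩
      have hdU : Nonempty (Fin dU) := (hU x₀).nonempty
      have hdV : Nonempty (Fin dV) := (hV x₀).nonempty
      rw [vnEntropy_sub_classical hP0 hU hV, sum_smul_kronecker_kronecker, sum_smul_kronecker]
      have h1 := vnEntropy_sub_le hU hV hτ (by simp only [htr]; exact_mod_cast hP1)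
      have h2 := le_sum_condEnt hP0 hU hV
      simp only [htr, Complex.ofReal_re] at h1
      linarith
    · rw [vnEntropy_sub_classical hP0 hU hV, vnEntropy_sub_classical
        (fun x y' => Finset.sum_nonneg fun y _ => mul_nonneg (hP0 x y) (hQ0 y y')) hU hV]
      simp only [sum_smul_kronecker_kronecker]
      simp only [sum_smul_kronecker, hEE]
      exact sub_le_sub_left (sum_condEnt_le_channel hP0 hU hV hQ0 hQ1) _
end
end

section
/- Let ℓ ≥ 1 and let 0 ≤ ε ≤ 1/2. Let P be a joint probability distribution of two random variables S_A, S_B taking values in {0,1}^ℓ, and suppose that (1/2)·Σ_{s_A, s_B} |P(s_A, s_B) − 2^{−ℓ}·[s_A = s_B]| ≤ ε, i.e., P is within statistical distance ε of the distribution of a perfect key pair (uniform on {0,1}^ℓ and identical on both sides). Then the mutual information satisfies I(S_A; S_B) ≥ (1 − ε − 2h(ε))·ℓ, where h is the binary entropy function. -/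
open scoped Matrix Kronecker BigOperators ComplexOrder
open Matrix

noncomputable section

theorem shEnt_mul_log_two {X : Type*} [Fintype X] (p : X → ℝ) :
    shEnt p * Real.log 2 = -∑ x, p x * Real.log (p x) := by
  have h2 : Real.log 2 ≠ 0 := (Real.log_pos one_lt_two).ne'
  simp only [shEnt, Real.logb, Finset.sum_mul, ← Finset.sum_neg_distrib]
  refine Finset.sum_congr rfl fun x _ => ?_
  field_simp

theorem binEnt_mul_log_two (ε : ℝ) :
    binEnt ε * Real.log 2 = -(ε * Real.log ε) - (1 - ε) * Real.log (1 - ε) := by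
  have h2 : Real.log 2 ≠ 0 := (Real.log_pos one_lt_two).ne'
  simp only [binEnt, Real.logb]
  field_simp

/-- On `[0, 1/2]` the binary entropy lies above its chord. -/
theorem two_mul_le_binEnt {ε : ℝ} (h0 : 0 ≤ ε) (h1 : ε ≤ 1 / 2) : 2 * ε ≤ binEnt ε := by
  have h2 : 0 < Real.log 2 := Real.log_pos one_lt_two
  have hc := Real.strictConcave_binEntropy.concaveOn.2
    (show (0 : ℝ) ∈ Set.Icc 0 1 by simp)
    (show (2⁻¹ : ℝ) ∈ Set.Icc 0 1 by constructor <;> norm_num)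
    (show 0 ≤ 1 - 2 * ε by linarith) (show 0 ≤ 2 * ε by linarith) (by ring)
  have he : (1 - 2 * ε) • (0 : ℝ) + (2 * ε) • (2⁻¹ : ℝ) = ε := by
    simp only [smul_eq_mul]; ring
  rw [he, Real.binEntropy_zero, Real.binEntropy_two_inv, smul_zero, zero_add, smul_eq_mul] at hc
  refine le_of_mul_le_mul_right (hc.trans_eq ?_) h2
  rw [binEnt_mul_log_two, Real.binEntropy_eq_negMulLog_add_negMulLog_one_sub]
  simp only [Real.negMulLog]
  ring

theorem mul_log_le_chord {d t : ℝ} (hd : 2 ≤ d) (h1 : 1 ≤ t) (ht : t ≤ d) :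
    t * Real.log t ≤ 2 * (t - 1) * Real.log d := by
  have hd1 : 0 < d - 1 := by linarith
  have hc := Real.convexOn_mul_log.2 (show (1 : ℝ) ∈ Set.Ici 0 by simp)
    (show d ∈ Set.Ici 0 by simp only [Set.mem_Ici]; linarith)
    (show 0 ≤ (d - t) / (d - 1) from div_nonneg (by linarith) hd1.le)
    (show 0 ≤ (t - 1) / (d - 1) from div_nonneg (by linarith) hd1.le)
    (by field_simp; ring)
  have he : ((d - t) / (d - 1)) • (1 : ℝ) + ((t - 1) / (d - 1)) • d = t := by
    simp only [smul_eq_mul]; field_simp; ring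
  rw [he] at hc
  simp only [Real.log_one, mul_zero, zero_add, smul_eq_mul] at hc
  have hlog : 0 ≤ Real.log d := Real.log_nonneg (by linarith)
  have hfac : (t - 1) / (d - 1) * d ≤ 2 * (t - 1) := by
    rw [div_mul_eq_mul_div, div_le_iff₀ hd1]
    nlinarith
  calc t * Real.log t ≤ (t - 1) / (d - 1) * d * Real.log d := by linarith
    _ ≤ 2 * (t - 1) * Real.log d := mul_le_mul_of_nonneg_right hfac hlog

theorem mul_log_le_of_le_one {d p : ℝ} (hd : 2 ≤ d) (h0 : 0 ≤ p) (h1 : p ≤ 1) :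
    p * Real.log p ≤ -(p * Real.log d) + (|p - d⁻¹| + (p - d⁻¹)) * Real.log d := by
  have hd0 : 0 < d := by linarith
  have hlog : 0 ≤ Real.log d := Real.log_nonneg (by linarith)
  rcases h0.eq_or_lt with rfl | hp
  · have := abs_nonneg (0 - d⁻¹)
    have := neg_abs_le (0 - d⁻¹)
    simp only [zero_mul, neg_zero, zero_add]
    exact mul_nonneg (by linarith) hlog
  have hmul : Real.log (d * p) = Real.log d + Real.log p := Real.log_mul hd0.ne' hp.ne'
  rcases le_total (d * p) 1 with h | h
  · have hneg : Real.log (d * p) ≤ 0 := Real.log_nonpos (by positivity) h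
    have := neg_abs_le (p - d⁻¹)
    have hR : 0 ≤ (|p - d⁻¹| + (p - d⁻¹)) * Real.log d := mul_nonneg (by linarith) hlog
    nlinarith
  · have hc := mul_log_le_chord hd h (by nlinarith)
    have hge : 0 ≤ p - d⁻¹ := by
      rw [sub_nonneg, inv_le_iff_one_le_mul₀ hd0]
      linarith
    rw [abs_of_nonneg hge]
    rw [hmul] at hc
    refine le_of_mul_le_mul_left ?_ hd0
    have : d * (-(p * Real.log d) + (p - d⁻¹ + (p - d⁻¹)) * Real.log d)
        = -(d * p * Real.log d) + 2 * (d * p - 1) * Real.log d := by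
      field_simp; ring
    rw [this]
    linarith

/-- A distribution within statistical distance `ε` of uniform has entropy at least
`(1 - 2ε) log d`. -/
theorem sum_mul_log_le_of_close_uniform {X : Type*} [Fintype X] {p : X → ℝ} {ε : ℝ}
    (hd : 2 ≤ (Fintype.card X : ℝ)) (h0 : ∀ x, 0 ≤ p x) (hsum : ∑ x, p x = 1)
    (hclose : (1 / 2) * ∑ x, |p x - (Fintype.card X : ℝ)⁻¹| ≤ ε) :
    ∑ x, p x * Real.log (p x) ≤ -((1 - 2 * ε) * Real.log (Fintype.card X)) := by
  have hlog : 0 ≤ Real.log (Fintype.card X) := Real.log_nonneg (by linarith)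
  have hle (x : X) : p x ≤ 1 := hsum ▸ Finset.single_le_sum (fun y _ => h0 y) (Finset.mem_univ x)
  have hz : ∑ x, (p x - (Fintype.card X : ℝ)⁻¹) = 0 := by
    rw [Finset.sum_sub_distrib, hsum, Finset.sum_const, Finset.card_univ, nsmul_eq_mul,
      mul_inv_cancel₀ (by linarith), sub_self]
  calc ∑ x, p x * Real.log (p x)
      ≤ ∑ x, (-(p x * Real.log (Fintype.card X))
          + (|p x - (Fintype.card X : ℝ)⁻¹| + (p x - (Fintype.card X : ℝ)⁻¹))
            * Real.log (Fintype.card X)) :=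
        Finset.sum_le_sum fun x _ => mul_log_le_of_le_one hd (h0 x) (hle x)
    _ = -Real.log (Fintype.card X)
          + (∑ x, |p x - (Fintype.card X : ℝ)⁻¹|) * Real.log (Fintype.card X) := by
        rw [Finset.sum_add_distrib, Finset.sum_neg_distrib, ← Finset.sum_mul, hsum,
          ← Finset.sum_mul, Finset.sum_add_distrib, hz, add_zero, one_mul]
    _ ≤ _ := by nlinarith

theorem mul_log_add_sub_le {x w : ℝ} (hx : 0 ≤ x) (hw : 0 ≤ w) (h : 0 < x → 0 < w) :
    x * Real.log w + x - w ≤ x * Real.log x := by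
  rcases hx.eq_or_lt with rfl | hx
  · simpa using hw
  have hw := h hx
  have hl := Real.log_le_sub_one_of_pos (div_pos hw hx)
  rw [Real.log_div hw.ne' hx.ne'] at hl
  have := mul_le_mul_of_nonneg_left hl hx.le
  have he : x * (w / x - 1) = w - x := by field_simp
  linarith

/-- The conditional entropy is at most the cross entropy with respect to any
sub-stochastic kernel `W`. -/
theorem sum_mul_log_kernel_le {X Y : Type*} [Fintype X] [Fintype Y] {P W : X → Y → ℝ}
    (hP : ∀ a b, 0 ≤ P a b) (hW : ∀ a b, 0 ≤ W a b) (hW1 : ∀ b, ∑ a, W a b ≤ 1)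
    (hPW : ∀ a b, 0 < P a b → 0 < W a b) :
    ∑ a, ∑ b, P a b * Real.log (W a b) ≤
      ∑ a, ∑ b, P a b * Real.log (P a b)
        - ∑ b, (∑ a, P a b) * Real.log (∑ a, P a b) := by
  have hm (b : Y) : 0 ≤ ∑ a, P a b := Finset.sum_nonneg fun a _ => hP a b
  have hpos (a : X) (b : Y) (h : 0 < P a b) : 0 < ∑ a, P a b :=
    h.trans_le (Finset.single_le_sum (f := fun a => P a b) (fun a _ => hP a b)
      (Finset.mem_univ a))
  have hterm (a : X) (b : Y) :
      P a b * Real.log (W a b) + P a b * Real.log (∑ a, P a b) + P a b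
        - W a b * ∑ a, P a b ≤ P a b * Real.log (P a b) := by
    have h := mul_log_add_sub_le (hP a b) (mul_nonneg (hW a b) (hm b))
      fun h => mul_pos (hPW a b h) (hpos a b h)
    rcases (hP a b).eq_or_lt with h0 | h0
    · simpa [← h0] using h
    · rwa [Real.log_mul (hPW a b h0).ne' (hpos a b h0).ne', mul_add] at h
  rw [Finset.sum_comm, Finset.sum_comm (f := fun a b => P a b * Real.log (P a b)),
    ← Finset.sum_sub_distrib]
  refine Finset.sum_le_sum fun b _ => ?_
  have h := Finset.sum_le_sum fun a (_ : a ∈ Finset.univ) => hterm a b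
  rw [Finset.sum_sub_distrib, Finset.sum_add_distrib, Finset.sum_add_distrib,
    ← Finset.sum_mul, ← Finset.sum_mul] at h
  nlinarith [mul_le_mul_of_nonneg_right (hW1 b) (hm b)]

/-- A statistical-distance bound to a perfect key pair bounds the error probability. -/
theorem sum_off_diag_le {X : Type*} [Fintype X] [DecidableEq X] [Nonempty X] {P : X → X → ℝ}
    {ε : ℝ} (hP1 : ∑ a, ∑ b, P a b = 1)
    (hclose : (1 / 2) * ∑ a, ∑ b, |P a b - (if a = b then (Fintype.card X : ℝ)⁻¹ else 0)| ≤ ε) :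
    ∑ a, ∑ b, (if a = b then 0 else P a b) ≤ ε := by
  have hd : (Fintype.card X : ℝ) ≠ 0 := by exact_mod_cast Fintype.card_ne_zero
  have hterm (a b : X) : (if a = b then (Fintype.card X : ℝ)⁻¹ else 0) - P a b
      + 2 * (if a = b then 0 else P a b)
        ≤ |P a b - (if a = b then (Fintype.card X : ℝ)⁻¹ else 0)| := by
    split_ifs
    · linarith [neg_abs_le (P a b - (Fintype.card X : ℝ)⁻¹)]
    · linarith [le_abs_self (P a b - 0)]
  have h := Finset.sum_le_sum fun a (_ : a ∈ Finset.univ) =>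
    Finset.sum_le_sum fun b (_ : b ∈ Finset.univ) => hterm a b
  simp only [Finset.sum_add_distrib, Finset.sum_sub_distrib, ← Finset.mul_sum, hP1,
    Finset.sum_ite_eq, Finset.mem_univ, if_true, Finset.sum_const, Finset.card_univ,
    nsmul_eq_mul, mul_inv_cancel₀ hd] at h
  linarith

/-- **Fano's inequality**, in nats, for an error probability at most `ε`. -/
theorem fano_inequality {X : Type*} [Fintype X] [DecidableEq X] [Nonempty X] {P : X → X → ℝ}
    {ε : ℝ} (hε0 : 0 ≤ ε) (hε : ε ≤ 1 / 2) (hP0 : ∀ a b, 0 ≤ P a b)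
    (hP1 : ∑ a, ∑ b, P a b = 1) (herr : ∑ a, ∑ b, (if a = b then 0 else P a b) ≤ ε) :
    ε * Real.log ε + (1 - ε) * Real.log (1 - ε) - ε * Real.log (Fintype.card X) ≤
      ∑ a, ∑ b, P a b * Real.log (P a b)
        - ∑ b, (∑ a, P a b) * Real.log (∑ a, P a b) := by
  have hd : (1 : ℝ) ≤ Fintype.card X := by exact_mod_cast Fintype.card_pos (α := X)
  have hd0 : (0 : ℝ) < Fintype.card X := by linarith
  have hq : 0 ≤ ε / Fintype.card X := by positivity
  have hoff (a b : X) : 0 ≤ if a = b then 0 else P a b := by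
    split_ifs
    exacts [le_rfl, hP0 a b]
  refine le_trans ?_ (sum_mul_log_kernel_le
    (W := fun a b => if a = b then 1 - ε else ε / Fintype.card X) hP0 ?_ ?_ ?_)
  · have hsplit (a b : X) :
        P a b * Real.log (if a = b then 1 - ε else ε / Fintype.card X)
          = P a b * Real.log (1 - ε) + (if a = b then 0 else P a b)
            * (Real.log (ε / Fintype.card X) - Real.log (1 - ε)) := by
      split_ifs <;> ring
    simp only [hsplit, Finset.sum_add_distrib, ← Finset.sum_mul, hP1]
    have hδ0 : 0 ≤ ∑ a, ∑ b, (if a = b then 0 else P a b) :=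
      Finset.sum_nonneg fun a _ => Finset.sum_nonneg fun b _ => hoff a b
    rcases hε0.eq_or_lt with rfl | hpos
    · rw [le_antisymm herr hδ0]
      simp
    · have hlog : Real.log (ε / Fintype.card X) ≤ Real.log (1 - ε) :=
        Real.log_le_log (by positivity) ((div_le_self hε0 hd).trans (by linarith))
      have := mul_le_mul_of_nonneg_right herr (sub_nonneg.2 hlog)
      have he : Real.log (ε / Fintype.card X) = Real.log ε - Real.log (Fintype.card X) :=
        Real.log_div hpos.ne' hd0.ne'
      rw [he] at this ⊢
      linarith
  · intro a b
    split_ifs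
    exacts [by linarith, hq]
  · intro b
    calc ∑ a, (if a = b then 1 - ε else ε / Fintype.card X)
        ≤ ∑ a, ((if a = b then 1 - ε else 0) + ε / Fintype.card X) :=
          Finset.sum_le_sum fun a _ => by split_ifs <;> linarith
      _ = 1 := by
          simp only [Finset.sum_add_distrib, Finset.sum_ite_eq', Finset.mem_univ, if_true,
            Finset.sum_const, Finset.card_univ, nsmul_eq_mul, mul_div_cancel₀ ε hd0.ne']
          ring
  · intro a b hab
    split_ifs with h
    · linarith
    · have : (if a = b then 0 else P a b) ≤ ∑ a, ∑ b, (if a = b then 0 else P a b) :=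
        (Finset.single_le_sum (f := fun b => if a = b then 0 else P a b)
          (fun b _ => hoff a b) (Finset.mem_univ b)).trans
        (Finset.single_le_sum (f := fun a => ∑ b, if a = b then 0 else P a b)
          (fun a _ => Finset.sum_nonneg fun b _ => hoff a b) (Finset.mem_univ a))
      rw [if_neg h] at this
      exact div_pos (by linarith) hd0

/-- if the joint distribution of a key pair `(S_A, S_B)` on `{0,1}^ℓ` is
within statistical distance `ε ≤ 1/2` of a perfect key pair, then
`I(S_A;S_B) ≥ (1 - ε - 2h(ε))·ℓ`. -/
theorem mutual_information_of_almost_perfect_key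
    {l : ℕ} (hl : 1 ≤ l) (ε : ℝ) (hε0 : 0 ≤ ε) (hε : ε ≤ 1 / 2)
    (P : (Fin l → Bool) → (Fin l → Bool) → ℝ)
    (hP0 : ∀ a b, 0 ≤ P a b) (hP1 : ∑ a, ∑ b, P a b = 1)
    (hclose : (1 / 2) * ∑ a, ∑ b, |P a b - (if a = b then ((2 : ℝ) ^ l)⁻¹ else 0)| ≤ ε) :
    shEnt (fun a => ∑ b, P a b) + shEnt (fun b => ∑ a, P a b)
        - shEnt (fun p : (Fin l → Bool) × (Fin l → Bool) => P p.1 p.2)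
      ≥ (1 - ε - 2 * binEnt ε) * l := by
  have hcard : (Fintype.card (Fin l → Bool) : ℝ) = 2 ^ l := by simp
  have hd : (2 : ℝ) ≤ Fintype.card (Fin l → Bool) := by
    rw [hcard]
    exact le_self_pow₀ one_le_two (by omega)
  rw [← hcard] at hclose
  have hA : (1 / 2) * ∑ a, |(∑ b, P a b) - (Fintype.card (Fin l → Bool) : ℝ)⁻¹| ≤ ε := by
    refine le_trans ?_ hclose
    gcongr with a
    refine le_trans (le_of_eq ?_) (Finset.abs_sum_le_sum_abs _ _)
    simp [Finset.sum_sub_distrib]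
  have hHA := sum_mul_log_le_of_close_uniform hd
    (fun a => Finset.sum_nonneg fun b _ => hP0 a b) hP1 hA
  have hF := fano_inequality hε0 hε hP0 hP1 (sum_off_diag_le hP1 hclose)
  have hh := two_mul_le_binEnt hε0 hε
  have h2 : 0 < Real.log 2 := Real.log_pos one_lt_two
  have hl' : (1 : ℝ) ≤ l := by exact_mod_cast hl
  rw [hcard, Real.log_pow] at hHA hF
  refine le_of_mul_le_mul_right ?_ h2
  rw [sub_mul (_ + _), add_mul, shEnt_mul_log_two, shEnt_mul_log_two, shEnt_mul_log_two,
    Fintype.sum_prod_type]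
  have hb := binEnt_mul_log_two ε
  have key : (1 - ε - 2 * binEnt ε) * l ≤ (1 - 2 * ε) * l - binEnt ε - ε * l := by
    nlinarith
  have := mul_le_mul_of_nonneg_right key h2.le
  dsimp only
  linarith
end
end
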